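/- arXiv:0906.0887 — 2 statements merged into one kernel-verified Lean document; each statement's English description precedes it below -/
import Mathlib

section
/- Let ∑_{i=1}^k αᵢ sᵢ ≥ 1 with α ∈ ℝ^k, α ≥ 0, be a valid inequality for conv(P(R,f)) whose induced lattice-free set L_α is a quadrilateral of type Q¹ with f in the interior of L_α. Then the split rank of ∑_{i=1}^k αᵢ sᵢ ≥ 1 with respect to P(R,f)⁰ is finite (in particular, this holds even when L_α is a proper subset of a triangle of type T¹). -/
open Set Pointwise

abbrev Pt : Type := Fin 2 → ℝ

def IsIntPt (x : Pt) : Prop := ∀ j, ∃ z : ℤ, x j = (z : ℝ)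

def IsRatPt (x : Pt) : Prop := ∀ j, ∃ q : ℚ, x j = (q : ℝ)

/-- The mixed-integer set `P(R,f)`. -/
def mixedP (k : ℕ) (r : Fin k → Pt) (f : Pt) : Set (Pt × (Fin k → ℝ)) :=
  {p | IsIntPt p.1 ∧ (∀ i, 0 ≤ p.2 i) ∧ p.1 = f + ∑ i, p.2 i • r i}

/-- The linear relaxation `P(R,f)⁰`. -/
def relaxP (k : ℕ) (r : Fin k → Pt) (f : Pt) : Set (Pt × (Fin k → ℝ)) :=
  {p | (∀ i, 0 ≤ p.2 i) ∧ p.1 = f + ∑ i, p.2 i • r i}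

/-- The convex cone generated by a set (all nonnegative combinations). -/
def coneGen (S : Set Pt) : Set Pt :=
  {x | ∃ (n : ℕ) (c : Fin n → ℝ) (v : Fin n → Pt),
    (∀ j, 0 ≤ c j) ∧ (∀ j, v j ∈ S) ∧ x = ∑ j, c j • v j}

/-- The induced lattice-free set `L_α`. -/
def inducedSet (k : ℕ) (r : Fin k → Pt) (f : Pt) (α : Fin k → ℝ) : Set Pt :=
  convexHull ℝ ({f} ∪ {x | ∃ i, 0 < α i ∧ x = f + (α i)⁻¹ • r i}) +
    coneGen {x | ∃ i, α i = 0 ∧ x = r i}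

def LatticeFree (S : Set Pt) : Prop := ∀ x ∈ interior S, ¬ IsIntPt x

/-- Validity of `∑ αᵢ sᵢ ≥ γ` for `conv(P(R,f))`. -/
def ValidIneq (k : ℕ) (r : Fin k → Pt) (f : Pt) (α : Fin k → ℝ) (γ : ℝ) : Prop :=
  ∀ p ∈ mixedP k r f, γ ≤ ∑ i, α i * p.2 i

noncomputable def affDim {V : Type*} [AddCommGroup V] [Module ℝ V] (S : Set V) : ℕ :=
  Module.finrank ℝ (affineSpan ℝ S).direction

/-- Facet-defining inequality: valid and its face of the closed convex hull has
affine dimension exactly one less. -/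
def IsFacet (k : ℕ) (r : Fin k → Pt) (f : Pt) (α : Fin k → ℝ) (γ : ℝ) : Prop :=
  ValidIneq k r f α γ ∧
  affDim {p ∈ closure (convexHull ℝ (mixedP k r f)) | ∑ i, α i * p.2 i = γ} + 1 =
    affDim (convexHull ℝ (mixedP k r f))

def splitClosure (k : ℕ) (C : Set (Pt × (Fin k → ℝ))) : Set (Pt × (Fin k → ℝ)) :=
  ⋂ (π : Fin 2 → ℤ) (π₀ : ℤ),
    convexHull ℝ ((C ∩ {p | ∑ j, (π j : ℝ) * p.1 j ≤ (π₀ : ℝ)}) ∪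
      (C ∩ {p | (π₀ : ℝ) + 1 ≤ ∑ j, (π j : ℝ) * p.1 j}))

def closures (k : ℕ) (r : Fin k → Pt) (f : Pt) : ℕ → Set (Pt × (Fin k → ℝ))
  | 0 => relaxP k r f
  | n + 1 => splitClosure k (closures k r f n)

/-- The split rank of `∑ αᵢ sᵢ ≥ γ` w.r.t. `P(R,f)⁰`: least `j` such that the
inequality is valid on the `j`-th split closure, `⊤` if none exists. -/
noncomputable def splitRank (k : ℕ) (r : Fin k → Pt) (f : Pt) (α : Fin k → ℝ) (γ : ℝ) : ℕ∞ :=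
  sInf {j : ℕ∞ | ∃ n : ℕ, j = (n : ℕ∞) ∧ ∀ p ∈ closures k r f n, γ ≤ ∑ i, α i * p.2 i}

def IsSplitSet (S : Set Pt) : Prop :=
  ∃ (π : Fin 2 → ℤ) (π₀ : ℤ), π ≠ 0 ∧
    S = {x : Pt | (π₀ : ℝ) ≤ ∑ j, (π j : ℝ) * x j ∧ ∑ j, (π j : ℝ) * x j ≤ (π₀ : ℝ) + 1}

/-- Triangle of type `T¹`. -/
def IsT1 (S : Set Pt) : Prop :=
  ∃ v : Fin 3 → Pt, AffineIndependent ℝ v ∧ (∀ i, IsIntPt (v i)) ∧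
    S = convexHull ℝ (Set.range v) ∧
    ∀ i j, i ≠ j → ∃! z, z ∈ openSegment ℝ (v i) (v j) ∧ IsIntPt z

/-- Triangle of type `T^{2A}`. -/
def IsT2A (S : Set Pt) : Prop :=
  ∃ v0 v1 v2 : Pt, AffineIndependent ℝ ![v0, v1, v2] ∧ ¬ IsIntPt v0 ∧
    S = convexHull ℝ {v0, v1, v2} ∧
    (∃ z1 z2 : Pt, z1 ≠ z2 ∧ IsIntPt z1 ∧ IsIntPt z2 ∧
      z1 ∈ segment ℝ v1 v2 ∧ z2 ∈ segment ℝ v1 v2) ∧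
    (∃! z, z ∈ openSegment ℝ v0 v1 ∧ IsIntPt z) ∧
    (∃! z, z ∈ openSegment ℝ v0 v2 ∧ IsIntPt z)

/-- Triangle of type `T^{2B}`. -/
def IsT2B (S : Set Pt) : Prop :=
  ∃ v0 v1 v2 : Pt, AffineIndependent ℝ ![v0, v1, v2] ∧ ¬ IsIntPt v0 ∧
    S = convexHull ℝ {v0, v1, v2} ∧
    (∃ z1 z2 : Pt, z1 ≠ z2 ∧ IsIntPt z1 ∧ IsIntPt z2 ∧
      z1 ∈ segment ℝ v1 v2 ∧ z2 ∈ segment ℝ v1 v2) ∧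
    (∃! z, z ∈ openSegment ℝ v0 v1 ∧ IsIntPt z) ∧
    (∀ z ∈ openSegment ℝ v0 v2, ¬ IsIntPt z)

/-- Triangle of type `T³`. -/
def IsT3 (S : Set Pt) : Prop :=
  ∃ v0 v1 v2 : Pt, AffineIndependent ℝ ![v0, v1, v2] ∧
    ¬ IsIntPt v0 ∧ ¬ IsIntPt v1 ∧ ¬ IsIntPt v2 ∧
    S = convexHull ℝ {v0, v1, v2} ∧
    (∃! z, z ∈ openSegment ℝ v0 v1 ∧ IsIntPt z) ∧
    (∃! z, z ∈ openSegment ℝ v1 v2 ∧ IsIntPt z) ∧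
    (∃! z, z ∈ openSegment ℝ v0 v2 ∧ IsIntPt z) ∧
    (∀ z, IsIntPt z → z ∈ frontier S →
      z ∈ openSegment ℝ v0 v1 ∨ z ∈ openSegment ℝ v1 v2 ∨ z ∈ openSegment ℝ v0 v2)

/-- A quadrilateral with vertices `v 0, v 1, v 2, v 3` in cyclic order; each `vᵢ`
is an extreme point of the hull and each side lies on the boundary. -/
def IsQuadWith (S : Set Pt) (v : Fin 4 → Pt) : Prop :=
  S = convexHull ℝ (Set.range v) ∧
  (∀ i, v i ∈ Set.extremePoints ℝ S) ∧
  (∀ i : Fin 4, segment ℝ (v i) (v (i + 1)) ⊆ frontier S)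

/-- Quadrilateral of type `Q¹`. -/
def IsQ1 (S : Set Pt) : Prop :=
  ∃ v : Fin 4 → Pt, IsQuadWith S v ∧
    (∃ z1 z2 : Pt, z1 ≠ z2 ∧ IsIntPt z1 ∧ IsIntPt z2 ∧
      z1 ∈ segment ℝ (v 0) (v 1) ∧ z2 ∈ segment ℝ (v 0) (v 1)) ∧
    (∃ j : Fin 4, j ≠ 0 ∧
      (∀ i : Fin 4, i ≠ 0 → i ≠ j → ∃ z, IsIntPt z ∧ z ∈ segment ℝ (v i) (v (i + 1))) ∧
      (∀ z ∈ openSegment ℝ (v j) (v (j + 1)), ¬ IsIntPt z)) ∧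
    (∃ T : Set Pt, (IsT1 T ∨ IsT2A T) ∧ S ⊆ T)

/-- Quadrilateral of type `Q²`. -/
def IsQ2 (S : Set Pt) : Prop :=
  ∃ v : Fin 4 → Pt, IsQuadWith S v ∧ (∀ i, ¬ IsIntPt (v i)) ∧
    ∀ i : Fin 4, ∃! z, z ∈ openSegment ℝ (v i) (v (i + 1)) ∧ IsIntPt z

/-- Affine lower bounds on the last coordinate that hold eventually outside an integral strip
hold eventually everywhere. -/
def SplitClosed (F : Filter (ℝ × ℝ × ℝ)) : Prop :=
  ∀ (a b m : ℤ) (A B C : ℝ),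
    (∀ᶠ q in F, ((a : ℝ) * q.1 + b * q.2.1 ≤ m ∨ (m : ℝ) + 1 ≤ a * q.1 + b * q.2.1) →
      A + B * q.1 + C * q.2.1 ≤ q.2.2) →
    ∀ᶠ q in F, A + B * q.1 + C * q.2.1 ≤ q.2.2

lemma exists_int_mul_sub_mem_Icc (β δ : ℝ) (hδ : 0 < δ) :
    ∃ p q : ℤ, 0 < p ∧ 0 ≤ p * β - q ∧ p * β - q ≤ δ := by
  obtain ⟨n, hn⟩ := exists_nat_gt (1 / δ)
  have hn0 : 0 < n := by
    rcases Nat.eq_zero_or_pos n with h | h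
    · subst h
      have : 0 < 1 / δ := by positivity
      simp only [Nat.cast_zero] at hn
      linarith
    · exact h
  obtain ⟨j, k, hk0, -, hjk⟩ := Real.exists_int_int_abs_mul_sub_le β hn0
  have hsmall : 1 / ((n : ℝ) + 1) ≤ δ := by
    rw [div_le_iff₀ (by positivity)]
    rw [div_lt_iff₀ hδ] at hn
    nlinarith
  have hlt : 1 / ((n : ℝ) + 1) < 1 := by
    rw [div_lt_one (by positivity)]
    have : (0 : ℝ) < n := by exact_mod_cast hn0
    linarith
  have hjk' := abs_le.1 hjk
  rcases le_or_gt 0 ((k : ℝ) * β - j) with h | h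
  · exact ⟨k, j, hk0, h, by linarith⟩
  · set d : ℝ := j - k * β with hd
    have hd0 : 0 < d := by linarith
    set N : ℤ := ⌊1 / d⌋ with hN
    have h1 : (N : ℝ) ≤ 1 / d := Int.floor_le _
    have h2 : 1 / d < N + 1 := Int.lt_floor_add_one _
    rw [le_div_iff₀ hd0] at h1
    rw [div_lt_iff₀ hd0] at h2
    have hN1 : 1 ≤ N := by
      rw [hN, Int.le_floor, le_div_iff₀ hd0]
      push_cast
      linarith
    refine ⟨N * k, N * j - 1, by positivity, ?_, ?_⟩
    · push_cast
      have : (N : ℝ) * k * β - (N * j - 1) = 1 - N * d := by rw [hd]; ring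
      linarith
    · push_cast
      have : (N : ℝ) * k * β - (N * j - 1) = 1 - N * d := by rw [hd]; ring
      linarith

lemma SplitClosed.slope_step {F : Filter (ℝ × ℝ × ℝ)} (hF : SplitClosed F)
    {p q : ℤ} (hp : 0 < p) {β e₀ e M c D : ℝ} (hM : 0 ≤ M) (he : 0 < e) (hee : e ≤ e₀)
    (hε : 0 ≤ p * β - q) (hc : e₀ * (p * β - q) ≤ c * p) (hD : 4 * p * D ≤ e)
    (hbase : ∀ᶠ t in F, 1 - M * t.2.1 ≤ t.2.2)
    (hup : ∀ᶠ t in F, 1 / 2 < (p * β - q) * (t.2.1 - 1) → 1 + c * (t.2.1 - 1) ≤ t.2.2)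
    (hdef : ∀ᶠ t in F, 1 - D ≤ t.2.2)
    (hw : ∀ᶠ t in F, 1 - e * ((1 - t.1) + β * (1 - t.2.1)) ≤ t.2.2) :
    ∀ᶠ t in F, 1 - (3 / 4 * e) * ((1 - t.1) + β * (1 - t.2.1)) ≤ t.2.2 := by
  have hp' : (0 : ℝ) < p := by exact_mod_cast hp
  set ε : ℝ := p * β - q with hεdef
  set η : ℝ := e / (4 * p) with hη
  have hη0 : 0 < η := by positivity
  have hpη : p * η = e / 4 := by rw [hη]; field_simp
  have hDη : D ≤ η := by rw [hη, le_div_iff₀ (by positivity)]; linarith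
  have h1 : ∀ᶠ t in F, 1 - (3 / 4 * e) * ((1 - t.1) + β * (1 - t.2.1)) + η * ε * (t.2.1 - 1)
      ≤ t.2.2 := by
    have key := hF p q (p + q - 1)
      (1 - (3 / 4 * e) * (1 + β) - η * ε) (3 / 4 * e) (3 / 4 * e * β + η * ε) ?_
    · filter_upwards [key] with t ht
      linarith
    · filter_upwards [hbase, hup, hdef, hw] with t hb hu hd hwt hcase
      obtain ⟨x, y, z⟩ := t
      simp only at *
      push_cast at hcase
      set w : ℝ := (1 - x) + β * (1 - y) with hwdef
      have hwhat : (p : ℝ) * (1 - x) + q * (1 - y) = p * w + ε * (y - 1) := by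
        rw [hwdef, hεdef]; ring
      have hgoal : 1 - (3 / 4 * e) * (1 + β) - η * ε + 3 / 4 * e * x
          + (3 / 4 * e * β + η * ε) * y = 1 - e * w + η * (p * w + ε * (y - 1)) := by
        have : η * (p * w + ε * (y - 1)) = e / 4 * w + η * ε * (y - 1) := by
          rw [← hpη]; ring
        rw [this, hwdef]; ring
      rw [hgoal]
      rcases hcase with h | h
      · have hs : 1 ≤ p * w + ε * (y - 1) := by linarith
        set s : ℝ := p * w + ε * (y - 1) with hsdef
        rcases le_or_gt (ε * (y - 1)) (1 / 2) with h2 | h2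
        · have h3 : s / 2 ≤ p * w := by linarith
          have h4 : e * w = 4 * η * (p * w) := by
            have : 4 * η * (p * w) = 4 * (p * η) * w := by ring
            rw [this, hpη]; ring
          have h5 : η * (s / 2) ≤ η * (p * w) := by gcongr
          have h6 : η * 1 ≤ η * s := by gcongr
          linarith
        · have h3 := hu h2
          have hy : 0 < y - 1 := by
            by_contra hcon
            nlinarith
          have h7 : e * ε ≤ c * p := le_trans (by gcongr) hc
          have h8 : 4 * η * ε ≤ c := by
            have : 4 * η * ε = e * ε / p := by rw [hη]; field_simp
            rw [this, div_le_iff₀ hp']; exact h7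
          have h9 : 4 * η * ε * (y - 1) ≤ c * (y - 1) := by gcongr
          have h10 : e * w = 4 * η * (p * w) := by
            have : 4 * η * (p * w) = 4 * (p * η) * w := by ring
            rw [this, hpη]; ring
          have h11 : 3 * η * 0 ≤ 3 * η * s := by gcongr; linarith
          have h12 : 3 * η * s = 3 * η * (p * w) + 3 * η * ε * (y - 1) := by rw [hsdef]; ring
          have h13 : η * s = η * (p * w) + η * ε * (y - 1) := by rw [hsdef]; ring
          linarith
      · have hs : p * w + ε * (y - 1) ≤ 0 := by linarith
        have : η * (p * w + ε * (y - 1)) ≤ η * 0 := by gcongr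
        linarith
  have key := hF 0 1 0 (1 - (3 / 4 * e) * (1 + β)) (3 / 4 * e) (3 / 4 * e * β) ?_
  · filter_upwards [key] with t ht
    linarith
  · filter_upwards [hbase, h1, hw] with t hb h1 hwt hcase
    obtain ⟨x, y, z⟩ := t
    simp only [Int.cast_zero, Int.cast_one, zero_mul, one_mul, zero_add] at *
    set w : ℝ := (1 - x) + β * (1 - y) with hwdef
    have hgoal : 1 - (3 / 4 * e) * (1 + β) + 3 / 4 * e * x + 3 / 4 * e * β * y
        = 1 - (3 / 4 * e) * w := by rw [hwdef]; ring
    rw [hgoal]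
    rcases hcase with h | h
    · rcases le_or_gt 0 w with h2 | h2
      · have : 0 ≤ e * w := by positivity
        nlinarith
      · nlinarith
    · have : 0 ≤ η * ε * (y - 1) := mul_nonneg (by positivity) (by linarith)
      linarith

lemma SplitClosed.exists_slope_le {F : Filter (ℝ × ℝ × ℝ)} (hF : SplitClosed F)
    {p q : ℤ} (hp : 0 < p) {β e₀ M c D : ℝ} (hM : 0 ≤ M) (he₀ : 0 < e₀)
    (hε : 0 ≤ p * β - q) (hc : e₀ * (p * β - q) ≤ c * p) (hD : 0 < D)
    (hbase : ∀ᶠ t in F, 1 - M * t.2.1 ≤ t.2.2)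
    (hup : ∀ᶠ t in F, 1 / 2 < (p * β - q) * (t.2.1 - 1) → 1 + c * (t.2.1 - 1) ≤ t.2.2)
    (hdef : ∀ᶠ t in F, 1 - D ≤ t.2.2)
    (hw : ∀ᶠ t in F, 1 - e₀ * ((1 - t.1) + β * (1 - t.2.1)) ≤ t.2.2) :
    ∃ e, 0 ≤ e ∧ e ≤ 4 * p * D ∧
      ∀ᶠ t in F, 1 - e * ((1 - t.1) + β * (1 - t.2.1)) ≤ t.2.2 := by
  have hp' : (0 : ℝ) < p := by exact_mod_cast hp
  by_contra hcon
  simp only [not_exists, not_and] at hcon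
  have hall : ∀ n : ℕ, ∀ᶠ t in F,
      1 - ((3 / 4) ^ n * e₀) * ((1 - t.1) + β * (1 - t.2.1)) ≤ t.2.2 := by
    intro n
    induction n with
    | zero => simpa using hw
    | succ n ih =>
      have hpos : 0 < (3 / 4 : ℝ) ^ n * e₀ := by positivity
      have hle : (3 / 4 : ℝ) ^ n * e₀ ≤ e₀ :=
        mul_le_of_le_one_left he₀.le (pow_le_one₀ (by norm_num) (by norm_num))
      have hbig : 4 * p * D ≤ (3 / 4 : ℝ) ^ n * e₀ := by
        by_contra! h
        exact hcon _ hpos.le h.le ih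
      have := hF.slope_step hp hM hpos hle hε hc hbig hbase hup hdef ih
      rw [pow_succ]
      filter_upwards [this] with t ht
      linarith
  obtain ⟨n, hn⟩ := exists_pow_lt_of_lt_one (show 0 < 4 * p * D / e₀ by positivity)
    (show (3 / 4 : ℝ) < 1 by norm_num)
  rw [lt_div_iff₀ he₀] at hn
  exact hcon _ (by positivity) hn.le (hall n)

lemma SplitClosed.map_reflect {F : Filter (ℝ × ℝ × ℝ)} (hF : SplitClosed F) :
    SplitClosed (F.map fun t => (1 - t.1, t.2.1, t.2.2)) := by
  intro a b m A B C h
  rw [Filter.eventually_map] at h ⊢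
  have := hF (-a) b (m - a) (A + B) (-B) C ?_
  · filter_upwards [this] with t ht
    linarith
  · filter_upwards [h] with t ht hcase
    push_cast at hcase
    have := ht (by
      rcases hcase with h | h
      · left; linarith
      · right; linarith)
    linarith

lemma SplitClosed.map_swap {F : Filter (ℝ × ℝ × ℝ)} (hF : SplitClosed F) :
    SplitClosed (F.map fun t => (t.2.1, t.1, t.2.2)) := by
  intro a b m A B C h
  rw [Filter.eventually_map] at h ⊢
  have := hF b a m A C B ?_
  · filter_upwards [this] with t ht
    linarith
  · filter_upwards [h] with t ht hcase
    have := ht (by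
      rcases hcase with h | h
      · left; linarith
      · right; linarith)
    linarith

lemma SplitClosed.deficit_step {F : Filter (ℝ × ℝ × ℝ)} (hF : SplitClosed F)
    {β β' e e' M K D : ℝ} (hM : 0 ≤ M) (hK : 0 ≤ K) (hD : 0 < D)
    (he : 0 ≤ e) (he' : 0 ≤ e') (hβ : 0 ≤ β) (hβ' : 0 ≤ β')
    (heK : e * β ≤ K * D) (heK' : e' * β' ≤ K * D)
    (hbase : ∀ᶠ t in F, 1 - M * t.2.1 ≤ t.2.2)
    (hdef : ∀ᶠ t in F, 1 - D ≤ t.2.2)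
    (hw : ∀ᶠ t in F, 1 - e * ((1 - t.1) + β * (1 - t.2.1)) ≤ t.2.2)
    (hw' : ∀ᶠ t in F, 1 - e' * (t.1 + β' * (1 - t.2.1)) ≤ t.2.2) :
    ∀ᶠ t in F, 1 - K / (1 + K) * D ≤ t.2.2 := by
  have h1 : ∀ᶠ t in F, 0 ≤ t.2.1 → 1 - D * t.2.1 ≤ t.2.2 := by
    rcases le_total M D with hMD | hMD
    · filter_upwards [hbase] with t ht hy
      have : M * t.2.1 ≤ D * t.2.1 := by gcongr
      linarith
    · have key := hF 0 1 0 1 0 (-D) ?_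
      · filter_upwards [key] with t ht _
        linarith
      · filter_upwards [hbase, hdef] with t hb hd hcase
        simp only [Int.cast_zero, Int.cast_one, zero_mul, one_mul, zero_add] at hcase
        rcases hcase with h | h <;> nlinarith
  set θ : ℝ := K / (1 + K) with hθ
  have hθ0 : 0 ≤ θ := by positivity
  have hθ1 : θ ≤ 1 := by rw [hθ, div_le_one (by positivity)]; linarith
  have hθK : (1 - θ) * K = θ := by rw [hθ]; field_simp; ring
  have hcomb : ∀ y z s : ℝ, s ≤ K * D → 1 - M * y ≤ z → (0 ≤ y → 1 - D * y ≤ z) → 0 ≤ s →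
      1 - s * (1 - y) ≤ z → 1 - θ * D ≤ z := by
    intro y z s hs hb hd hs0 hz
    have hθD : 0 ≤ θ * D := by positivity
    rcases le_or_gt y 0 with hy | hy
    · nlinarith
    rcases le_or_gt 1 y with hy1 | hy1
    · nlinarith
    have h2 : s * (1 - y) ≤ K * D * (1 - y) := by
      have : 0 ≤ 1 - y := by linarith
      gcongr
    have h3 : θ * (1 - D * y) ≤ θ * z := mul_le_mul_of_nonneg_left (hd hy.le) hθ0
    have h4 : (1 - θ) * (1 - K * D * (1 - y)) ≤ (1 - θ) * z :=
      mul_le_mul_of_nonneg_left (by linarith) (by linarith)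
    have h5 : (1 - θ) * (K * D * (1 - y)) = θ * (D * (1 - y)) := by
      have : (1 - θ) * (K * D * (1 - y)) = (1 - θ) * K * (D * (1 - y)) := by ring
      rw [this, hθK]
    linarith
  have key := hF 1 0 0 (1 - θ * D) 0 0 ?_
  · filter_upwards [key] with t ht
    linarith
  · filter_upwards [hbase, h1, hw, hw'] with t hb hd hwt hwt' hcase
    simp only [Int.cast_zero, Int.cast_one, zero_mul, one_mul, zero_add, add_zero] at hcase ⊢
    rcases hcase with h | h
    · refine hcomb t.2.1 t.2.2 (e' * β') heK' hb hd (by positivity) ?_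
      have : e' * t.1 ≤ e' * 0 := by gcongr
      linarith
    · refine hcomb t.2.1 t.2.2 (e * β) heK hb hd (by positivity) ?_
      have : e * (1 - t.1) ≤ e * 0 := by gcongr; linarith
      linarith

lemma SplitClosed.exists_small_slopes {F : Filter (ℝ × ℝ × ℝ)} (hF : SplitClosed F)
    {β β' e e' M c Y : ℝ} (hM : 0 ≤ M) (he : 0 < e) (he' : 0 < e') (hβ : 0 ≤ β) (hβ' : 0 ≤ β')
    (hc : 0 < c) (hY : 0 < Y)
    (hnonneg : ∀ᶠ t in F, 0 ≤ t.2.2)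
    (hbase : ∀ᶠ t in F, 1 - M * t.2.1 ≤ t.2.2)
    (hup : ∀ᶠ t in F, Y ≤ t.2.1 - 1 → 1 + c * (t.2.1 - 1) ≤ t.2.2)
    (hw : ∀ᶠ t in F, 1 - e * ((1 - t.1) + β * (1 - t.2.1)) ≤ t.2.2)
    (hw' : ∀ᶠ t in F, 1 - e' * (t.1 + β' * (1 - t.2.1)) ≤ t.2.2) {δ : ℝ} (hδ : 0 < δ) :
    (∃ s, 0 ≤ s ∧ s ≤ δ ∧ ∀ᶠ t in F, 1 - s * ((1 - t.1) + β * (1 - t.2.1)) ≤ t.2.2) ∧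
    (∃ s, 0 ≤ s ∧ s ≤ δ ∧ ∀ᶠ t in F, 1 - s * (t.1 + β' * (1 - t.2.1)) ≤ t.2.2) := by
  have reduce : ∀ (G : Filter (ℝ × ℝ × ℝ)) (b s : ℝ), SplitClosed G → 0 < s →
      (∀ᶠ t in G, 1 - M * t.2.1 ≤ t.2.2) →
      (∀ᶠ t in G, Y ≤ t.2.1 - 1 → 1 + c * (t.2.1 - 1) ≤ t.2.2) →
      (∀ᶠ t in G, 1 - s * ((1 - t.1) + b * (1 - t.2.1)) ≤ t.2.2) →
      ∃ P : ℝ, 0 < P ∧ ∀ D, 0 < D → (∀ᶠ t in G, 1 - D ≤ t.2.2) →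
        ∃ r, 0 ≤ r ∧ r ≤ P * D ∧
          ∀ᶠ t in G, 1 - r * ((1 - t.1) + b * (1 - t.2.1)) ≤ t.2.2 := by
    intro G b s hG hs hGb hGu hGw
    obtain ⟨p, q, hp, h0, h1⟩ := exists_int_mul_sub_mem_Icc b (min (1 / (2 * Y)) (c / s))
      (by positivity)
    have hp1 : (1 : ℝ) ≤ p := by exact_mod_cast hp
    refine ⟨4 * p, by positivity, fun D hD hGD => ?_⟩
    refine hG.exists_slope_le (c := c) hp hM hs h0 ?_ hD hGb ?_ hGD hGw
    · have h2 := h1.trans (min_le_right _ _)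
      rw [le_div_iff₀ hs] at h2
      nlinarith
    · have h2 := h1.trans (min_le_left _ _)
      rw [le_div_iff₀ (by positivity)] at h2
      filter_upwards [hGu] with t ht h3
      refine ht ?_
      by_contra! h4
      rcases le_or_gt 0 (t.2.1 - 1) with h5 | h5
      · nlinarith
      · nlinarith
  obtain ⟨P, hP, hPr⟩ := reduce F β e hF he hbase hup hw
  obtain ⟨P', hP', hPr'⟩ := reduce _ β' e' hF.map_reflect he'
    (by simpa [Filter.eventually_map] using hbase) (by simpa [Filter.eventually_map] using hup)
    (by simpa [Filter.eventually_map] using hw')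
  simp only [Filter.eventually_map, sub_sub_cancel] at hPr'
  set K : ℝ := P * β + P' * β' with hK
  have hK0 : 0 ≤ K := by positivity
  have hθ0 : 0 ≤ K / (1 + K) := by positivity
  have hθ1 : K / (1 + K) < 1 := by rw [div_lt_one (by positivity)]; linarith
  have hdef : ∀ D, 0 < D → ∀ᶠ t in F, 1 - D ≤ t.2.2 := by
    have hpow : ∀ n : ℕ, ∀ D, (K / (1 + K)) ^ n ≤ D → 0 < D → ∀ᶠ t in F, 1 - D ≤ t.2.2 := by
      intro n
      induction n with
      | zero =>
        intro D hn hD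
        filter_upwards [hnonneg] with t ht
        simp only [pow_zero] at hn
        linarith
      | succ n ih =>
        intro D hn hD
        rcases hK0.eq_or_lt with hK00 | hK00
        · have := ih 1 (by rw [← hK00]; simpa using pow_le_one₀ (le_refl (0:ℝ)) zero_le_one)
            one_pos
          obtain ⟨r, hr0, hr1, hr⟩ := hPr 1 one_pos this
          obtain ⟨r', hr0', hr1', hr'⟩ := hPr' 1 one_pos this
          have h1 : 0 ≤ P * β := by positivity
          have h2 : 0 ≤ P' * β' := by positivity
          have := hF.deficit_step hM hK0 one_pos hr0 hr0' hβ hβ'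
            (by nlinarith) (by nlinarith) hbase this hr hr'
          filter_upwards [this] with t ht
          rw [← hK00] at ht
          simp only [zero_div, zero_mul, sub_zero] at ht
          linarith
        · have hθ : 0 < K / (1 + K) := by positivity
          have hD' : 0 < D / (K / (1 + K)) := by positivity
          have := ih (D / (K / (1 + K))) (by
            rw [le_div_iff₀ hθ, ← pow_succ]; exact hn) hD'
          set D' := D / (K / (1 + K)) with hD'def
          obtain ⟨r, hr0, hr1, hr⟩ := hPr D' hD' this
          obtain ⟨r', hr0', hr1', hr'⟩ := hPr' D' hD' this
          have h1 : 0 ≤ P' * β' * D' := by positivity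
          have h2 : 0 ≤ P * β * D' := by positivity
          have := hF.deficit_step hM hK0 hD' hr0 hr0' hβ hβ'
            (by nlinarith) (by nlinarith) hbase this hr hr'
          have heq : K / (1 + K) * D' = D := by rw [hD'def]; field_simp
          rwa [heq] at this
    intro D hD
    obtain ⟨n, hn⟩ := exists_pow_lt_of_lt_one hD hθ1
    exact hpow n D hn.le hD
  constructor
  · obtain ⟨r, h0, h1, h⟩ := hPr (δ / P) (by positivity) (hdef _ (by positivity))
    exact ⟨r, h0, by rwa [mul_div_cancel₀ _ hP.ne'] at h1, h⟩
  · obtain ⟨r, h0, h1, h⟩ := hPr' (δ / P') (by positivity) (hdef _ (by positivity))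
    exact ⟨r, h0, by rwa [mul_div_cancel₀ _ hP'.ne'] at h1, h⟩

lemma SplitClosed.one_le_of_pos_slopes {F : Filter (ℝ × ℝ × ℝ)} (hF : SplitClosed F)
    {β β' e e' M c Y : ℝ} (hM : 0 ≤ M) (he : 0 < e) (he' : 0 < e') (hβ : 0 < β) (hβ' : 0 < β')
    (hc : 0 < c) (hY : 0 < Y)
    (hnonneg : ∀ᶠ t in F, 0 ≤ t.2.2)
    (hbase : ∀ᶠ t in F, 1 - M * t.2.1 ≤ t.2.2)
    (hup : ∀ᶠ t in F, Y ≤ t.2.1 - 1 → 1 + c * (t.2.1 - 1) ≤ t.2.2)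
    (hw : ∀ᶠ t in F, 1 - e * ((1 - t.1) + β * (1 - t.2.1)) ≤ t.2.2)
    (hw' : ∀ᶠ t in F, 1 - e' * (t.1 + β' * (1 - t.2.1)) ≤ t.2.2) :
    ∀ᶠ t in F, 1 ≤ t.2.2 := by
  set κ : ℝ := min (e * β) (e' * β') with hκ
  have hκ0 : 0 < κ := by positivity
  have hκ1 : κ ≤ e * β := min_le_left _ _
  have hκ2 : κ ≤ e' * β' := min_le_right _ _
  obtain ⟨⟨s, hs0, hs1, hs⟩, ⟨s', hs0', hs1', hs'⟩⟩ :=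
    hF.exists_small_slopes hM he he' hβ.le hβ'.le hc hY hnonneg hbase hup hw hw'
      (show 0 < min (κ / β) (κ / β') by positivity)
  have hsβ : s * β ≤ κ := (le_div_iff₀ hβ).1 (hs1.trans (min_le_left _ _))
  have hsβ' : s' * β' ≤ κ := (le_div_iff₀ hβ').1 (hs1'.trans (min_le_right _ _))
  have h1 : ∀ᶠ t in F, 1 - κ + 0 * t.1 + κ * t.2.1 ≤ t.2.2 := by
    refine hF 1 0 0 _ _ _ ?_
    filter_upwards [hw, hw', hs, hs'] with t h1 h2 h3 h4 hcase
    simp only [Int.cast_zero, Int.cast_one, zero_mul, one_mul, zero_add, add_zero] at hcase ⊢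
    rcases hcase with h | h
    · rcases le_total t.2.1 1 with hy | hy
      · nlinarith
      · nlinarith
    · rcases le_total t.2.1 1 with hy | hy
      · nlinarith
      · nlinarith
  have h2 := hF 0 1 0 1 0 0 (by
    filter_upwards [hbase, h1] with t hb h1 hcase
    simp only [Int.cast_zero, Int.cast_one, zero_mul, one_mul, zero_add] at hcase
    rcases hcase with h | h <;> nlinarith)
  filter_upwards [h2] with t ht
  linarith

lemma SplitClosed.one_le_of_corner {F : Filter (ℝ × ℝ × ℝ)} (hF : SplitClosed F)
    {β e e' M c Y d ξ : ℝ} (hM : 0 < M) (he : 0 < e) (he' : 0 < e') (hβ : 0 ≤ β)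
    (hc : 0 < c) (hY : 0 < Y) (hd : 0 < d) (hξ1 : 1 ≤ ξ) (hξ2 : ξ < 2)
    (hnonneg : ∀ᶠ t in F, 0 ≤ t.2.2)
    (hbase : ∀ᶠ t in F, 1 - M * t.2.1 ≤ t.2.2)
    (hup : ∀ᶠ t in F, Y ≤ t.2.1 - 1 → 1 + c * (t.2.1 - 1) ≤ t.2.2)
    (hw : ∀ᶠ t in F, 1 - e * ((1 - t.1) + β * (1 - t.2.1)) ≤ t.2.2)
    (hleft : ∀ᶠ t in F, 1 - e' * t.1 ≤ t.2.2)
    (hright : ∀ᶠ t in F, 1 + d * (t.1 - ξ) ≤ t.2.2) :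
    ∀ᶠ t in F, 1 ≤ t.2.2 := by
  set d' : ℝ := d * (2 - ξ) with hd'
  have hd'0 : 0 < d' := mul_pos hd (by linarith)
  obtain ⟨⟨s, hs0, hs1, hs⟩, -⟩ :=
    hF.exists_small_slopes (β' := 0) hM.le he he' hβ le_rfl hc hY hnonneg hbase hup hw
      (by simpa using hleft) (show 0 < min (M / 2) (d' / 2) by positivity)
  have hsM : s ≤ M / 2 := hs1.trans (min_le_left _ _)
  have hsd : s ≤ d' / 2 := hs1.trans (min_le_right _ _)
  have hfar : ∀ᶠ t in F, 2 ≤ t.1 → 1 + d' * (t.1 - 1) ≤ t.2.2 := by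
    filter_upwards [hright] with t ht hx
    have : d' * (t.1 - 1) ≤ d * (t.1 - ξ) := by
      have : 0 ≤ d * ((ξ - 1) * (t.1 - 2)) :=
        mul_nonneg hd.le (mul_nonneg (by linarith) (by linarith))
      rw [hd']
      linarith
    linarith
  have h1 : ∀ᶠ t in F, 1 + 0 * t.1 + (-s) * t.2.1 ≤ t.2.2 := by
    refine hF 0 1 0 _ _ _ ?_
    filter_upwards [hbase, hs, hleft] with t hb h3 h4 hcase
    simp only [Int.cast_zero, Int.cast_one, zero_mul, one_mul, zero_add] at hcase ⊢
    rcases hcase with h | h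
    · nlinarith
    · have hsb : 0 ≤ s * β * (t.2.1 - 1) := mul_nonneg (by positivity) (by linarith)
      rcases le_total 0 t.1 with hx | hx
      · have : 0 ≤ s * t.1 := by positivity
        nlinarith
      · nlinarith
  have h2 : ∀ᶠ t in F, 1 - s + s * t.1 + (-s) * t.2.1 ≤ t.2.2 := by
    refine hF 1 0 1 _ _ _ ?_
    filter_upwards [hbase, h1, hfar] with t hb h1 h3 hcase
    simp only [Int.cast_zero, Int.cast_one, zero_mul, one_mul, add_zero] at hcase ⊢
    rcases hcase with h | h
    · nlinarith
    · have h4 := h3 (by linarith)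
      have h5 : s * (t.1 - 1) ≤ d' / 2 * (t.1 - 1) := by
        have : 0 ≤ t.1 - 1 := by linarith
        gcongr
      have h6 : 0 ≤ d' * (t.1 - 1) := mul_nonneg hd'0.le (by linarith)
      rcases le_total 0 t.2.1 with hy | hy
      · nlinarith
      · nlinarith
  have h3 : ∀ᶠ t in F, 1 - s + s * t.1 + 0 * t.2.1 ≤ t.2.2 := by
    refine hF 0 1 0 _ _ _ ?_
    filter_upwards [h2, hs] with t h2 h3 hcase
    simp only [Int.cast_zero, Int.cast_one, zero_mul, one_mul, zero_add] at hcase ⊢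
    rcases hcase with h | h
    · nlinarith
    · have hsb : 0 ≤ s * β * (t.2.1 - 1) := mul_nonneg (by positivity) (by linarith)
      linarith
  have h4 := hF 1 0 0 1 0 0 (by
    filter_upwards [h3, hleft] with t h3 h4 hcase
    simp only [Int.cast_zero, Int.cast_one, zero_mul, one_mul, zero_add, add_zero] at hcase ⊢
    rcases hcase with h | h <;> nlinarith)
  filter_upwards [h4] with t ht
  linarith

/-- The intersection cuts obtained from the convex set `L` around `f` hold eventually. -/
def HasCuts (F : Filter (ℝ × ℝ × ℝ)) (L : Set (ℝ × ℝ)) (f : ℝ × ℝ) : Prop :=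
  ∀ B C m : ℝ, (∀ x ∈ L, B * x.1 + C * x.2 ≤ m) → B * f.1 + C * f.2 < m →
    ∀ᶠ t in F, 1 + (B * t.1 + C * t.2.1 - m) / (m - (B * f.1 + C * f.2)) ≤ t.2.2

lemma HasCuts.map_reflect {F : Filter (ℝ × ℝ × ℝ)} {L : Set (ℝ × ℝ)} {f : ℝ × ℝ}
    (h : HasCuts F L f) :
    HasCuts (F.map fun t => (1 - t.1, t.2.1, t.2.2)) ((fun x : ℝ × ℝ => (1 - x.1, x.2)) ⁻¹' L)
      (1 - f.1, f.2) := by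
  intro B C m hL hf
  rw [Filter.eventually_map]
  have := h (-B) C (m - B) (fun x hx => by
    have := hL (1 - x.1, x.2) (by simpa using hx)
    simp only at this
    linarith) (by simp only at hf; linarith)
  filter_upwards [this] with t ht
  convert ht using 3 <;> ring

lemma HasCuts.map_swap {F : Filter (ℝ × ℝ × ℝ)} {L : Set (ℝ × ℝ)} {f : ℝ × ℝ}
    (h : HasCuts F L f) :
    HasCuts (F.map fun t => (t.2.1, t.1, t.2.2)) (Prod.swap ⁻¹' L) f.swap := by
  intro B C m hL hf
  rw [Filter.eventually_map]
  have := h C B m (fun x hx => by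
    have := hL x.swap (by simpa using hx)
    simp only [Prod.fst_swap, Prod.snd_swap] at this
    linarith) (by simp only [Prod.fst_swap, Prod.snd_swap] at hf; linarith)
  filter_upwards [this] with t ht
  simp only [Prod.fst_swap, Prod.snd_swap]
  convert ht using 3 <;> ring

lemma lt_of_mem_interior {L : Set (ℝ × ℝ)} {f : ℝ × ℝ} (hf : f ∈ interior L) {B C m : ℝ}
    (hBC : B ≠ 0 ∨ C ≠ 0) (hL : ∀ x ∈ L, B * x.1 + C * x.2 ≤ m) : B * f.1 + C * f.2 < m := by
  have hcont : Filter.Tendsto (fun δ : ℝ => (f.1 + δ * B, f.2 + δ * C)) (nhdsWithin 0 (Ioi 0))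
      (nhds f) := by
    have : Continuous fun δ : ℝ => (f.1 + δ * B, f.2 + δ * C) := by fun_prop
    have h := this.tendsto 0
    simp only [zero_mul, add_zero, Prod.mk.eta] at h
    exact h.mono_left nhdsWithin_le_nhds
  obtain ⟨δ, hδ, hδ0⟩ := ((hcont.eventually (mem_interior_iff_mem_nhds.1 hf)).and
    self_mem_nhdsWithin).exists
  have h1 := hL _ hδ
  have h2 : 0 < δ := hδ0
  have h3 : 0 < B ^ 2 + C ^ 2 := by
    rcases hBC with h | h <;> positivity
  simp only at h1
  have : 0 < δ * (B ^ 2 + C ^ 2) := by positivity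
  linarith

lemma exists_support {L : Set (ℝ × ℝ)} (hconv : Convex ℝ L) (hne : (interior L).Nonempty)
    {m : ℝ × ℝ} (hm : m ∉ interior L) :
    ∃ B C : ℝ, (∀ x ∈ L, B * x.1 + C * x.2 ≤ B * m.1 + C * m.2) ∧
      ∀ x ∈ interior L, B * x.1 + C * x.2 < B * m.1 + C * m.2 := by
  obtain ⟨φ, hφ⟩ := geometric_hahn_banach_open_point hconv.interior isOpen_interior hm
  have hrep : ∀ x : ℝ × ℝ, φ x = φ (1, 0) * x.1 + φ (0, 1) * x.2 := by
    intro x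
    have : x = x.1 • ((1, 0) : ℝ × ℝ) + x.2 • ((0, 1) : ℝ × ℝ) := by
      ext <;> simp
    conv_lhs => rw [this]
    simp only [map_add, map_smul, smul_eq_mul]
    ring
  refine ⟨φ (1, 0), φ (0, 1), fun x hx => ?_, fun x hx => ?_⟩
  · rw [← hrep, ← hrep]
    have hcl : x ∈ closure (interior L) := by
      rw [hconv.closure_interior_eq_closure_of_nonempty_interior hne]
      exact subset_closure hx
    have : closure (interior L) ⊆ {x | φ x ≤ φ m} :=
      closure_minimal (fun y hy => (hφ y hy).le) (isClosed_le φ.continuous continuous_const)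
    exact this hcl
  · rw [← hrep, ← hrep]
    exact hφ x hx

section

variable {F : Filter (ℝ × ℝ × ℝ)} {L : Set (ℝ × ℝ)} {f : ℝ × ℝ}

lemma HasCuts.exists_slope (hcut : HasCuts F L f) (hf : f ∈ interior L) {B C m : ℝ}
    (hBC : B ≠ 0 ∨ C ≠ 0) (hL : ∀ x ∈ L, B * x.1 + C * x.2 ≤ m) :
    ∃ e : ℝ, 0 < e ∧ ∀ᶠ t in F, 1 - e * (m - (B * t.1 + C * t.2.1)) ≤ t.2.2 := by
  have hlt := lt_of_mem_interior hf hBC hL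
  refine ⟨(m - (B * f.1 + C * f.2))⁻¹, inv_pos.2 (by linarith), ?_⟩
  filter_upwards [hcut B C m hL hlt] with t ht
  rw [div_eq_inv_mul] at ht
  linarith

lemma HasCuts.exists_height_slope (hcut : HasCuts F L f) (hf : f ∈ interior L)
    (hcomp : IsCompact L) :
    ∃ c Y : ℝ, 0 < c ∧ 0 < Y ∧
      ∀ᶠ t in F, Y ≤ t.2.1 - 1 → 1 + c * (t.2.1 - 1) ≤ t.2.2 := by
  obtain ⟨R, hR⟩ := (hcomp.image continuous_snd).bddAbove
  have hR' : ∀ x ∈ L, 0 * x.1 + 1 * x.2 ≤ max R 2 := fun x hx => by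
    have := hR (mem_image_of_mem _ hx)
    have := le_max_left R 2
    linarith
  obtain ⟨e, he, h⟩ := hcut.exists_slope hf (Or.inr one_ne_zero) hR'
  have h2 := le_max_right R 2
  set R' := max R 2
  refine ⟨e / 2, 2 * (R' - 1), by positivity, by linarith, ?_⟩
  filter_upwards [h] with t ht hy
  nlinarith

lemma SplitClosed.one_le_of_corner_set (hF : SplitClosed F) (hcut : HasCuts F L f)
    (hnonneg : ∀ᶠ t in F, 0 ≤ t.2.2) (hf : f ∈ interior L) (hcomp : IsCompact L)
    (hx : ∀ x ∈ L, 0 ≤ x.1) (hy : ∀ x ∈ L, 0 ≤ x.2) (hx2 : ∀ x ∈ L, x.1 < 2)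
    {β : ℝ} (hβ : 0 ≤ β) (hw : ∀ x ∈ L, 0 ≤ (1 - x.1) + β * (1 - x.2)) :
    ∀ᶠ t in F, 1 ≤ t.2.2 := by
  obtain ⟨c, Y, hc, hY, hup⟩ := hcut.exists_height_slope hf hcomp
  obtain ⟨M, hM, hbase⟩ := hcut.exists_slope (B := 0) (C := -1) (m := 0) hf (by simp)
    (fun x hx' => by linarith [hy x hx'])
  obtain ⟨e', he', hleft⟩ := hcut.exists_slope (B := -1) (C := 0) (m := 0) hf (by simp)
    (fun x hx' => by linarith [hx x hx'])
  obtain ⟨e, he, hright⟩ := hcut.exists_slope (B := 1) (C := β) (m := 1 + β) hf (by simp)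
    (fun x hx' => by linarith [hw x hx'])
  obtain ⟨x₀, hx₀, hmax⟩ := hcomp.exists_isMaxOn ⟨f, interior_subset hf⟩
    (continuous_fst.continuousOn (s := L))
  have hmax' : ∀ x ∈ L, x.1 ≤ max 1 x₀.1 := fun x hx' => (hmax hx').trans (le_max_right _ _)
  obtain ⟨d, hd, hfar⟩ := hcut.exists_slope (B := 1) (C := 0) (m := max 1 x₀.1) hf (by simp)
    (fun x hx' => by linarith [hmax' x hx'])
  refine hF.one_le_of_corner (β := β) hM he he' hβ hc hY hd (le_max_left 1 x₀.1)
    (max_lt (by norm_num) (hx2 _ hx₀)) hnonneg ?_ hup ?_ ?_ ?_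
  · filter_upwards [hbase] with t ht
    linarith
  · filter_upwards [hright] with t ht
    linarith
  · filter_upwards [hleft] with t ht
    linarith
  · filter_upwards [hfar] with t ht
    linarith

lemma interior_preimage_swap : interior (Prod.swap ⁻¹' L) = Prod.swap ⁻¹' interior L :=
  ((Homeomorph.prodComm ℝ ℝ).preimage_interior L).symm

/-- The reflection of the plane exchanging `(0, y)` and `(1, y)`. -/
def reflectHomeo : ℝ × ℝ ≃ₜ ℝ × ℝ :=
  (Homeomorph.subLeft (1 : ℝ)).prodCongr (Homeomorph.refl ℝ)

lemma SplitClosed.one_le_of_quadrant (hF : SplitClosed F) (hcut : HasCuts F L f)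
    (hnonneg : ∀ᶠ t in F, 0 ≤ t.2.2) (hf : f ∈ interior L) (hcomp : IsCompact L)
    (hx : ∀ x ∈ L, 0 ≤ x.1) (hy : ∀ x ∈ L, 0 ≤ x.2)
    {β : ℝ} (hβ : 0 ≤ β) (hw : ∀ x ∈ L, 0 ≤ (1 - x.1) + β * (1 - x.2))
    (hT : ¬ ((2, 0) ∈ L ∧ (0, 2) ∈ L ∧ ∀ x ∈ L, x.1 + x.2 ≤ 2)) :
    ∀ᶠ t in F, 1 ≤ t.2.2 := by
  by_cases hx2 : ∀ x ∈ L, x.1 < 2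
  · exact hF.one_le_of_corner_set hcut hnonneg hf hcomp hx hy hx2 hβ hw
  push Not at hx2
  obtain ⟨x₀, hx₀, hx₀2⟩ := hx2
  have hβ1 : 1 ≤ β := by
    have h1 := hw x₀ hx₀
    have h2 : 0 ≤ β * x₀.2 := mul_nonneg hβ (hy x₀ hx₀)
    linarith
  by_cases hy2 : ∀ x ∈ L, x.2 < 2
  · have key := hF.map_swap.one_le_of_corner_set hcut.map_swap
      (by simpa [Filter.eventually_map] using hnonneg)
      (by rw [interior_preimage_swap]; simpa using hf)
      ((Homeomorph.prodComm ℝ ℝ).isCompact_preimage.2 hcomp)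
      (fun x hx' => hy _ hx') (fun x hx' => hx _ hx') (fun x hx' => hy2 _ hx')
      (β := β⁻¹) (by positivity) (fun x hx' => by
        have := hw _ hx'
        simp only [Prod.fst_swap, Prod.snd_swap] at this
        have h3 : (1 - x.1) + β⁻¹ * (1 - x.2) = β⁻¹ * ((1 - x.2) + β * (1 - x.1)) := by
          field_simp; ring
        rw [h3]
        positivity)
    simpa [Filter.eventually_map] using key
  push Not at hy2
  obtain ⟨y₀, hy₀, hy₀2⟩ := hy2
  exfalso
  have hβ2 : β ≤ 1 := by
    have h1 := hw y₀ hy₀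
    have h2 := hx y₀ hy₀
    nlinarith
  have hβe : β = 1 := le_antisymm hβ2 hβ1
  subst hβe
  refine hT ⟨?_, ?_, fun x hx' => by linarith [hw x hx']⟩
  · have h1 := hw x₀ hx₀
    have h2 := hy x₀ hx₀
    have : x₀ = (2, 0) := Prod.ext (by simp only; linarith) (by simp only; linarith)
    rwa [← this]
  · have h1 := hw y₀ hy₀
    have h2 := hx y₀ hy₀
    have : y₀ = (0, 2) := Prod.ext (by simp only; linarith) (by simp only; linarith)
    rwa [← this]

lemma exists_right_support (hconv : Convex ℝ L) (hy : (1, 0) ∈ L) (h11 : (1, 1) ∉ interior L)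
    {ξ : ℝ} (hξ1 : ξ < 1) (hξ : (ξ, 1) ∈ interior L) :
    ∃ β : ℝ, 0 ≤ β ∧ ∀ x ∈ L, 0 ≤ (1 - x.1) + β * (1 - x.2) := by
  obtain ⟨B, C, hle, hlt⟩ := exists_support hconv ⟨_, hξ⟩ h11
  have h1 := hle _ hy
  have h2 := hlt _ hξ
  simp only at h1 h2
  have hB : 0 < B := by
    by_contra! h
    nlinarith
  refine ⟨C / B, div_nonneg (by linarith) hB.le, fun x hx => ?_⟩
  have h3 := hle x hx
  have : (1 - x.1) + C / B * (1 - x.2) = (B * 1 + C * 1 - (B * x.1 + C * x.2)) / B := by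
    field_simp
    ring
  rw [this]
  exact div_nonneg (by linarith) hB.le

/-- If `L` is a compact convex set resting on the unit segment of the `x`-axis, lattice-free at
`(0, 1)` and `(1, 1)`, and not one of the two lattice triangles of side length two on that
segment, then finitely many splits prove that the height is at least one. -/
theorem SplitClosed.one_le_of_base (hF : SplitClosed F) (hcut : HasCuts F L f)
    (hnonneg : ∀ᶠ t in F, 0 ≤ t.2.2) (hf : f ∈ interior L) (hcomp : IsCompact L)
    (hconv : Convex ℝ L) (hy : ∀ x ∈ L, 0 ≤ x.2) (h0 : (0, 0) ∈ L) (h1 : (1, 0) ∈ L)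
    (h01 : (0, 1) ∉ interior L) (h11 : (1, 1) ∉ interior L)
    {ξ : ℝ} (hξ0 : 0 < ξ) (hξ1 : ξ < 1) (hξ : (ξ, 1) ∈ interior L)
    (hT : ¬ ((2, 0) ∈ L ∧ (0, 2) ∈ L ∧ ∀ x ∈ L, 0 ≤ x.1 ∧ x.1 + x.2 ≤ 2))
    (hT' : ¬ ((-1, 0) ∈ L ∧ (1, 2) ∈ L ∧ ∀ x ∈ L, x.1 ≤ 1 ∧ x.2 - x.1 ≤ 1)) :
    ∀ᶠ t in F, 1 ≤ t.2.2 := by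
  have hint : interior ((fun x : ℝ × ℝ => (1 - x.1, x.2)) ⁻¹' L) =
      (fun x : ℝ × ℝ => (1 - x.1, x.2)) ⁻¹' interior L :=
    (reflectHomeo.preimage_interior L).symm
  have hconv' : Convex ℝ ((fun x : ℝ × ℝ => (1 - x.1, x.2)) ⁻¹' L) := by
    intro x hx y hy a b ha hb hab
    have := hconv hx hy ha hb hab
    simp only [mem_preimage] at this ⊢
    convert this using 1
    ext
    · simp only [Prod.fst_add, Prod.smul_fst, smul_eq_mul]
      linear_combination -hab
    · simp
  obtain ⟨β, hβ, hw⟩ := exists_right_support hconv h1 h11 hξ1 hξ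
  obtain ⟨β', hβ', hw'⟩ := exists_right_support hconv' (by simpa using h0)
    (by rw [hint]; simpa using h01) (ξ := 1 - ξ) (by linarith) (by rw [hint]; simpa using hξ)
  replace hw' : ∀ x ∈ L, 0 ≤ x.1 + β' * (1 - x.2) := fun x hx => by
    have := hw' (1 - x.1, x.2) (by simpa using hx)
    simpa using this
  rcases hβ'.eq_or_lt with hβ'0 | hβ'0
  · subst hβ'0
    have hx : ∀ x ∈ L, 0 ≤ x.1 := fun x hx => by simpa using hw' x hx
    exact hF.one_le_of_quadrant hcut hnonneg hf hcomp hx hy hβ hw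
      fun h => hT ⟨h.1, h.2.1, fun x hx' => ⟨hx x hx', h.2.2 x hx'⟩⟩
  rcases hβ.eq_or_lt with hβ0 | hβ0
  · subst hβ0
    have hx : ∀ x ∈ L, x.1 ≤ 1 := fun x hx => by simpa using hw x hx
    have key := hF.map_reflect.one_le_of_quadrant hcut.map_reflect
      (by simpa [Filter.eventually_map] using hnonneg) (by rw [hint]; simpa using hf)
      (reflectHomeo.isCompact_preimage.2 hcomp)
      (fun x hx' => by have := hx _ hx'; simp only at this; linarith)
      (fun x hx' => hy (1 - x.1, x.2) hx') hβ'0.le (fun x hx' => hw' _ hx') ?_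
    · simpa [Filter.eventually_map] using key
    · rintro ⟨h2, h3, h4⟩
      refine hT' ⟨?_, ?_, fun x hx' => ⟨hx x hx', ?_⟩⟩
      · have e : ((-1 : ℝ), (0 : ℝ)) = (1 - 2, 0) := by norm_num
        rw [e]
        exact h2
      · have e : ((1 : ℝ), (2 : ℝ)) = (1 - 0, 2) := by norm_num
        rw [e]
        exact h3
      · have := h4 (1 - x.1, x.2) (by simpa using hx')
        simp only at this
        linarith
  obtain ⟨c, Y, hc, hY, hup⟩ := hcut.exists_height_slope hf hcomp
  obtain ⟨M, hM, hbase⟩ := hcut.exists_slope (B := 0) (C := -1) (m := 0) hf (by simp)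
    (fun x hx' => by linarith [hy x hx'])
  obtain ⟨e, he, hright⟩ := hcut.exists_slope (B := 1) (C := β) (m := 1 + β) hf (by simp)
    (fun x hx' => by linarith [hw x hx'])
  obtain ⟨e', he', hleft⟩ := hcut.exists_slope (B := -1) (C := β') (m := β') hf (by simp)
    (fun x hx' => by linarith [hw' x hx'])
  refine hF.one_le_of_pos_slopes hM.le he he' hβ0 hβ'0 hc hY hnonneg ?_ hup ?_ ?_
  · filter_upwards [hbase] with t ht
    linarith
  · filter_upwards [hright] with t ht
    linarith
  · filter_upwards [hleft] with t ht
    linarith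

end

/-- The filter of neighbourhoods at infinity of the sequence of split closures. -/
def closureFilter (k : ℕ) (r : Fin k → Pt) (f : Pt) : Filter (Pt × (Fin k → ℝ)) where
  sets := {S | ∀ᶠ n in Filter.atTop, closures k r f n ⊆ S}
  univ_sets := by simp
  sets_of_superset h hs := h.mono fun _ hn => hn.trans hs
  inter_sets h h' := by
    filter_upwards [h, h'] with n a b using subset_inter a b

section

variable {k : ℕ} {r : Fin k → Pt} {f : Pt} {α : Fin k → ℝ}

lemma eventually_closureFilter {Φ : Pt × (Fin k → ℝ) → Prop} :
    (∀ᶠ p in closureFilter k r f, Φ p) ↔ ∃ N, ∀ n ≥ N, ∀ p ∈ closures k r f n, Φ p :=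
  Filter.eventually_atTop

lemma splitRank_ne_top {γ : ℝ} (h : ∀ᶠ p in closureFilter k r f, γ ≤ ∑ i, α i * p.2 i) :
    splitRank k r f α γ ≠ ⊤ := by
  obtain ⟨N, hN⟩ := eventually_closureFilter.1 h
  exact ne_top_of_le_ne_top (ENat.natCast_ne_top N) (sInf_le ⟨N, rfl, hN N le_rfl⟩)

lemma splitClosure_subset {C H : Set (Pt × (Fin k → ℝ))} (hH : Convex ℝ H) (π : Fin 2 → ℤ)
    (π₀ : ℤ) (h : ∀ p ∈ C, (∑ j, (π j : ℝ) * p.1 j ≤ π₀ ∨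
      (π₀ : ℝ) + 1 ≤ ∑ j, (π j : ℝ) * p.1 j) → p ∈ H) :
    splitClosure k C ⊆ H := by
  refine (iInter₂_subset π π₀).trans (convexHull_min (union_subset ?_ ?_) hH)
  · exact fun p hp => h p hp.1 (Or.inl hp.2)
  · exact fun p hp => h p hp.1 (Or.inr hp.2)

lemma closures_subset {H : Set (Pt × (Fin k → ℝ))} (hH : Convex ℝ H)
    (h : relaxP k r f ⊆ H) (n : ℕ) : closures k r f n ⊆ H := by
  induction n with
  | zero => exact h
  | succ n ih => exact splitClosure_subset hH 0 0 fun p hp _ => ih hp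

lemma eventually_of_relaxP {H : Set (Pt × (Fin k → ℝ))} (hH : Convex ℝ H)
    (h : relaxP k r f ⊆ H) : ∀ᶠ p in closureFilter k r f, p ∈ H :=
  Filter.Eventually.of_forall (f := Filter.atTop) (closures_subset hH h)

lemma convex_setOf_affine_le (A b c : ℝ) :
    Convex ℝ {p : Pt × (Fin k → ℝ) | A + b * p.1 0 + c * p.1 1 ≤ ∑ i, α i * p.2 i} := by
  intro p hp q hq s t hs ht hst
  simp only [mem_ofPred_eq] at hp hq ⊢
  have : ∑ i, α i * (s • p + t • q).2 i = s * ∑ i, α i * p.2 i + t * ∑ i, α i * q.2 i := by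
    simp only [Finset.mul_sum, ← Finset.sum_add_distrib]
    refine Finset.sum_congr rfl fun i _ => ?_
    simp only [Prod.snd_add, Prod.smul_snd, Pi.add_apply, Pi.smul_apply, smul_eq_mul]
    ring
  rw [this]
  simp only [Prod.fst_add, Prod.smul_fst, Pi.add_apply, Pi.smul_apply, smul_eq_mul]
  have h1 := mul_le_mul_of_nonneg_left hp hs
  have h2 := mul_le_mul_of_nonneg_left hq ht
  have h3 : A = s * A + t * A := by rw [← add_mul, hst, one_mul]
  linarith

lemma eventually_of_split {A b c : ℝ} (π : Fin 2 → ℤ) (π₀ : ℤ)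
    (h : ∀ᶠ p in closureFilter k r f, (∑ j, (π j : ℝ) * p.1 j ≤ π₀ ∨
      (π₀ : ℝ) + 1 ≤ ∑ j, (π j : ℝ) * p.1 j) →
        A + b * p.1 0 + c * p.1 1 ≤ ∑ i, α i * p.2 i) :
    ∀ᶠ p in closureFilter k r f, A + b * p.1 0 + c * p.1 1 ≤ ∑ i, α i * p.2 i := by
  rw [eventually_closureFilter] at h ⊢
  obtain ⟨N, hN⟩ := h
  refine ⟨N + 1, fun n hn => ?_⟩
  obtain ⟨n, rfl⟩ : ∃ m, n = m + 1 := ⟨n - 1, by omega⟩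
  exact splitClosure_subset (convex_setOf_affine_le A b c) π π₀ (hN n (by omega))

lemma zero_mem_coneGen (S : Set Pt) : (0 : Pt) ∈ coneGen S :=
  ⟨0, Fin.elim0, Fin.elim0, fun j => j.elim0, fun j => j.elim0, by simp⟩

lemma smul_mem_coneGen {S : Set Pt} {v : Pt} (hv : v ∈ S) {c : ℝ} (hc : 0 ≤ c) :
    c • v ∈ coneGen S :=
  ⟨1, fun _ => c, fun _ => v, fun _ => hc, fun _ => hv, by simp⟩

lemma add_inv_smul_mem_inducedSet {i : Fin k} (hi : 0 < α i) :
    f + (α i)⁻¹ • r i ∈ inducedSet k r f α :=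
  ⟨_, subset_convexHull ℝ _ (Or.inr ⟨i, hi, rfl⟩), 0, zero_mem_coneGen _, by simp⟩

lemma add_smul_mem_inducedSet {i : Fin k} (hi : α i = 0) {c : ℝ} (hc : 0 ≤ c) :
    f + c • r i ∈ inducedSet k r f α :=
  ⟨f, subset_convexHull ℝ _ (Or.inl rfl), c • r i,
    smul_mem_coneGen (S := {x | ∃ i, α i = 0 ∧ x = r i}) ⟨i, hi, rfl⟩ hc, rfl⟩

lemma intersection_cut (hα : ∀ i, 0 ≤ α i) (ℓ : Pt →ₗ[ℝ] ℝ) {m : ℝ}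
    (hL : ∀ x ∈ inducedSet k r f α, ℓ x ≤ m) (hf : ℓ f < m) {p : Pt × (Fin k → ℝ)}
    (hp : p ∈ relaxP k r f) : 1 + (ℓ p.1 - m) / (m - ℓ f) ≤ ∑ i, α i * p.2 i := by
  have hpos : 0 < m - ℓ f := by linarith
  have hr : ∀ i, ℓ (r i) ≤ α i * (m - ℓ f) := by
    intro i
    rcases (hα i).eq_or_lt with h | h
    · rw [← h, zero_mul]
      by_contra! hneg
      have := hL _ (add_smul_mem_inducedSet (f := f) (r := r) h.symm
        (c := (m - ℓ f + 1) / ℓ (r i)) (by positivity))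
      rw [map_add, map_smul, smul_eq_mul, div_mul_cancel₀ _ hneg.ne'] at this
      linarith
    · have := hL _ (add_inv_smul_mem_inducedSet (f := f) (r := r) h)
      rw [map_add, map_smul, smul_eq_mul] at this
      rw [← div_le_iff₀' h, div_eq_inv_mul]
      linarith
  have key : ℓ p.1 - ℓ f ≤ (∑ i, α i * p.2 i) * (m - ℓ f) := by
    rw [hp.2, map_add, add_sub_cancel_left, map_sum, Finset.sum_mul]
    refine Finset.sum_le_sum fun i _ => ?_
    rw [map_smul, smul_eq_mul]
    have := mul_le_mul_of_nonneg_left (hr i) (hp.1 i)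
    linarith
  have : 1 + (ℓ p.1 - m) / (m - ℓ f) = (ℓ p.1 - ℓ f) / (m - ℓ f) := by
    field_simp
    ring
  rw [this]
  exact (div_le_iff₀ hpos).2 key

lemma exists_rep_of_mem_inducedSet {x : Pt} (hx : x ∈ inducedSet k r f α) :
    ∃ s : Fin k → ℝ, (∀ i, 0 ≤ s i) ∧ ∑ i, α i * s i ≤ 1 ∧ x = f + ∑ i, s i • r i := by
  classical
  obtain ⟨y, hy, z, ⟨n, c, v, hc, hv, rfl⟩, rfl⟩ := hx
  have hy' : y ∈ {y | ∃ s : Fin k → ℝ, (∀ i, 0 ≤ s i) ∧ ∑ i, α i * s i ≤ 1 ∧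
      y = f + ∑ i, s i • r i} := by
    refine convexHull_min ?_ ?_ hy
    · rintro y (rfl | ⟨i, hi, rfl⟩)
      · exact ⟨0, by simp, by simp, by simp⟩
      · refine ⟨Pi.single i (α i)⁻¹, fun j => ?_, ?_, ?_⟩
        · by_cases h : j = i
          · subst h
            simpa using hi.le
          · simp [h]
        · simp [Pi.single_apply, hi.ne']
        · simp [Pi.single_apply, ite_smul]
    · rintro _ ⟨s, hs, hs1, rfl⟩ _ ⟨t, ht, ht1, rfl⟩ a b ha hb hab
      refine ⟨a • s + b • t, fun i => ?_, ?_, ?_⟩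
      · have := mul_nonneg ha (hs i)
        have := mul_nonneg hb (ht i)
        simpa using by linarith
      · have : ∑ i, α i * (a • s + b • t) i = a * ∑ i, α i * s i + b * ∑ i, α i * t i := by
          simp only [Finset.mul_sum, ← Finset.sum_add_distrib]
          refine Finset.sum_congr rfl fun i _ => ?_
          simp only [Pi.add_apply, Pi.smul_apply, smul_eq_mul]
          ring
        rw [this]
        nlinarith
      · have hf : f = a • f + b • f := by rw [← add_smul, hab, one_smul]
        simp only [Pi.add_apply, Pi.smul_apply, smul_eq_mul, add_smul, mul_smul,
          Finset.sum_add_distrib, ← Finset.smul_sum, smul_add]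
        conv_rhs => rw [hf]
        abel
  obtain ⟨s, hs, hs1, rfl⟩ := hy'
  choose g hg0 hgv using hv
  refine ⟨fun i => s i + ∑ j, if g j = i then c j else 0, fun i => ?_, ?_, ?_⟩
  · exact add_nonneg (hs i) (Finset.sum_nonneg fun j _ => by split_ifs <;> simp [hc])
  · have : ∀ i, α i * (s i + ∑ j, if g j = i then c j else 0) = α i * s i := by
      intro i
      rw [mul_add, Finset.mul_sum, Finset.sum_eq_zero (fun j _ => ?_), add_zero]
      split_ifs with h
      · rw [← h, hg0, zero_mul]
      · simp
    simpa [this] using hs1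
  · simp only [add_smul, Finset.sum_add_distrib, Finset.sum_smul]
    rw [Finset.sum_comm (s := Finset.univ (α := Fin k))]
    simp [ite_smul, hgv, add_assoc]

lemma ValidIneq.latticeFree (hvalid : ValidIneq k r f α 1) :
    LatticeFree (inducedSet k r f α) := by
  intro x hx hint
  have hcont : Filter.Tendsto (fun δ : ℝ => f + (1 + δ) • (x - f)) (nhdsWithin 0 (Ioi 0))
      (nhds x) := by
    have : Continuous fun δ : ℝ => f + (1 + δ) • (x - f) := by fun_prop
    have h := this.tendsto 0
    simp only [add_zero, one_smul, add_sub_cancel] at h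
    exact h.mono_left nhdsWithin_le_nhds
  obtain ⟨δ, hδ, hδ0⟩ := ((hcont.eventually (mem_interior_iff_mem_nhds.1 hx)).and
    self_mem_nhdsWithin).exists
  have hδ1 : (0 : ℝ) < 1 + δ := by
    have : (0 : ℝ) < δ := hδ0
    linarith
  obtain ⟨s, hs, hs1, hxs⟩ := exists_rep_of_mem_inducedSet hδ
  have h := hvalid (x, (1 + δ)⁻¹ • s) ⟨hint, fun i => ?_, ?_⟩
  · have : ∑ i, α i * ((1 + δ)⁻¹ • s) i = (1 + δ)⁻¹ * ∑ i, α i * s i := by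
      rw [Finset.mul_sum]
      refine Finset.sum_congr rfl fun i _ => ?_
      simp only [Pi.smul_apply, smul_eq_mul]
      ring
    simp only at h
    rw [this, ← div_eq_inv_mul, le_div_iff₀ hδ1] at h
    have : (0 : ℝ) < δ := hδ0
    linarith
  · exact mul_nonneg (inv_nonneg.2 hδ1.le) (hs i)
  · have h1 : (1 + δ) • (x - f) = ∑ i, s i • r i := add_left_cancel hxs
    have h2 : x - f = (1 + δ)⁻¹ • ∑ i, s i • r i := by
      rw [← h1, smul_smul, inv_mul_cancel₀ hδ1.ne', one_smul]
    simp only [Pi.smul_apply, smul_eq_mul, mul_smul, ← Finset.smul_sum]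
    rw [← h2]
    abel

end

/-- The integral affine chart of the plane with linear part `(p, q; s, t)` of determinant
`δ = ±1`, and translation part `(c, d)`. -/
def latticeChart (p q s t c d δ : ℤ) (hδ : (p * t - q * s) * δ = 1) : Pt ≃ₜ ℝ × ℝ where
  toFun x := (p * x 0 + q * x 1 + c, s * x 0 + t * x 1 + d)
  invFun y := ![δ * (t * (y.1 - c) - q * (y.2 - d)), δ * (p * (y.2 - d) - s * (y.1 - c))]
  left_inv x := by
    have h : ((p : ℝ) * t - q * s) * δ = 1 := by exact_mod_cast hδ
    ext j
    fin_cases j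
    · simp only [Fin.zero_eta, Matrix.cons_val_zero]
      linear_combination x 0 * h
    · simp only [Fin.mk_one, Matrix.cons_val_one, Matrix.cons_val_fin_one]
      linear_combination x 1 * h
  right_inv y := by
    have h : ((p : ℝ) * t - q * s) * δ = 1 := by exact_mod_cast hδ
    ext
    · simp only [Matrix.cons_val_zero, Matrix.cons_val_one, Matrix.cons_val_fin_one]
      linear_combination (y.1 - c) * h
    · simp only [Matrix.cons_val_zero, Matrix.cons_val_one, Matrix.cons_val_fin_one]
      linear_combination (y.2 - d) * h
  continuous_toFun := by fun_prop
  continuous_invFun := by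
    refine continuous_pi fun j => ?_
    fin_cases j
    · simp only [Fin.zero_eta, Matrix.cons_val_zero]
      fun_prop
    · simp only [Fin.mk_one, Matrix.cons_val_one, Matrix.cons_val_fin_one]
      fun_prop

section

variable {p q s t c d δ : ℤ} {hδ : (p * t - q * s) * δ = 1}

local notation "φ" => latticeChart p q s t c d δ hδ

lemma latticeChart_apply (x : Pt) :
    φ x = (p * x 0 + q * x 1 + c, s * x 0 + t * x 1 + d) := rfl

lemma latticeChart_symm_apply (y : ℝ × ℝ) :
    (φ).symm y =
      ![δ * (t * (y.1 - c) - q * (y.2 - d)), δ * (p * (y.2 - d) - s * (y.1 - c))] := rfl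

lemma isIntPt_latticeChart_symm (m n : ℤ) : IsIntPt ((φ).symm (m, n)) := by
  rw [latticeChart_symm_apply]
  intro j
  fin_cases j
  · exact ⟨δ * (t * (m - c) - q * (n - d)), by simp⟩
  · exact ⟨δ * (p * (n - d) - s * (m - c)), by simp⟩

lemma latticeChart_combo {a b : ℝ} (hab : a + b = 1) (x y : Pt) :
    φ (a • x + b • y) = a • φ x + b • φ y := by
  simp only [latticeChart_apply, Pi.add_apply, Pi.smul_apply, smul_eq_mul, Prod.smul_mk,
    Prod.mk_add_mk, Prod.mk.injEq]
  constructor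
  · linear_combination -(c : ℝ) * hab
  · linear_combination -(d : ℝ) * hab

lemma latticeChart_symm_combo {a b : ℝ} (hab : a + b = 1) (x y : ℝ × ℝ) :
    (φ).symm (a • x + b • y) = a • (φ).symm x + b • (φ).symm y := by
  rw [Homeomorph.symm_apply_eq, latticeChart_combo hab, Homeomorph.apply_symm_apply,
    Homeomorph.apply_symm_apply]

lemma convex_preimage_latticeChart_symm {L : Set Pt} (hL : Convex ℝ L) :
    Convex ℝ ((φ).symm ⁻¹' L) := by
  intro x hx y hy a b ha hb hab
  rw [mem_preimage, latticeChart_symm_combo hab]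
  exact hL hx hy ha hb hab

variable {k : ℕ} {r : Fin k → Pt} {f : Pt} {α : Fin k → ℝ}

/-- The filter of the split closures, in the coordinates of a lattice chart and with the rays
aggregated to the left-hand side of the inequality. -/
def chartFilter (k : ℕ) (r : Fin k → Pt) (f : Pt) (α : Fin k → ℝ) (e : Pt ≃ₜ ℝ × ℝ) :
    Filter (ℝ × ℝ × ℝ) :=
  (closureFilter k r f).map fun p => ((e p.1).1, (e p.1).2, ∑ i, α i * p.2 i)

lemma splitClosed_chartFilter : SplitClosed (chartFilter k r f α (φ)) := by
  intro a b m A B C h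
  simp only [chartFilter, Filter.eventually_map, latticeChart_apply] at h ⊢
  have := eventually_of_split (k := k) (r := r) (f := f) (α := α) (A := A + B * c + C * d)
    (b := B * p + C * s) (c := B * q + C * t) ![a * p + b * s, a * q + b * t]
    (m - a * c - b * d) (by
      filter_upwards [h] with z hz hcase
      have := hz (by
        simp only [Fin.sum_univ_two, Matrix.cons_val_zero, Matrix.cons_val_one,
          Matrix.cons_val_fin_one] at hcase
        push_cast at hcase
        exact hcase.imp (fun h => by linarith) fun h => by linarith)
      linarith)
  filter_upwards [this] with z hz
  linarith

lemma hasCuts_chartFilter (hα : ∀ i, 0 ≤ α i) :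
    HasCuts (chartFilter k r f α (φ)) ((φ).symm ⁻¹' inducedSet k r f α) (φ f) := by
  intro B C m hL hf
  rw [chartFilter, Filter.eventually_map]
  set ℓ : Pt →ₗ[ℝ] ℝ := (B * p + C * s) • LinearMap.proj 0 + (B * q + C * t) • LinearMap.proj 1
    with hℓ
  have hφ : ∀ x, B * (φ x).1 + C * (φ x).2 = ℓ x + (B * c + C * d) := by
    intro x
    simp only [latticeChart_apply, hℓ, LinearMap.add_apply, LinearMap.smul_apply,
      LinearMap.proj_apply, smul_eq_mul]
    ring
  have hcut : relaxP k r f ⊆ {z | 1 + (ℓ z.1 - (m - (B * c + C * d))) /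
      (m - (B * c + C * d) - ℓ f) ≤ ∑ i, α i * z.2 i} := fun z hz =>
    intersection_cut hα ℓ (fun x hx => by
      have := hL (φ x) (by simpa using hx)
      rw [hφ] at this
      linarith) (by rw [hφ] at hf; linarith) hz
  have hset : {z : Pt × (Fin k → ℝ) | 1 + (ℓ z.1 - (m - (B * c + C * d))) /
      (m - (B * c + C * d) - ℓ f) ≤ ∑ i, α i * z.2 i} =
      {z | (1 - (m - (B * c + C * d)) / (m - (B * c + C * d) - ℓ f)) +
        (B * p + C * s) / (m - (B * c + C * d) - ℓ f) * z.1 0 +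
        (B * q + C * t) / (m - (B * c + C * d) - ℓ f) * z.1 1 ≤ ∑ i, α i * z.2 i} := by
    ext z
    simp only [mem_ofPred_eq]
    have : ℓ z.1 = (B * p + C * s) * z.1 0 + (B * q + C * t) * z.1 1 := rfl
    rw [this]
    ring_nf
  have := eventually_of_relaxP (hset ▸ convex_setOf_affine_le _ _ _) hcut
  filter_upwards [this] with z hz
  rw [hφ, hφ]
  have hz' : 1 + (ℓ z.1 - (m - (B * c + C * d))) / (m - (B * c + C * d) - ℓ f) ≤
    ∑ i, α i * z.2 i := hz
  convert hz' using 3 <;> ring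

lemma chartFilter_nonneg (hα : ∀ i, 0 ≤ α i) :
    ∀ᶠ z in chartFilter k r f α (φ), 0 ≤ z.2.2 := by
  rw [chartFilter, Filter.eventually_map]
  have := eventually_of_relaxP (k := k) (r := r) (f := f)
    (convex_setOf_affine_le (α := α) 0 0 0) fun z hz => by
      simpa using Finset.sum_nonneg fun i _ => mul_nonneg (hα i) (hz.1 i)
  filter_upwards [this] with z hz
  simpa using hz

lemma eventually_one_le_of_flat (hα : ∀ i, 0 ≤ α i) (hfint : f ∈ interior (inducedSet k r f α))
    (h0 : ∀ x ∈ inducedSet k r f α, 0 ≤ (φ x).2) (h1 : ∀ x ∈ inducedSet k r f α, (φ x).2 ≤ 1) :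
    ∀ᶠ z in closureFilter k r f, 1 ≤ ∑ i, α i * z.2 i := by
  have hf' : φ f ∈ interior ((φ).symm ⁻¹' inducedSet k r f α) := by
    rw [← (φ).symm.preimage_interior]
    simpa using hfint
  have hcut := hasCuts_chartFilter (p := p) (q := q) (s := s) (t := t) (c := c) (d := d)
    (hδ := hδ) (r := r) (f := f) hα
  obtain ⟨e, he, hlow⟩ := hcut.exists_slope (B := 0) (C := -1) (m := 0) hf' (by simp)
    fun y hy => by
      have := h0 _ hy
      rw [Homeomorph.apply_symm_apply] at this
      linarith
  obtain ⟨e', he', hup⟩ := hcut.exists_slope (B := 0) (C := 1) (m := 1) hf' (by simp)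
    fun y hy => by
      have := h1 _ hy
      rw [Homeomorph.apply_symm_apply] at this
      linarith
  have := splitClosed_chartFilter (p := p) (q := q) (s := s) (t := t) (c := c) (d := d)
    (hδ := hδ) (r := r) (f := f) (α := α) 0 1 0 1 0 0 (by
      filter_upwards [hlow, hup] with z h2 h3 hcase
      simp only [Int.cast_zero, Int.cast_one, zero_mul, one_mul, zero_add, add_zero] at hcase ⊢
      rcases hcase with h | h <;> nlinarith)
  rw [chartFilter, Filter.eventually_map] at this
  filter_upwards [this] with z hz
  simpa using hz

/-- Any two extreme points of a triangle whose vertices are lattice points congruent modulo `2`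
have a lattice point between them. -/
lemma exists_isIntPt_mem_openSegment {L : Set Pt} {w : Fin 3 → Pt}
    (hw : ∀ i j, IsIntPt ((1 / 2 : ℝ) • w i + (1 / 2 : ℝ) • w j))
    (hL : L ⊆ convexHull ℝ (range w)) (hwL : ∀ i, w i ∈ L)
    {x y : Pt} (hx : x ∈ extremePoints ℝ L) (hy : y ∈ extremePoints ℝ L) (hconv : Convex ℝ L) :
    ∃ z ∈ openSegment ℝ x y, IsIntPt z := by
  obtain rfl : L = convexHull ℝ (range w) :=
    hL.antisymm (convexHull_min (range_subset_iff.2 hwL) hconv)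
  obtain ⟨i, rfl⟩ := extremePoints_convexHull_subset hx
  obtain ⟨j, rfl⟩ := extremePoints_convexHull_subset hy
  exact ⟨_, ⟨1 / 2, 1 / 2, by norm_num, by norm_num, by norm_num, rfl⟩, hw i j⟩

lemma exists_isIntPt_of_subset_triangle {L : Set Pt} (hconv : Convex ℝ L) (m n : ℤ)
    (a b : Fin 3 → ℤ)
    (hmem : ∀ i, ((m + 2 * a i : ℝ), (n + 2 * b i : ℝ)) ∈ (φ).symm ⁻¹' L)
    (hsub : ∀ y ∈ (φ).symm ⁻¹' L, ∃ ω : Fin 3 → ℝ, (∀ i, 0 ≤ ω i) ∧ ∑ i, ω i = 1 ∧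
      y = ∑ i, ω i • ((m + 2 * a i : ℝ), (n + 2 * b i : ℝ)))
    {x y : Pt} (hx : x ∈ extremePoints ℝ L) (hy : y ∈ extremePoints ℝ L) :
    ∃ z ∈ openSegment ℝ x y, IsIntPt z := by
  refine exists_isIntPt_mem_openSegment
    (w := fun i => (φ).symm ((m + 2 * a i : ℝ), (n + 2 * b i : ℝ))) (fun i j => ?_) ?_ hmem
    hx hy hconv
  · rw [← latticeChart_symm_combo (by norm_num)]
    have := isIntPt_latticeChart_symm (p := p) (q := q) (s := s) (t := t) (c := c) (d := d)
      (hδ := hδ) (m + a i + a j) (n + b i + b j)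
    convert this using 2
    simp only [Prod.smul_mk, Prod.mk_add_mk, smul_eq_mul, Prod.mk.injEq]
    push_cast
    constructor <;> ring
  · intro z hz
    obtain ⟨ω, hω0, hω1, hω⟩ := hsub (φ z)
      (by rw [mem_preimage, Homeomorph.symm_apply_apply]; exact hz)
    have : z = ∑ i, ω i • (φ).symm ((m + 2 * a i : ℝ), (n + 2 * b i : ℝ)) := by
      rw [← (φ).symm_apply_apply z, hω]
      simp only [Fin.sum_univ_three] at hω1 ⊢
      ext j
      fin_cases j
      · simp [latticeChart_symm_apply]
        linear_combination (δ * (t * c - q * d) : ℝ) * hω1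
      · simp [latticeChart_symm_apply]
        linear_combination (δ * (p * d - s * c) : ℝ) * hω1
    rw [this]
    exact (convex_convexHull ℝ _).sum_mem (fun i _ => hω0 i) hω1
      fun i _ => subset_convexHull ℝ _ (mem_range_self i)

lemma eventually_one_le_of_tall (hα : ∀ i, 0 ≤ α i) (hfint : f ∈ interior (inducedSet k r f α))
    (hcomp : IsCompact (inducedSet k r f α)) (hconv : Convex ℝ (inducedSet k r f α))
    (hfree : LatticeFree (inducedSet k r f α))
    {x y : Pt} (hx : x ∈ extremePoints ℝ (inducedSet k r f α))
    (hy : y ∈ extremePoints ℝ (inducedSet k r f α)) (hxy : ∀ z ∈ openSegment ℝ x y, ¬ IsIntPt z)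
    (hpos : ∀ x ∈ inducedSet k r f α, 0 ≤ (φ x).2)
    {z₀ z₁ z : Pt} (hz₀ : z₀ ∈ inducedSet k r f α) (hz₁ : z₁ ∈ inducedSet k r f α)
    (hz : z ∈ interior (inducedSet k r f α)) (hφ₀ : φ z₀ = (0, 0)) (hφ₁ : φ z₁ = (1, 0))
    {ξ : ℝ} (hξ0 : 0 < ξ) (hξ1 : ξ < 1) (hφz : φ z = (ξ, 1)) :
    ∀ᶠ z in closureFilter k r f, 1 ≤ ∑ i, α i * z.2 i := by
  have hint : interior ((φ).symm ⁻¹' inducedSet k r f α) =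
      (φ).symm ⁻¹' interior (inducedSet k r f α) := ((φ).symm.preimage_interior _).symm
  have hmem : ∀ {w : Pt} {v : ℝ × ℝ} {S : Set Pt}, w ∈ S → φ w = v → v ∈ (φ).symm ⁻¹' S := by
    rintro w _ S hw rfl
    simpa using hw
  have hlat : ∀ m n : ℤ, ((m : ℝ), (n : ℝ)) ∉ interior ((φ).symm ⁻¹' inducedSet k r f α) := by
    intro m n h
    rw [hint] at h
    exact hfree _ h (isIntPt_latticeChart_symm m n)
  have hpos' : ∀ v ∈ (φ).symm ⁻¹' inducedSet k r f α, 0 ≤ v.2 := fun v hv => by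
    have := hpos _ hv
    rwa [Homeomorph.apply_symm_apply] at this
  have key := splitClosed_chartFilter.one_le_of_base (hasCuts_chartFilter hα)
    (chartFilter_nonneg (hδ := hδ) (c := c) (d := d) hα) (by rw [hint]; simpa using hfint)
    ((φ).symm.isCompact_preimage.2 hcomp) (convex_preimage_latticeChart_symm hconv)
    hpos' (hmem hz₀ hφ₀) (hmem hz₁ hφ₁) (by simpa using hlat 0 1) (by simpa using hlat 1 1)
    hξ0 hξ1 (by rw [hint]; exact hmem hz hφz) ?_ ?_
  · rw [chartFilter, Filter.eventually_map] at key
    exact key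
  · rintro ⟨h2, h3, h4⟩
    obtain ⟨w, hw, hwi⟩ := exists_isIntPt_of_subset_triangle (hδ := hδ) (c := c) (d := d) hconv
      0 0 ![0, 1, 0] ![0, 0, 1] (fun i => by
        fin_cases i
        · simpa using hmem hz₀ hφ₀
        · simpa using h2
        · simpa using h3) (fun v hv => ⟨![1 - v.1 / 2 - v.2 / 2, v.1 / 2, v.2 / 2], fun i => by
          have := h4 v hv
          have := hpos' v hv
          fin_cases i <;> simp <;> linarith, by simp [Fin.sum_univ_three]; ring, by
          ext <;> simp [Fin.sum_univ_three]⟩) hx hy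
    exact hxy w hw hwi
  · rintro ⟨h2, h3, h4⟩
    obtain ⟨w, hw, hwi⟩ := exists_isIntPt_of_subset_triangle (hδ := hδ) (c := c) (d := d) hconv
      1 0 ![0, -1, 0] ![0, 0, 1] (fun i => by
        fin_cases i
        · simpa using hmem hz₁ hφ₁
        · norm_num
          exact h2
        · simpa using h3) (fun v hv => ⟨![(1 + v.1 - v.2) / 2, (1 - v.1) / 2, v.2 / 2],
          fun i => by
          have := h4 v hv
          have := hpos' v hv
          fin_cases i <;> simp <;> linarith, by simp [Fin.sum_univ_three]; ring, by
          ext <;> simp [Fin.sum_univ_three]; ring⟩) hx hy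
    exact hxy w hw hwi

end

lemma exists_latticeChart_of_ne {z₁ z₂ : Pt} (hne : z₁ ≠ z₂) (h₁ : IsIntPt z₁)
    (h₂ : IsIntPt z₂) :
    ∃ (p q s t c d : ℤ) (hδ : (p * t - q * s) * 1 = 1) (g : ℕ), 0 < g ∧
      latticeChart p q s t c d 1 hδ z₁ = (0, 0) ∧
      latticeChart p q s t c d 1 hδ z₂ = ((g : ℝ), 0) := by
  obtain ⟨i₁, hi₁⟩ := h₁ 0
  obtain ⟨j₁, hj₁⟩ := h₁ 1
  obtain ⟨i₂, hi₂⟩ := h₂ 0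
  obtain ⟨j₂, hj₂⟩ := h₂ 1
  have hg : 0 < Int.gcd (i₂ - i₁) (j₂ - j₁) := by
    rw [Int.gcd_pos_iff]
    by_contra! h
    refine hne (funext fun j => ?_)
    fin_cases j
    · have : i₂ = i₁ := by linarith [h.1]
      simp [hi₁, hi₂, this]
    · have : j₂ = j₁ := by linarith [h.2]
      simp [hj₁, hj₂, this]
  obtain ⟨a, b, hab, ha, hb⟩ := Int.exists_gcd_one hg
  obtain ⟨u, v, huv⟩ := Int.isCoprime_iff_gcd_eq_one.2 hab
  set g := Int.gcd (i₂ - i₁) (j₂ - j₁)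
  have ha' : (i₂ : ℝ) - i₁ = a * g := by exact_mod_cast ha
  have hb' : (j₂ : ℝ) - j₁ = b * g := by exact_mod_cast hb
  have huv' : (u : ℝ) * a + v * b = 1 := by exact_mod_cast huv
  refine ⟨u, v, -b, a, -(u * i₁ + v * j₁), b * i₁ - a * j₁, by linarith, g, hg, ?_, ?_⟩
  · rw [latticeChart_apply, hi₁, hj₁]
    push_cast
    ext <;> ring
  · rw [latticeChart_apply, hi₂, hj₂]
    push_cast
    ext
    · linear_combination (u : ℝ) * ha' + v * hb' + g * huv'
    · linear_combination (a : ℝ) * hb' - b * ha'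

lemma exists_latticeChart_nonneg {L : Set Pt} (hconv : Convex ℝ L) (hint : (interior L).Nonempty)
    {z₁ z₂ : Pt} (hne : z₁ ≠ z₂) (h₁ : IsIntPt z₁) (h₂ : IsIntPt z₂)
    (hL₁ : z₁ ∈ L) (hL₂ : z₂ ∈ L) (hfr : segment ℝ z₁ z₂ ⊆ frontier L) :
    ∃ (p q s t c d δ : ℤ) (hδ : (p * t - q * s) * δ = 1) (g : ℕ), 0 < g ∧
      latticeChart p q s t c d δ hδ z₁ = (0, 0) ∧
      latticeChart p q s t c d δ hδ z₂ = ((g : ℝ), 0) ∧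
      ∀ x ∈ L, 0 ≤ (latticeChart p q s t c d δ hδ x).2 := by
  obtain ⟨p, q, s, t, c, d, hδ, g, hg, e₁, e₂⟩ := exists_latticeChart_of_ne hne h₁ h₂
  set φ := latticeChart p q s t c d 1 hδ with hφ
  have hpre : interior (φ.symm ⁻¹' L) = φ.symm ⁻¹' interior L :=
    (φ.symm.preimage_interior L).symm
  have hmid : φ ((1 / 2 : ℝ) • z₁ + (1 / 2 : ℝ) • z₂) = ((g : ℝ) / 2, 0) := by
    rw [hφ, latticeChart_combo (by norm_num), ← hφ, e₁, e₂]
    ext <;> simp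
    ring
  have hm : ((g : ℝ) / 2, (0 : ℝ)) ∉ interior (φ.symm ⁻¹' L) := by
    rw [hpre, ← hmid, mem_preimage, Homeomorph.symm_apply_apply]
    exact (hfr ⟨1 / 2, 1 / 2, by norm_num, by norm_num, by norm_num, rfl⟩).2
  obtain ⟨w, hw⟩ := hint
  have hw' : φ w ∈ interior (φ.symm ⁻¹' L) := by
    rw [hpre]
    simpa using hw
  obtain ⟨B, C, hle, hlt⟩ := exists_support (convex_preimage_latticeChart_symm hconv) ⟨_, hw'⟩ hm
  have hle' : ∀ x ∈ L, B * (φ x).1 + C * (φ x).2 ≤ B * (g / 2) := fun x hx => by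
    simpa using hle (φ x) (by rwa [mem_preimage, Homeomorph.symm_apply_apply])
  have hB : B * (g : ℝ) = 0 := by
    have i₁ := hle' _ hL₁
    have i₂ := hle' _ hL₂
    simp only [e₁, e₂] at i₁ i₂
    linarith
  have hC : ∀ x ∈ L, C * (φ x).2 ≤ 0 := fun x hx => by
    have hg' : (g : ℝ) ≠ 0 := by positivity
    have hB0 : B = 0 := by simpa [hg'] using hB
    simpa [hB0] using hle' x hx
  rcases lt_trichotomy C 0 with h | h | h
  · exact ⟨p, q, s, t, c, d, 1, hδ, g, hg, e₁, e₂, fun x hx =>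
      nonneg_of_mul_nonpos_right (hC x hx) h⟩
  · have := hlt _ hw'
    have hg' : (g : ℝ) ≠ 0 := by positivity
    have hB0 : B = 0 := by simpa [hg'] using hB
    simp [h, hB0] at this
  · have hsnd : ∀ x, (latticeChart p q (-s) (-t) c (-d) (-1) (by linarith) x) =
        ((φ x).1, -(φ x).2) := by
      intro x
      simp only [hφ, latticeChart_apply]
      push_cast
      ext
      · rfl
      · ring
    refine ⟨p, q, -s, -t, c, -d, -1, by linarith, g, hg, ?_, ?_, fun x hx => ?_⟩
    · rw [hsnd, e₁, neg_zero]
    · rw [hsnd, e₂, neg_zero]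
    · rw [hsnd]
      have := nonpos_of_mul_nonpos_right (hC x hx) h
      simpa using this

lemma exists_mem_interior_snd_eq_one {p q s t c d δ : ℤ} {hδ : (p * t - q * s) * δ = 1}
    {L : Set Pt} (hconv : Convex ℝ L) {w z₀ x : Pt} (hw : w ∈ interior L) (hz₀ : z₀ ∈ L)
    (hx : x ∈ L) (hz₀0 : (latticeChart p q s t c d δ hδ z₀).2 = 0)
    (hpos : ∀ x ∈ L, 0 ≤ (latticeChart p q s t c d δ hδ x).2)
    (hx1 : 1 < (latticeChart p q s t c d δ hδ x).2) :
    ∃ z ∈ interior L, (latticeChart p q s t c d δ hδ z).2 = 1 := by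
  set φ := latticeChart p q s t c d δ hδ with hφ
  have hpre : interior (φ.symm ⁻¹' L) = φ.symm ⁻¹' interior L :=
    (φ.symm.preimage_interior L).symm
  have hw0 : 0 < (φ w).2 := by
    have := lt_of_mem_interior (L := φ.symm ⁻¹' L) (f := φ w) (by rw [hpre]; simpa using hw)
      (B := 0) (C := -1) (m := 0) (by simp) fun y hy => by
        have := hpos _ hy
        rw [Homeomorph.apply_symm_apply] at this
        linarith
    linarith
  have hcombo : ∀ {y : Pt}, y ∈ L → ∀ {a b : ℝ}, 0 < a → 0 ≤ b → a + b = 1 →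
      a * (φ w).2 + b * (φ y).2 = 1 → ∃ z ∈ interior L, (φ z).2 = 1 := by
    intro y hy a b ha hb hab h
    refine ⟨a • w + b • y, hconv.combo_interior_self_mem_interior hw hy ha hb hab, ?_⟩
    rw [hφ, latticeChart_combo hab]
    simpa using h
  rcases le_or_gt 1 (φ w).2 with h | h
  · refine hcombo hz₀ (a := 1 / (φ w).2) (b := 1 - 1 / (φ w).2) (by positivity) ?_ (by ring) ?_
    · rw [sub_nonneg, div_le_one hw0]
      exact h
    · rw [hz₀0, mul_zero, add_zero, div_mul_cancel₀ _ hw0.ne']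
  · have hd : 0 < (φ x).2 - (φ w).2 := by linarith
    refine hcombo hx (a := ((φ x).2 - 1) / ((φ x).2 - (φ w).2))
      (b := (1 - (φ w).2) / ((φ x).2 - (φ w).2)) (div_pos (by linarith) hd)
      (div_nonneg (by linarith) hd.le) ?_ ?_ <;> field_simp <;> ring

section

variable {k : ℕ} {r : Fin k → Pt} {f : Pt} {α : Fin k → ℝ}

/-- A valid inequality whose compact induced set has a side containing two lattice points, and two
extreme points with no lattice point strictly between them, holds on some split closure. -/
theorem eventually_one_le_of_side (hα : ∀ i, 0 ≤ α i) (hvalid : ValidIneq k r f α 1)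
    (hfint : f ∈ interior (inducedSet k r f α))
    (hcomp : IsCompact (inducedSet k r f α)) (hconv : Convex ℝ (inducedSet k r f α))
    {x y : Pt} (hx : x ∈ extremePoints ℝ (inducedSet k r f α))
    (hy : y ∈ extremePoints ℝ (inducedSet k r f α)) (hxy : ∀ z ∈ openSegment ℝ x y, ¬ IsIntPt z)
    {z₁ z₂ : Pt} (hne : z₁ ≠ z₂) (h₁ : IsIntPt z₁) (h₂ : IsIntPt z₂)
    (hfr : segment ℝ z₁ z₂ ⊆ frontier (inducedSet k r f α)) :
    ∀ᶠ z in closureFilter k r f, 1 ≤ ∑ i, α i * z.2 i := by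
  set L := inducedSet k r f α with hL
  have hfrL : frontier L ⊆ L := hcomp.isClosed.frontier_subset
  have hL₁ : z₁ ∈ L := hfrL (hfr (left_mem_segment ℝ _ _))
  have hL₂ : z₂ ∈ L := hfrL (hfr (right_mem_segment ℝ _ _))
  obtain ⟨p, q, s, t, c, d, δ, hδ, g, hg, e₁, e₂, hpos⟩ :=
    exists_latticeChart_nonneg hconv ⟨f, hfint⟩ hne h₁ h₂ hL₁ hL₂ hfr
  by_cases hflat : ∀ x ∈ L, (latticeChart p q s t c d δ hδ x).2 ≤ 1
  · exact eventually_one_le_of_flat hα hfint hpos hflat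
  push Not at hflat
  obtain ⟨y₀, hy₀, hy₀1⟩ := hflat
  obtain ⟨z, hz, hz1⟩ :=
    exists_mem_interior_snd_eq_one hconv hfint hL₁ hy₀ (by rw [e₁]) hpos hy₀1
  have hg' : (1 : ℝ) ≤ g := by exact_mod_cast hg
  have hu : (1 - 1 / g : ℝ) • z₁ + (1 / g : ℝ) • z₂ ∈ L :=
    hconv hL₁ hL₂ (by rw [sub_nonneg, div_le_one (by linarith)]; exact hg') (by positivity)
      (by ring)
  have eu : latticeChart p q s t c d δ hδ ((1 - 1 / g : ℝ) • z₁ + (1 / g : ℝ) • z₂) =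
      (1, 0) := by
    rw [latticeChart_combo (by ring), e₁, e₂]
    ext <;> simp
    field_simp
  have hfree := hvalid.latticeFree
  have hnonint : ∀ n : ℤ, (latticeChart p q s t c d δ hδ z).1 ≠ n := by
    intro n hn
    refine hfree z hz ?_
    have := isIntPt_latticeChart_symm (p := p) (q := q) (s := s) (t := t) (c := c) (d := d)
      (hδ := hδ) n 1
    rwa [← hn, Int.cast_one, ← hz1, Prod.mk.eta, Homeomorph.symm_apply_apply] at this
  set ξ := (latticeChart p q s t c d δ hδ z).1
  have hδ' : ((p - ⌊ξ⌋ * s) * t - (q - ⌊ξ⌋ * t) * s) * δ = 1 := by linear_combination hδ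
  have hshear : ∀ x, latticeChart (p - ⌊ξ⌋ * s) (q - ⌊ξ⌋ * t) s t (c - ⌊ξ⌋ * d) d δ hδ' x =
      ((latticeChart p q s t c d δ hδ x).1 - ⌊ξ⌋ * (latticeChart p q s t c d δ hδ x).2,
        (latticeChart p q s t c d δ hδ x).2) := by
    intro x
    simp only [latticeChart_apply]
    push_cast
    ext
    · ring
    · rfl
  refine eventually_one_le_of_tall (hδ := hδ') hα hfint hcomp hconv hfree hx hy hxy
    (fun x hx => by rw [hshear]; exact hpos x hx) hL₁ hu hz (by rw [hshear, e₁]; simp)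
    (by rw [hshear, eu]; simp) (ξ := ξ - ⌊ξ⌋) ?_ (by linarith [Int.lt_floor_add_one ξ])
    (by rw [hshear, hz1, mul_one])
  exact lt_of_le_of_ne (by linarith [Int.floor_le ξ]) fun h => hnonint ⌊ξ⌋ (by linarith)

end

theorem q1_finite_split_rank (k : ℕ)
    (hk : 1 ≤ k)
    (r : Fin k → Pt) (f : Pt)
    (hr_rat : ∀ i, IsRatPt (r i)) (hr_ne : ∀ i, r i ≠ 0)
    (hf_rat : IsRatPt f) (hf_int : ¬ IsIntPt f)
    (hne : (mixedP k r f).Nonempty)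
    (α : Fin k → ℝ) (hα : ∀ i, 0 ≤ α i)
    (hvalid : ValidIneq k r f α 1)
    (hshape : IsQ1 (inducedSet k r f α))
    (hfint : f ∈ interior (inducedSet k r f α)) :
    splitRank k r f α 1 ≠ ⊤ := by
  obtain ⟨v, ⟨hv, hext, hside⟩, ⟨z₁, z₂, hne', h₁, h₂, hz₁, hz₂⟩, ⟨j, -, -, hj⟩, -⟩ := hshape
  refine splitRank_ne_top (eventually_one_le_of_side hα hvalid hfint ?_ ?_ (hext j) (hext (j + 1))
    hj hne' h₁ h₂ (((convex_segment _ _).segment_subset hz₁ hz₂).trans (hside 0)))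
  · rw [hv]
    exact (finite_range v).isCompact_convexHull ℝ
  · rw [hv]
    exact convex_convexHull ℝ _
end

section
/- Let ∑_{i=1}^k αᵢ sᵢ ≥ 1 with α ∈ ℝ^k, α ≥ 0, be a valid inequality for conv(P(R,f)) whose induced lattice-free set L_α is a quadrilateral of type Q² with f in the interior of L_α. Then the split rank of ∑_{i=1}^k αᵢ sᵢ ≥ 1 with respect to P(R,f)⁰ is finite. -/
open Set Pointwise

/-- A decreasing sequence of sets of triples `(x, y, t)`, each obtained from the previous one by
(at least) all split disjunctions on `(x, y)`. -/
structure SplitSeq (E : ℕ → ℝ → ℝ → ℝ → Prop) : Prop where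
  anti : ∀ j x y t, E (j + 1) x y t → E j x y t
  split : ∀ j (c d e : ℤ) x y t, E (j + 1) x y t → (e : ℝ) < c * x + d * y →
    c * x + d * y < e + 1 → ∃ θ x₁ y₁ t₁ x₂ y₂ t₂ : ℝ, 0 < θ ∧ θ < 1 ∧
      c * x + d * y = e + θ ∧ E j x₁ y₁ t₁ ∧ E j x₂ y₂ t₂ ∧
      c * x₁ + d * y₁ = e ∧ c * x₂ + d * y₂ = e + 1 ∧
      x = (1 - θ) * x₁ + θ * x₂ ∧ y = (1 - θ) * y₁ + θ * y₂ ∧ t = (1 - θ) * t₁ + θ * t₂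

/-- On the region `H`, the level `t` is at least `1 - ε`. -/
def Bound (E : ℕ → ℝ → ℝ → ℝ → Prop) (j : ℕ) (ε : ℝ) (H : ℝ → ℝ → Prop) : Prop :=
  ∀ x y t, E j x y t → H x y → 1 - ε ≤ t

/-- The affine function `c + αx + βy` bounds the level from below. -/
def LowerBound (E : ℕ → ℝ → ℝ → ℝ → Prop) (c α β : ℝ) : Prop :=
  ∀ x y t, E 0 x y t → c + α * x + β * y ≤ t

def Coercive (E : ℕ → ℝ → ℝ → ℝ → Prop) : Prop :=
  ∃ K M : ℝ, 0 < K ∧ 0 ≤ M ∧ ∀ x y t, E 0 x y t → |x| + |y| ≤ K * t + M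

/-- The defect `1 - t` contracts on `H` at every step, and vanishes there once it is small
everywhere. -/
def Good (E : ℕ → ℝ → ℝ → ℝ → Prop) (H : ℝ → ℝ → Prop) : Prop :=
  (∃ ρ : ℝ, 0 ≤ ρ ∧ ρ < 1 ∧ ∀ j ε, 0 ≤ ε → Bound E j ε (fun _ _ => True) →
    Bound E (j + 1) (ρ * ε) H) ∧
  ∃ ε₀ : ℝ, 0 < ε₀ ∧ ∀ j, Bound E j ε₀ (fun _ _ => True) → Bound E (j + 2) 0 H

theorem SplitSeq.zero {E : ℕ → ℝ → ℝ → ℝ → Prop} (hE : SplitSeq E) {j : ℕ} {x y t : ℝ}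
    (h : E j x y t) : E 0 x y t := by
  induction j with
  | zero => exact h
  | succ j ih => exact ih (hE.anti _ _ _ _ h)

theorem SplitSeq.comp {E : ℕ → ℝ → ℝ → ℝ → Prop} (hE : SplitSeq E) (p₀ p₁ u₀ u₁ v₀ v₁ δ : ℤ)
    (hδ : u₀ * v₁ - u₁ * v₀ = δ) (hδ2 : δ * δ = 1) :
    SplitSeq (fun j x y t => E j (p₀ + u₀ * x + v₀ * y) (p₁ + u₁ * x + v₁ * y) t) := by
  have e1 : (u₀ : ℝ) * v₁ - u₁ * v₀ = δ := by exact_mod_cast hδ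
  have e2 : (δ : ℝ) * δ = 1 := by exact_mod_cast hδ2
  refine ⟨fun j x y t h => hE.anti _ _ _ _ h, fun j c d e x y t h h1 h2 => ?_⟩
  have key : ∀ X Y : ℝ, ∃ x y : ℝ, X = p₀ + u₀ * x + v₀ * y ∧ Y = p₁ + u₁ * x + v₁ * y := by
    intro X Y
    refine ⟨δ * (v₁ * (X - p₀) - v₀ * (Y - p₁)), δ * (-u₁ * (X - p₀) + u₀ * (Y - p₁)), ?_, ?_⟩
    · linear_combination -(X - p₀) * e2 - δ * (X - p₀) * e1
    · linear_combination -(Y - p₁) * e2 - δ * (Y - p₁) * e1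
  set c' : ℤ := δ * (c * v₁ - d * u₁) with hc'
  set d' : ℤ := δ * (-c * v₀ + d * u₀) with hd'
  have tr : ∀ x y : ℝ, (c' : ℝ) * (p₀ + u₀ * x + v₀ * y) + d' * (p₁ + u₁ * x + v₁ * y)
      = c * x + d * y + c' * p₀ + d' * p₁ := by
    intro x y
    rw [hc', hd']
    push_cast
    linear_combination (c * x + d * y) * e2 + δ * (c * x + d * y) * e1
  obtain ⟨θ, X₁, Y₁, t₁, X₂, Y₂, t₂, h3, h4, h5, h6, h7, h8, h9, h10, h11, h12⟩ :=
    hE.split j c' d' (e + c' * p₀ + d' * p₁) _ _ t h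
      (by rw [tr]; push_cast; linarith) (by rw [tr]; push_cast; linarith)
  obtain ⟨x₁, y₁, rfl, rfl⟩ := key X₁ Y₁
  obtain ⟨x₂, y₂, rfl, rfl⟩ := key X₂ Y₂
  rw [tr] at h5 h8 h9
  push_cast at h5 h8 h9
  have g1 : (u₀ : ℝ) * (x - ((1 - θ) * x₁ + θ * x₂)) + v₀ * (y - ((1 - θ) * y₁ + θ * y₂)) = 0 := by
    linear_combination h10
  have g2 : (u₁ : ℝ) * (x - ((1 - θ) * x₁ + θ * x₂)) + v₁ * (y - ((1 - θ) * y₁ + θ * y₂)) = 0 := by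
    linear_combination h11
  refine ⟨θ, x₁, y₁, t₁, x₂, y₂, t₂, h3, h4, by linarith, h6, h7, by linarith, by linarith,
    ?_, ?_, h12⟩
  · linear_combination δ * v₁ * g1 - δ * v₀ * g2 - (x - ((1 - θ) * x₁ + θ * x₂)) * e2
      - δ * (x - ((1 - θ) * x₁ + θ * x₂)) * e1
  · linear_combination -δ * u₁ * g1 + δ * u₀ * g2 - (y - ((1 - θ) * y₁ + θ * y₂)) * e2
      - δ * (y - ((1 - θ) * y₁ + θ * y₂)) * e1

theorem Coercive.comp {E : ℕ → ℝ → ℝ → ℝ → Prop} (hE : Coercive E) (p₀ p₁ u₀ u₁ v₀ v₁ δ : ℤ)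
    (hδ : u₀ * v₁ - u₁ * v₀ = δ) (hδ2 : δ * δ = 1) :
    Coercive (fun j x y t => E j (p₀ + u₀ * x + v₀ * y) (p₁ + u₁ * x + v₁ * y) t) := by
  have e1 : (u₀ : ℝ) * v₁ - u₁ * v₀ = δ := by exact_mod_cast hδ
  have e2 : (δ : ℝ) * δ = 1 := by exact_mod_cast hδ2
  obtain ⟨K, M, hK, hM, h⟩ := hE
  set C : ℝ := 1 + |(u₀ : ℝ)| + |(u₁ : ℝ)| + |(v₀ : ℝ)| + |(v₁ : ℝ)| with hC
  have hC0 : 0 < C := by positivity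
  have hδa : |(δ : ℝ)| = 1 := by
    have : |(δ : ℝ)| * |(δ : ℝ)| = 1 := by rw [← abs_mul, e2, abs_one]
    nlinarith [abs_nonneg (δ : ℝ)]
  have bd : ∀ s r A B : ℝ, |δ * (s * A + r * B)| ≤ (|s| + |r|) * (|A| + |B|) := by
    intro s r A B
    rw [abs_mul, hδa, one_mul]
    calc |s * A + r * B| ≤ |s * A| + |r * B| := abs_add_le _ _
      _ = |s| * |A| + |r| * |B| := by rw [abs_mul, abs_mul]
      _ ≤ _ := by nlinarith [abs_nonneg s, abs_nonneg r, abs_nonneg A, abs_nonneg B,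
        mul_nonneg (abs_nonneg s) (abs_nonneg B), mul_nonneg (abs_nonneg r) (abs_nonneg A)]
  refine ⟨C * K, C * (M + |(p₀ : ℝ)| + |(p₁ : ℝ)|), by positivity, by positivity,
    fun x y t ht => ?_⟩
  have h0 := h _ _ _ ht
  set X : ℝ := p₀ + u₀ * x + v₀ * y
  set Y : ℝ := p₁ + u₁ * x + v₁ * y
  have hx : x = δ * (v₁ * (X - p₀) + (-v₀) * (Y - p₁)) := by
    simp only [X, Y]; linear_combination -x * e2 - δ * x * e1
  have hy : y = δ * ((-u₁) * (X - p₀) + u₀ * (Y - p₁)) := by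
    simp only [X, Y]; linear_combination -y * e2 - δ * y * e1
  have b1 := bd v₁ (-v₀) (X - p₀) (Y - p₁)
  have b2 := bd (-u₁) u₀ (X - p₀) (Y - p₁)
  rw [← hx, abs_neg] at b1
  rw [← hy, abs_neg] at b2
  have b3 : |X - p₀| ≤ |X| + |(p₀ : ℝ)| := abs_sub _ _
  have b4 : |Y - p₁| ≤ |Y| + |(p₁ : ℝ)| := abs_sub _ _
  have b5 : |x| + |y| ≤ C * (|X - p₀| + |Y - p₁|) := by
    have : 0 ≤ |X - p₀| + |Y - p₁| := by positivity
    rw [hC]; nlinarith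
  nlinarith [mul_le_mul_of_nonneg_left (show |X - p₀| + |Y - p₁| ≤
    K * t + M + |(p₀ : ℝ)| + |(p₁ : ℝ)| by linarith) hC0.le]

/-- Once the defect is small everywhere, a single split through the corner `(0, 0)` makes the
defect along the ray `x = 0` grow with arbitrarily small slope. -/
theorem corner_slope {E : ℕ → ℝ → ℝ → ℝ → Prop} (hE : SplitSeq E) (hco : Coercive E)
    {a b σ : ℝ} (hb : 0 < b) (hσ : 0 < σ) (hA : LowerBound E 1 (-a) (-b)) :
    ∃ ε₀ : ℝ, 0 < ε₀ ∧ ∀ j, Bound E j ε₀ (fun _ _ => True) →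
      ∀ y t, E (j + 1) 0 y t → 0 ≤ y → 1 - σ * y ≤ t := by
  obtain ⟨K, M, hK, hM, hKM⟩ := hco
  set R : ℝ := 2 * (K + M) with hR
  have hR0 : 0 < R := by positivity
  obtain ⟨η, hη0, hη1, hη2⟩ : ∃ η : ℝ, 0 < η ∧ η * R ≤ σ / 2 ∧ η * (2 * K) ≤ 1 := by
    refine ⟨min (σ / (2 * R)) (1 / (2 * K)), by positivity, ?_, ?_⟩
    · calc _ ≤ σ / (2 * R) * R := by gcongr; exact min_le_left _ _
        _ = σ / 2 := by field_simp
    · calc _ ≤ 1 / (2 * K) * (2 * K) := by gcongr; exact min_le_right _ _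
        _ = 1 := by field_simp
  obtain ⟨n, hn⟩ := exists_nat_gt (b / η)
  have hn0 : 0 < n := by
    have : (0 : ℝ) < n := lt_trans (by positivity) hn
    exact_mod_cast this
  obtain ⟨q, p, hp0, -, hpq⟩ := Real.exists_int_int_abs_mul_sub_le (a / b) hn0
  have hp1 : (1 : ℝ) ≤ p := by exact_mod_cast hp0
  have hp : (0 : ℝ) < p := by linarith
  have hpq' : |a * p - b * q| ≤ η := by
    have : a * p - b * q = b * (p * (a / b) - q) := by field_simp
    rw [this, abs_mul, abs_of_pos hb]
    calc b * |p * (a / b) - q| ≤ b * (1 / (n + 1)) := by gcongr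
      _ ≤ η := by
        rw [mul_one_div, div_le_iff₀ (by positivity)]
        rw [div_lt_iff₀ hη0] at hn
        nlinarith
  refine ⟨σ / (2 * p), by positivity, fun j hj y t ht hy => ?_⟩
  have h0 := hA _ _ _ (hE.zero ht)
  rcases hy.eq_or_lt with rfl | hy
  · simpa using h0
  by_cases hpy : 1 ≤ p * y
  · have h1 := hj _ _ _ (hE.anti _ _ _ _ ht) trivial
    have : σ / (2 * p) ≤ σ * y := by
      rw [div_le_iff₀ (by positivity)]
      nlinarith
    linarith
  push Not at hpy
  obtain ⟨θ, x₁, y₁, t₁, x₂, y₂, t₂, hθ0, hθ1, hθ, H1, H2, l1, l2, ex, ey, et⟩ :=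
    hE.split j q p 0 0 y t ht (by simp; positivity) (by simpa using hpy)
  simp only [mul_zero, zero_add, Int.cast_zero] at hθ l1 l2
  have A1 := hA _ _ _ (hE.zero H1)
  have A2 := hj _ _ _ H2 trivial
  have A3 := hKM _ _ _ (hE.zero H2)
  have d1 : p * (1 - t₁) ≤ η * |x₁| := by
    have : p * (1 - t₁) ≤ (a * p - b * q) * x₁ := by
      have : (a * p - b * q) * x₁ = p * (a * x₁ + b * y₁) := by linear_combination b * (-l1)
      rw [this]
      exact mul_le_mul_of_nonneg_left (by linarith) hp.le
    calc _ ≤ _ := this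
      _ ≤ |(a * p - b * q) * x₁| := le_abs_self _
      _ ≤ _ := by rw [abs_mul]; gcongr
  have hx : (1 - θ) * |x₁| = θ * |x₂| := by
    have := congrArg abs (show (1 - θ) * x₁ = -(θ * x₂) by linarith)
    rwa [abs_neg, abs_mul, abs_mul, abs_of_pos hθ0, abs_of_pos (show 0 < 1 - θ by linarith)]
      at this
  have main : η * |x₂| + p * (1 - t₂) ≤ σ := by
    rcases le_total |x₂| R with h | h
    · have : p * (1 - t₂) ≤ σ / 2 := by
        calc p * (1 - t₂) ≤ p * (σ / (2 * p)) := by gcongr; linarith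
          _ = σ / 2 := by field_simp
      nlinarith
    · have hc : |x₂| ≤ 2 * K * (t₂ - 1) := by
        have := abs_nonneg y₂
        rw [hR] at h; linarith
      have ht2 : 0 ≤ t₂ - 1 := by
        by_contra! hneg
        nlinarith [abs_nonneg x₂]
      have : η * |x₂| ≤ p * (t₂ - 1) := by
        calc η * |x₂| ≤ η * (2 * K * (t₂ - 1)) := by gcongr
          _ = (η * (2 * K)) * (t₂ - 1) := by ring
          _ ≤ 1 * (t₂ - 1) := by gcongr
          _ ≤ p * (t₂ - 1) := by gcongr
      linarith
  have fin : p * (1 - t) ≤ p * (σ * y) := by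
    calc p * (1 - t) = (1 - θ) * (p * (1 - t₁)) + θ * (p * (1 - t₂)) := by rw [et]; ring
      _ ≤ (1 - θ) * (η * |x₁|) + θ * (p * (1 - t₂)) := by
        have : 0 ≤ 1 - θ := by linarith
        gcongr
      _ = θ * (η * |x₂| + p * (1 - t₂)) := by linear_combination η * hx
      _ ≤ θ * σ := by gcongr
      _ = p * (σ * y) := by rw [← hθ]; ring
  have := le_of_mul_le_mul_left fin hp
  linarith

theorem good_below {E : ℕ → ℝ → ℝ → ℝ → Prop} (hE : SplitSeq E) (hco : Coercive E)
    {a b a' b' : ℝ} (ha : 0 < a) (hb : 0 < b) (ha' : 0 < a') (hb' : 0 < b')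
    (hA : LowerBound E 1 (-a) (-b)) (hB : LowerBound E (1 - a') a' (-b')) :
    Good E (fun _ y => y ≤ 0) := by
  set β := min b b' with hβ
  have hβ0 : 0 < β := lt_min hb hb'
  have hβb : β ≤ b := min_le_left _ _
  have hβb' : β ≤ b' := min_le_right _ _
  -- a common linear bound for the defect along `x = 0` and `x = 1` propagates below the edge
  have step : ∀ j κ, 0 ≤ κ → (∀ y t, E j 0 y t → 1 - t ≤ κ + β * y) →
      (∀ y t, E j 1 y t → 1 - t ≤ κ + β * y) → Bound E (j + 1) κ (fun _ y => y ≤ 0) := by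
    intro j κ hκ h0 h1 x y t ht hy
    have A := hA _ _ _ (hE.zero ht)
    have B := hB _ _ _ (hE.zero ht)
    rcases le_or_gt x 0 with hx0 | hx0
    · nlinarith
    rcases le_or_gt 1 x with hx1 | hx1
    · nlinarith
    obtain ⟨θ, x₁, y₁, t₁, x₂, y₂, t₂, hθ0, hθ1, -, H1, H2, l1, l2, -, ey, et⟩ :=
      hE.split j 1 0 0 x y t ht (by simpa using hx0) (by simpa using hx1)
    simp only [Int.cast_one, one_mul, Int.cast_zero, zero_mul, add_zero, zero_add] at l1 l2
    subst l1 l2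
    have k1 := h0 _ _ H1
    have k2 := h1 _ _ H2
    have : β * y = (1 - θ) * (β * y₁) + θ * (β * y₂) := by rw [ey]; ring
    nlinarith
  constructor
  · set B := max b b' with hBd
    have hBb : b ≤ B := le_max_left _ _
    have hBb' : b' ≤ B := le_max_right _ _
    have hB0 : 0 < B := by linarith
    have hβB : β / B ≤ 1 := by rw [div_le_one hB0]; linarith
    have line : ∀ (ε s y d : ℝ), 0 ≤ ε → β ≤ s → s ≤ B → d ≤ ε → d ≤ s * y →
        d ≤ (1 - β / B) * ε + β * y := by
      intro ε s y d hε h1 h2 h3 h4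
      rcases le_total 0 y with hy | hy
      · have h5 : d ≤ B * y := by nlinarith
        calc d = (1 - β / B) * d + β / B * d := by ring
          _ ≤ (1 - β / B) * ε + β / B * (B * y) := by
            have : 0 ≤ 1 - β / B := by linarith
            gcongr
          _ = _ := by field_simp
      · have : 0 ≤ (1 - β / B) * ε := mul_nonneg (by linarith) hε
        nlinarith
    refine ⟨1 - β / B, by linarith, by linarith [div_pos hβ0 hB0], fun j ε hε hj => ?_⟩
    refine step j _ (mul_nonneg (by linarith) hε) (fun y t ht => ?_) (fun y t ht => ?_)
    · exact line ε b y _ hε hβb hBb (by linarith [hj _ _ _ ht trivial])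
        (by linarith [hA _ _ _ (hE.zero ht)])
    · exact line ε b' y _ hε hβb' hBb' (by linarith [hj _ _ _ ht trivial])
        (by linarith [hB _ _ _ (hE.zero ht)])
  · obtain ⟨ε₁, h1, H1⟩ := corner_slope hE hco hb hβ0 hA
    have hrefl := hE.comp 1 0 (-1) 0 0 1 (-1) (by norm_num) (by norm_num)
    have hcorefl := hco.comp 1 0 (-1) 0 0 1 (-1) (by norm_num) (by norm_num)
    obtain ⟨ε₂, h2, H2⟩ := corner_slope hrefl hcorefl (a := a') hb' hβ0
      (fun x y t ht => by have := hB _ _ _ ht; push_cast at this; linarith)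
    refine ⟨min ε₁ ε₂, lt_min h1 h2, fun j hj => ?_⟩
    have J1 := H1 j (fun x y t ht _ => by
      linarith [hj _ _ _ ht trivial, min_le_left ε₁ ε₂])
    have J2 := H2 j (fun x y t ht _ => by
      linarith [hj _ _ _ ht trivial, min_le_right ε₁ ε₂])
    refine step (j + 1) 0 le_rfl (fun y t ht => ?_) (fun y t ht => ?_)
    · rcases le_total 0 y with hy | hy
      · linarith [J1 y t ht hy]
      · nlinarith [hA _ _ _ (hE.zero ht)]
    · rcases le_total 0 y with hy | hy
      · linarith [J2 y t (by simpa using ht) hy]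
      · nlinarith [hB _ _ _ (hE.zero ht)]

/-- The half-plane behind the lattice edge from `p` to `p + u` is good, provided the lattice
direction `v` points strictly below the bounds `L₁` (tight at `p`) and `L₂` (tight at `p + u`). -/
theorem good_behind {E : ℕ → ℝ → ℝ → ℝ → Prop} (hE : SplitSeq E) (hco : Coercive E)
    (p₀ p₁ u₀ u₁ v₀ v₁ δ : ℤ) (hδ : u₀ * v₁ - u₁ * v₀ = δ) (hδ2 : δ * δ = 1)
    {c α β c' α' β' : ℝ} (hL : LowerBound E c α β) (hL' : LowerBound E c' α' β')
    (h1 : c + α * p₀ + β * p₁ = 1) (h2 : α * u₀ + β * u₁ < 0) (h3 : α * v₀ + β * v₁ < 0)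
    (h1' : c' + α' * (p₀ + u₀) + β' * (p₁ + u₁) = 1) (h2' : 0 < α' * u₀ + β' * u₁)
    (h3' : α' * v₀ + β' * v₁ < 0) :
    Good E (fun x y => (δ : ℝ) * (-u₁ * (x - p₀) + u₀ * (y - p₁)) ≤ 0) := by
  have e1 : (u₀ : ℝ) * v₁ - u₁ * v₀ = δ := by exact_mod_cast hδ
  have e2 : (δ : ℝ) * δ = 1 := by exact_mod_cast hδ2
  have key := good_below (hE.comp p₀ p₁ u₀ u₁ v₀ v₁ δ hδ hδ2)
    (hco.comp p₀ p₁ u₀ u₁ v₀ v₁ δ hδ hδ2)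
    (a := -(α * u₀ + β * u₁)) (b := -(α * v₀ + β * v₁)) (a' := α' * u₀ + β' * u₁)
    (b' := -(α' * v₀ + β' * v₁)) (by linarith) (by linarith) h2' (by linarith)
    (fun x y t ht => by have := hL _ _ _ ht; linarith)
    (fun x y t ht => by have := hL' _ _ _ ht; linarith)
  have inv : ∀ X Y : ℝ, X = p₀ + u₀ * (δ * (v₁ * (X - p₀) - v₀ * (Y - p₁)))
      + v₀ * (δ * (-u₁ * (X - p₀) + u₀ * (Y - p₁))) ∧
      Y = p₁ + u₁ * (δ * (v₁ * (X - p₀) - v₀ * (Y - p₁)))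
      + v₁ * (δ * (-u₁ * (X - p₀) + u₀ * (Y - p₁))) := by
    intro X Y
    constructor
    · linear_combination -(X - p₀) * e2 - δ * (X - p₀) * e1
    · linear_combination -(Y - p₁) * e2 - δ * (Y - p₁) * e1
  have conv : ∀ j ε, Bound E j ε (fun _ _ => True) → Bound (fun j x y t =>
      E j (p₀ + u₀ * x + v₀ * y) (p₁ + u₁ * x + v₁ * y) t) j ε (fun _ _ => True) :=
    fun j ε h x y t ht _ => h _ _ _ ht trivial
  have back : ∀ j ε, Bound (fun j x y t =>
      E j (p₀ + u₀ * x + v₀ * y) (p₁ + u₁ * x + v₁ * y) t) j ε (fun _ y => y ≤ 0) →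
      Bound E j ε (fun x y => (δ : ℝ) * (-u₁ * (x - p₀) + u₀ * (y - p₁)) ≤ 0) := by
    intro j ε h X Y t ht hH
    refine h (δ * (v₁ * (X - p₀) - v₀ * (Y - p₁))) _ t ?_ hH
    obtain ⟨i1, i2⟩ := inv X Y
    show E j _ _ t
    rw [← i1, ← i2]
    exact ht
  obtain ⟨⟨ρ, r0, r1, hρ⟩, ε₀, he, hε⟩ := key
  exact ⟨⟨ρ, r0, r1, fun j ε h h' => back _ _ (hρ j ε h (conv _ _ h'))⟩,
    ε₀, he, fun j h => back _ _ (hε j (conv _ _ h))⟩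

theorem Good.union {E : ℕ → ℝ → ℝ → ℝ → Prop} {H H' G : ℝ → ℝ → Prop} (h : Good E H)
    (h' : Good E H') (hG : ∀ x y, G x y → H x y ∨ H' x y) : Good E G := by
  obtain ⟨⟨ρ, r0, r1, hρ⟩, ε₀, he, hε⟩ := h
  obtain ⟨⟨ρ', r0', r1', hρ'⟩, ε₀', he', hε'⟩ := h'
  refine ⟨⟨max ρ ρ', le_max_of_le_left r0, max_lt r1 r1', fun j ε h0 hj x y t ht hxy => ?_⟩,
    min ε₀ ε₀', lt_min he he', fun j hj x y t ht hxy => ?_⟩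
  · rcases hG x y hxy with k | k
    · have := hρ j ε h0 hj x y t ht k
      nlinarith [le_max_left ρ ρ']
    · have := hρ' j ε h0 hj x y t ht k
      nlinarith [le_max_right ρ ρ']
  · rcases hG x y hxy with k | k
    · exact hε j (fun x y t ht _ => by linarith [hj _ _ _ ht trivial, min_le_left ε₀ ε₀'])
        x y t ht k
    · exact hε' j (fun x y t ht _ => by linarith [hj _ _ _ ht trivial, min_le_right ε₀ ε₀'])
        x y t ht k

theorem eventually_one_le {E : ℕ → ℝ → ℝ → ℝ → Prop} (hE : SplitSeq E)
    (hpos : ∀ x y t, E 0 x y t → 0 ≤ t) (hg : Good E (fun _ y => y ≤ 0 ∨ 1 ≤ y)) :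
    ∃ j, ∀ x y t, E j x y t → 1 ≤ t := by
  have strip : ∀ j ε, Bound E j ε (fun _ y => y ≤ 0 ∨ 1 ≤ y) →
      Bound E (j + 1) ε (fun _ _ => True) := by
    intro j ε h x y t ht _
    by_cases hy : y ≤ 0 ∨ 1 ≤ y
    · exact h x y t (hE.anti _ _ _ _ ht) hy
    push Not at hy
    obtain ⟨θ, x₁, y₁, t₁, x₂, y₂, t₂, hθ0, hθ1, -, H1, H2, l1, l2, -, -, et⟩ :=
      hE.split j 0 1 0 x y t ht (by simpa using hy.1) (by simpa using hy.2)
    simp only [Int.cast_one, one_mul, Int.cast_zero, zero_mul, zero_add] at l1 l2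
    have k1 := h _ _ _ H1 (Or.inl l1.le)
    have k2 := h _ _ _ H2 (Or.inr l2.ge)
    nlinarith
  obtain ⟨⟨ρ, r0, r1, hρ⟩, ε₀, he, hε⟩ := hg
  have iter : ∀ n : ℕ, Bound E (2 * n) (ρ ^ n) (fun _ _ => True) := by
    intro n
    induction n with
    | zero => intro x y t ht _; simpa using hpos x y t ht
    | succ n ih =>
      have := strip _ _ (hρ _ _ (pow_nonneg r0 n) ih)
      rwa [← pow_succ'] at this
  obtain ⟨n, hn⟩ := exists_pow_lt_of_lt_one he r1
  have := strip _ _ (hε (2 * n) fun x y t ht _ => by linarith [iter n x y t ht trivial])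
  exact ⟨_, fun x y t ht => by simpa using this x y t ht trivial⟩

/-- Finite convergence in normalized position: the edge from `(0, 0)` to `(1, 0)` is crossed by the
lattice-free convex region `U`, and no lattice point of the line `y = 1` lies in `U`. -/
theorem eventually_one_le_of_lattice_free {E : ℕ → ℝ → ℝ → ℝ → Prop} (hE : SplitSeq E)
    (hco : Coercive E) (hpos : ∀ x y t, E 0 x y t → 0 ≤ t)
    {a b a' b' : ℝ} (ha : 0 < a) (hb : 0 < b) (ha' : 0 < a') (hb' : 0 < b')
    (hA : LowerBound E 1 (-a) (-b)) (hB : LowerBound E (1 - a') a' (-b'))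
    (U : ℝ → ℝ → Prop) (hUA : ∀ x y, U x y → 0 < a * x + b * y)
    (hUB : ∀ x y, U x y → 0 < a' * (1 - x) + b' * y)
    (hUout : ∀ x y t, E 0 x y t → ¬ U x y → 1 ≤ t)
    (hUrow : ∀ x y, U x y → 1 ≤ y → ∃ x', U x' 1)
    (hsep : ∀ q : ℤ, ∃ c α β : ℝ, LowerBound E c α β ∧ c + α * q + β = 1 ∧
      (∀ x y, U x y → c + α * x + β * y < 1) ∧ (0 ≤ a * q + b → c < 1) ∧
      (0 ≤ a' * (1 - q) + b' → c + α < 1)) :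
    ∃ j, ∀ x y t, E j x y t → 1 ≤ t := by
  have hbot := good_below hE hco ha hb ha' hb' hA hB
  refine eventually_one_le hE hpos ?_
  suffices hside : Good E (fun _ y => y ≤ 0 ∨ 1 ≤ y) from hside
  by_cases hJ : ∃ x, U x 1
  swap
  · have h1 : ∀ j, Bound E j 0 (fun _ y => 1 ≤ y) := fun j x y t ht hy => by
      have := hUout x y t (hE.zero ht) fun hU => hJ (hUrow x y hU hy)
      linarith
    have htop : Good E (fun _ y => 1 ≤ y) :=
      ⟨⟨0, le_rfl, one_pos, fun j ε _ _ => by simpa using h1 (j + 1)⟩, 1, one_pos,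
        fun j _ => h1 (j + 2)⟩
    exact hbot.union htop fun _ _ h => h
  obtain ⟨x₀, hx₀⟩ := hJ
  have hA0 := hUA _ _ hx₀
  have hB0 := hUB _ _ hx₀
  obtain ⟨l, hl1, hl2⟩ : ∃ l : ℤ, (l : ℝ) ≤ x₀ ∧ x₀ < l + 1 :=
    ⟨⌊x₀⌋, Int.floor_le _, Int.lt_floor_add_one _⟩
  obtain ⟨c, α, β, hL, hLq, hLU, hLA, hLB⟩ := hsep l
  obtain ⟨c', α', β', hL', hLq', hLU', hLA', hLB'⟩ := hsep (l + 1)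
  push_cast at hLq' hLA' hLB'
  have hlt : (l : ℝ) < x₀ := by
    rcases hl1.eq_or_lt with h | h
    · have := hLU _ _ hx₀
      rw [← h] at this; linarith
    · exact h
  have hα : α < 0 := by nlinarith [hLU _ _ hx₀]
  have hα' : 0 < α' := by nlinarith [hLU' _ _ hx₀]
  have hAr : 0 < a * (l + 1) + b := by nlinarith
  have hBl : 0 < a' * (1 - l) + b' := by nlinarith
  rcases lt_or_ge (a * l + b) 0 with hl | hl
  · -- the left neighbour lies strictly beyond the side through `(0, 0)`
    have hl0 : (l : ℝ) + 1 ≤ 0 := by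
      have : (l : ℝ) < 0 := by nlinarith
      have : l < 0 := by exact_mod_cast this
      exact_mod_cast (show l + 1 ≤ 0 by omega)
    have hBr : 0 < a' * (1 - (l + 1)) + b' := by nlinarith
    have k1 := hLA' hAr.le
    have k2 := hLB' hBr.le
    have right := good_behind hE hco (l + 1) 1 (-l) (-1) (-1) 0 (-1) (by ring) (by norm_num)
      hL' hB (by push_cast; linarith) (by push_cast; nlinarith) (by push_cast; linarith)
      (by push_cast; ring) (by push_cast; nlinarith) (by push_cast; nlinarith)
    have left := good_behind hE hco (l + 1) 1 (-(l + 1)) (-1) (-l) (-1) 1 (by ring) (by norm_num)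
      hL' hA (by push_cast; linarith) (by push_cast; nlinarith) (by push_cast; nlinarith)
      (by push_cast; ring) (by push_cast; nlinarith) (by push_cast; nlinarith)
    refine hbot.union (left.union right (G := fun _ y => 1 ≤ y) fun x y hy => ?_) fun _ _ h => h
    push_cast
    by_contra! hcon
    nlinarith [hcon.1, hcon.2]
  rcases lt_or_ge (a' * (1 - (l + 1)) + b') 0 with hr | hr
  · -- the right neighbour lies strictly beyond the side through `(1, 0)`
    have hl0 : (1 : ℝ) ≤ l := by
      have : (0 : ℝ) < l := by nlinarith
      have : 0 < l := by exact_mod_cast this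
      exact_mod_cast (show 1 ≤ l by omega)
    have k1 := hLA hl
    have k2 := hLB hBl.le
    have left := good_behind hE hco l 1 (-l) (-1) 1 0 1 (by ring) (by norm_num)
      hL hA (by push_cast; linarith) (by push_cast; nlinarith) (by push_cast; linarith)
      (by push_cast; ring) (by push_cast; nlinarith) (by push_cast; nlinarith)
    have right := good_behind hE hco l 1 (1 - l) (-1) (-l) (-1) (-1) (by ring) (by norm_num)
      hL hB (by push_cast; linarith) (by push_cast; nlinarith) (by push_cast; nlinarith)
      (by push_cast; ring) (by push_cast; nlinarith) (by push_cast; nlinarith)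
    refine hbot.union (left.union right (G := fun _ y => 1 ≤ y) fun x y hy => ?_) fun _ _ h => h
    push_cast
    by_contra! hcon
    nlinarith [hcon.1, hcon.2]
  · have k1 := hLA hl
    have k2 := hLB' hr
    have top := good_behind hE hco l 1 1 0 (-l) (-1) (-1) (by ring) (by norm_num)
      hL hL' (by push_cast; linarith) (by push_cast; linarith) (by push_cast; nlinarith)
      (by push_cast; linarith) (by push_cast; linarith) (by push_cast; nlinarith)
    refine hbot.union (top.union top (G := fun _ y => 1 ≤ y) fun x y hy => ?_) fun _ _ h => h
    push_cast
    left
    linarith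

/-- A side of `S` on the line `c + αx + βy = 1` through the lattice point `(x₀, y₀)`
and the vertex `(mx, my)`. -/
structure Side (E : ℕ → ℝ → ℝ → ℝ → Prop) (U S : ℝ → ℝ → Prop) (x₀ y₀ : ℤ)
    (mx my c α β : ℝ) : Prop where
  low : LowerBound E c α β
  lt : ∀ x y, U x y → c + α * x + β * y < 1
  mem : S x₀ y₀
  eq : c + α * x₀ + β * y₀ = 1
  eq_vertex : c + α * mx + β * my = 1
  sole : ∀ i j : ℤ, S i j → c + α * i + β * j = 1 → i = x₀ ∧ j = y₀

/-- Two consecutive sides of a lattice-free convex set `S` with interior `U`, meeting at the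
vertex `(mx, my)`. -/
structure Corner (E : ℕ → ℝ → ℝ → ℝ → Prop) (U S : ℝ → ℝ → Prop) (x₀ y₀ x₁ y₁ : ℤ)
    (mx my c₀ α₀ β₀ c₁ α₁ β₁ : ℝ) : Prop where
  splitSeq : SplitSeq E
  coercive : Coercive E
  nonneg : ∀ x y t, E 0 x y t → 0 ≤ t
  out : ∀ x y t, E 0 x y t → ¬ U x y → 1 ≤ t
  lattice : ∀ i j : ℤ, ¬ U i j
  convex_int : ∀ x y x' y' s, U x y → U x' y' → 0 ≤ s → s ≤ 1 →
    U ((1 - s) * x + s * x') ((1 - s) * y + s * y')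
  convex : ∀ x y x' y' s, S x y → S x' y' → 0 ≤ s → s ≤ 1 →
    S ((1 - s) * x + s * x') ((1 - s) * y + s * y')
  sub : ∀ x y, U x y → S x y
  vertex_mem : S mx my
  vertex_ne : ¬ (mx = x₀ ∧ my = y₀)
  side₀ : Side E U S x₀ y₀ mx my c₀ α₀ β₀
  side₁ : Side E U S x₁ y₁ mx my c₁ α₁ β₁
  lt₀ : c₀ + α₀ * x₁ + β₀ * y₁ < 1
  lt₁ : c₁ + α₁ * x₀ + β₁ * y₀ < 1
  sep_int : ∀ x y, ¬ U x y → ∃ c α β, LowerBound E c α β ∧ c + α * x + β * y = 1 ∧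
    (∀ x' y', U x' y' → c + α * x' + β * y' < 1) ∧ (∀ x' y', S x' y' → c + α * x' + β * y' ≤ 1) ∧
    (c + α * x₀ + β * y₀ = 1 → c = c₀ ∧ α = α₀ ∧ β = β₀) ∧
    (c + α * x₁ + β * y₁ = 1 → c = c₁ ∧ α = α₁ ∧ β = β₁)
  sep : ∀ x y, ¬ S x y → ∃ c α β, LowerBound E c α β ∧ 1 < c + α * x + β * y ∧
    ∀ x' y', S x' y' → c + α * x' + β * y' ≤ 1

theorem LowerBound.comp {E : ℕ → ℝ → ℝ → ℝ → Prop} {c α β : ℝ} (h : LowerBound E c α β)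
    (p₀ p₁ u₀ u₁ v₀ v₁ : ℝ) :
    LowerBound (fun j x y t => E j (p₀ + u₀ * x + v₀ * y) (p₁ + u₁ * x + v₁ * y) t)
      (c + α * p₀ + β * p₁) (α * u₀ + β * u₁) (α * v₀ + β * v₁) := by
  intro x y t hE
  have := h _ _ _ hE
  linarith

theorem Side.comp {E : ℕ → ℝ → ℝ → ℝ → Prop} {U S : ℝ → ℝ → Prop}
    {p₀ p₁ u₀ u₁ v₀ v₁ x₀ y₀ : ℤ} {mx my c α β : ℝ}
    (h : Side E U S (p₀ + u₀ * x₀ + v₀ * y₀) (p₁ + u₁ * x₀ + v₁ * y₀)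
      (p₀ + u₀ * mx + v₀ * my) (p₁ + u₁ * mx + v₁ * my) c α β)
    (hdet : u₀ * v₁ - u₁ * v₀ ≠ 0) :
    Side (fun j x y t => E j (p₀ + u₀ * x + v₀ * y) (p₁ + u₁ * x + v₁ * y) t)
      (fun x y => U (p₀ + u₀ * x + v₀ * y) (p₁ + u₁ * x + v₁ * y))
      (fun x y => S (p₀ + u₀ * x + v₀ * y) (p₁ + u₁ * x + v₁ * y)) x₀ y₀ mx my
      (c + α * p₀ + β * p₁) (α * u₀ + β * u₁) (α * v₀ + β * v₁) where
  low := h.low.comp _ _ _ _ _ _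
  lt x y hU := by have := h.lt _ _ hU; linarith
  mem := by have := h.mem; push_cast at this; exact this
  eq := by have := h.eq; push_cast at this; linarith
  eq_vertex := by have := h.eq_vertex; linarith
  sole i j hS hij := by
    obtain ⟨h1, h2⟩ := h.sole (p₀ + u₀ * i + v₀ * j) (p₁ + u₁ * i + v₁ * j)
      (by push_cast; exact hS) (by push_cast; linarith)
    constructor
    · refine sub_eq_zero.1 ((mul_eq_zero.1 (?_ : (u₀ * v₁ - u₁ * v₀) * (i - x₀) = 0)).resolve_left
        hdet)
      linear_combination v₁ * h1 - v₀ * h2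
    · refine sub_eq_zero.1 ((mul_eq_zero.1 (?_ : (u₀ * v₁ - u₁ * v₀) * (j - y₀) = 0)).resolve_left
        hdet)
      linear_combination u₀ * h2 - u₁ * h1

theorem Corner.comp {E : ℕ → ℝ → ℝ → ℝ → Prop} {U S : ℝ → ℝ → Prop}
    {p₀ p₁ u₀ u₁ v₀ v₁ x₀ y₀ x₁ y₁ δ : ℤ} {mx my c₀ α₀ β₀ c₁ α₁ β₁ : ℝ}
    (h : Corner E U S (p₀ + u₀ * x₀ + v₀ * y₀) (p₁ + u₁ * x₀ + v₁ * y₀)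
      (p₀ + u₀ * x₁ + v₀ * y₁) (p₁ + u₁ * x₁ + v₁ * y₁)
      (p₀ + u₀ * mx + v₀ * my) (p₁ + u₁ * mx + v₁ * my) c₀ α₀ β₀ c₁ α₁ β₁)
    (hδ : u₀ * v₁ - u₁ * v₀ = δ) (hδ2 : δ * δ = 1) :
    Corner (fun j x y t => E j (p₀ + u₀ * x + v₀ * y) (p₁ + u₁ * x + v₁ * y) t)
      (fun x y => U (p₀ + u₀ * x + v₀ * y) (p₁ + u₁ * x + v₁ * y))
      (fun x y => S (p₀ + u₀ * x + v₀ * y) (p₁ + u₁ * x + v₁ * y)) x₀ y₀ x₁ y₁ mx my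
      (c₀ + α₀ * p₀ + β₀ * p₁) (α₀ * u₀ + β₀ * u₁) (α₀ * v₀ + β₀ * v₁)
      (c₁ + α₁ * p₀ + β₁ * p₁) (α₁ * u₀ + β₁ * u₁) (α₁ * v₀ + β₁ * v₁) := by
  have hdet : u₀ * v₁ - u₁ * v₀ ≠ 0 := by
    rw [hδ]; rintro rfl; simp at hδ2
  refine ⟨h.splitSeq.comp _ _ _ _ _ _ δ hδ hδ2, h.coercive.comp _ _ _ _ _ _ δ hδ hδ2,
    fun _ _ _ => h.nonneg _ _ _, fun _ _ _ => h.out _ _ _, fun i j hU => ?_,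
    fun x y x' y' s h1 h2 h3 h4 => ?_, fun x y x' y' s h1 h2 h3 h4 => ?_, fun x y => h.sub _ _,
    h.vertex_mem, ?_, h.side₀.comp hdet, h.side₁.comp hdet, ?_, ?_, fun x y hU => ?_,
    fun x y hS => ?_⟩
  · exact h.lattice (p₀ + u₀ * i + v₀ * j) (p₁ + u₁ * i + v₁ * j) (by push_cast; exact hU)
  · convert h.convex_int _ _ _ _ s h1 h2 h3 h4 using 1 <;> ring
  · convert h.convex _ _ _ _ s h1 h2 h3 h4 using 1 <;> ring
  · rintro ⟨rfl, rfl⟩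
    exact h.vertex_ne (by push_cast; exact ⟨rfl, rfl⟩)
  · have := h.lt₀; push_cast at this; linarith
  · have := h.lt₁; push_cast at this; linarith
  · obtain ⟨c, α, β, h1, h2, h3, h4, h5, h6⟩ := h.sep_int _ _ hU
    push_cast at h5 h6
    refine ⟨_, _, _, h1.comp p₀ p₁ u₀ u₁ v₀ v₁, by linarith,
      fun x' y' hU => by have := h3 _ _ hU; linarith,
      fun x' y' hS => by have := h4 _ _ hS; linarith, fun he => ?_, fun he => ?_⟩
    · obtain ⟨rfl, rfl, rfl⟩ := h5 (by linarith); simp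
    · obtain ⟨rfl, rfl, rfl⟩ := h6 (by linarith); simp
  · obtain ⟨c, α, β, h1, h2, h3⟩ := h.sep _ _ hS
    exact ⟨_, _, _, h1.comp p₀ p₁ u₀ u₁ v₀ v₁, by linarith,
      fun x' y' hS => by have := h3 _ _ hS; linarith⟩

/-- A combination of the two side points and the vertex with positive weights on both side points
is interior. -/
theorem Corner.int_of_pos {E : ℕ → ℝ → ℝ → ℝ → Prop} {U S : ℝ → ℝ → Prop} {x₀ y₀ x₁ y₁ : ℤ}
    {mx my c₀ α₀ β₀ c₁ α₁ β₁ : ℝ} (h : Corner E U S x₀ y₀ x₁ y₁ mx my c₀ α₀ β₀ c₁ α₁ β₁)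
    {l₀ l₁ l₂ : ℝ} (h0 : 0 < l₀) (h1 : 0 < l₁) (h2 : 0 ≤ l₂) (hl : l₀ + l₁ + l₂ = 1) :
    U (l₀ * x₀ + l₁ * x₁ + l₂ * mx) (l₀ * y₀ + l₁ * y₁ + l₂ * my) := by
  by_contra hU
  obtain ⟨c, α, β, -, e1, -, e2, e3, -⟩ := h.sep_int _ _ hU
  have a0 := e2 _ _ h.side₀.mem
  have a1 := e2 _ _ h.side₁.mem
  have a2 := e2 _ _ h.vertex_mem
  have p0 : l₀ * (c + α * x₀ + β * y₀) ≤ l₀ * 1 := by gcongr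
  have p1 : l₁ * (c + α * x₁ + β * y₁) ≤ l₁ * 1 := by gcongr
  have p2 : l₂ * (c + α * mx + β * my) ≤ l₂ * 1 := by gcongr
  have e : l₀ * (c + α * x₀ + β * y₀) + l₁ * (c + α * x₁ + β * y₁) +
      l₂ * (c + α * mx + β * my) = 1 := by
    linear_combination e1 + c * hl
  have f0 : c + α * x₀ + β * y₀ = 1 := mul_left_cancel₀ h0.ne' (by linarith)
  have f1 : c + α * x₁ + β * y₁ = 1 := mul_left_cancel₀ h1.ne' (by linarith)
  obtain ⟨rfl, rfl, rfl⟩ := e3 f0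
  linarith [h.lt₀]

theorem Corner.eventually_one_le_of_standard {E : ℕ → ℝ → ℝ → ℝ → Prop} {U S : ℝ → ℝ → Prop}
    {X H c₀ α₀ β₀ c₁ α₁ β₁ : ℝ} (h : Corner E U S 0 0 1 0 X (-H) c₀ α₀ β₀ c₁ α₁ β₁)
    (hX : 0 < X) (hH : 0 < H) (hXH : X ≤ H) : ∃ j, ∀ x y t, E j x y t → 1 ≤ t := by
  have s0 := h.side₀.eq
  have s1 := h.side₁.eq
  have t0 := h.side₀.eq_vertex
  have t1 := h.side₁.eq_vertex
  have r0 := h.lt₀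
  have r1 := h.lt₁
  have m0 := h.side₀.mem
  have m1 := h.side₁.mem
  have m2 := h.vertex_mem
  push_cast at s0 s1 r0 r1 m0 m1
  simp only [mul_zero, add_zero, mul_one] at s0 s1 r0 r1
  subst s0
  obtain rfl : c₁ = 1 - α₁ := by linarith
  have hX1 : X < 1 := by
    by_contra! hX1
    have hU := h.lattice 1 (-1)
    push_cast at hU
    have hH0 := hH.ne'
    rcases hX1.eq_or_lt with rfl | hX2
    · have hS := h.convex _ _ _ _ (1 / H) m1 m2 (by positivity) (by rwa [div_le_one hH])
      have e1 : (1 - 1 / H) * 1 + 1 / H * 1 = ((1 : ℤ) : ℝ) := by push_cast; ring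
      have e2 : (1 - 1 / H) * 0 + 1 / H * (-H) = ((-1 : ℤ) : ℝ) := by push_cast; field_simp; simp
      rw [e1, e2] at hS
      have := h.side₁.sole _ _ hS (by
        rw [← e1, ← e2]
        have : 1 / H * H = 1 := by field_simp
        linear_combination (1 / H) * t1)
      omega
    · rcases hXH.eq_or_lt with rfl | hXH
      · have hS := h.convex _ _ _ _ (1 / X) m0 m2 (by positivity) (by rwa [div_le_one hH])
        have e1 : (1 - 1 / X) * 0 + 1 / X * X = ((1 : ℤ) : ℝ) := by push_cast; field_simp; simp
        have e2 : (1 - 1 / X) * 0 + 1 / X * (-X) = ((-1 : ℤ) : ℝ) := by push_cast; field_simp; simp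
        rw [e1, e2] at hS
        have := h.side₀.sole _ _ hS (by
          rw [← e1, ← e2]
          linear_combination (1 / X) * t0)
        omega
      · apply hU
        have := h.int_of_pos (l₀ := (X - 1) / H) (l₁ := 1 - X / H) (l₂ := 1 / H)
          (div_pos (by linarith) hH) (by rw [sub_pos, div_lt_one hH]; exact hXH) (by positivity)
          (by field_simp; ring)
        push_cast at this
        convert this using 1 <;> field_simp <;> ring
  have ha : 0 < -α₀ := by linarith
  have ha' : 0 < α₁ := by linarith
  have hb : 0 < -β₀ := by
    have : 0 < -β₀ * H := by nlinarith
    exact pos_of_mul_pos_left this hH.le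
  have hb' : 0 < -β₁ := by
    have : 0 < -β₁ * H := by nlinarith
    exact pos_of_mul_pos_left this hH.le
  have hmid : U (1 / 2) 0 := by
    have := h.int_of_pos (l₀ := 1 / 2) (l₁ := 1 / 2) (l₂ := 0) (by norm_num) (by norm_num) le_rfl
      (by norm_num)
    push_cast at this
    convert this using 1 <;> ring
  refine eventually_one_le_of_lattice_free h.splitSeq h.coercive h.nonneg ha hb ha' hb'
    (by simpa using h.side₀.low) (by simpa using h.side₁.low) U
    (fun x y hU => by linarith [h.side₀.lt x y hU]) (fun x y hU => by linarith [h.side₁.lt x y hU])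
    h.out (fun x y hU hy => ?_) (fun q => ?_)
  · refine ⟨(1 - 1 / y) * (1 / 2) + 1 / y * x, ?_⟩
    have := h.convex_int _ _ _ _ (1 / y) hmid hU (by positivity)
      (by rwa [div_le_one (by linarith)])
    convert this using 1
    field_simp
    simp
  · by_cases hS : S q 1
    · have hU := h.lattice q 1
      push_cast at hU
      obtain ⟨c, α, β, e1, e2, e3, e4, e5, e6⟩ := h.sep_int _ _ hU
      push_cast at e5 e6
      have b0 := e4 _ _ m0
      have b1 := e4 _ _ m1
      refine ⟨c, α, β, e1, by linarith, e3, fun _ => ?_, fun _ => ?_⟩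
      · refine lt_of_le_of_ne (by linarith) fun hc => ?_
        obtain ⟨rfl, rfl, rfl⟩ := e5 (by linarith)
        have := h.side₀.sole q 1 (by exact_mod_cast hS) (by push_cast; linarith)
        omega
      · refine lt_of_le_of_ne (by linarith) fun hc => ?_
        obtain ⟨rfl, rfl, rfl⟩ := e6 (by linarith)
        have := h.side₁.sole q 1 (by exact_mod_cast hS) (by push_cast; linarith)
        omega
    · obtain ⟨c, α, β, e1, e2, e3⟩ := h.sep _ _ hS
      have b0 := e3 _ _ m0
      have b1 := e3 _ _ m1
      refine ⟨c - (c + α * q + β * 1 - 1), α, β, fun x y t ht => ?_, by ring, fun x y hU => ?_,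
        fun _ => by linarith, fun _ => by linarith⟩
      · have := e1 x y t ht
        linarith
      · have := e3 x y (h.sub _ _ hU)
        linarith

theorem Corner.eventually_one_le {E : ℕ → ℝ → ℝ → ℝ → Prop} {U S : ℝ → ℝ → Prop}
    {x₀ y₀ x₁ y₁ : ℤ} {mx my c₀ α₀ β₀ c₁ α₁ β₁ : ℝ}
    (h : Corner E U S x₀ y₀ x₁ y₁ mx my c₀ α₀ β₀ c₁ α₁ β₁) :
    ∃ j, ∀ x y t, E j x y t → 1 ≤ t := by
  obtain ⟨u₀, hu₀⟩ : ∃ u, u = x₁ - x₀ := ⟨_, rfl⟩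
  obtain ⟨u₁, hu₁⟩ : ∃ u, u = y₁ - y₀ := ⟨_, rfl⟩
  obtain rfl : x₁ = x₀ + u₀ := by omega
  obtain rfl : y₁ = y₀ + u₁ := by omega
  clear hu₀ hu₁
  have s0 := h.side₀.eq
  have s1 := h.side₁.eq
  have t0 := h.side₀.eq_vertex
  have r0 := h.lt₀
  push_cast at r0 s1
  have hu : ¬ (u₀ = 0 ∧ u₁ = 0) := by
    rintro ⟨rfl, rfl⟩
    simp at r0
    linarith
  have hgcd : Int.gcd u₀ u₁ = 1 := by
    by_contra hd
    have hd0 : Int.gcd u₀ u₁ ≠ 0 := by rwa [Ne, Int.gcd_eq_zero_iff]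
    obtain ⟨w₀, hw₀⟩ := Int.gcd_dvd_left u₀ u₁
    obtain ⟨w₁, hw₁⟩ := Int.gcd_dvd_right u₀ u₁
    have hd2 : (2 : ℝ) ≤ (Int.gcd u₀ u₁ : ℕ) := by exact_mod_cast (by omega : 2 ≤ Int.gcd u₀ u₁)
    generalize Int.gcd u₀ u₁ = d at hw₀ hw₁ hd2
    apply h.lattice (x₀ + w₀) (y₀ + w₁)
    have := h.int_of_pos (l₀ := 1 - 1 / d) (l₁ := 1 / d) (l₂ := 0)
      (by rw [sub_pos, div_lt_one (by linarith)]; linarith) (by positivity) le_rfl (by ring)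
    rw [hw₀, hw₁] at this
    push_cast at this ⊢
    have hd3 : (d : ℝ) ≠ 0 := by positivity
    convert this using 1 <;> field_simp <;> ring
  have bez : u₀ * Int.gcdA u₀ u₁ + u₁ * Int.gcdB u₀ u₁ = 1 := by
    rw [← Int.gcd_eq_gcd_ab, hgcd]; rfl
  obtain ⟨g₀, g₁, δ, hδ, hδ2, X₀, H, hH, hX₀, hY₀⟩ : ∃ g₀ g₁ δ : ℤ, u₀ * g₁ - u₁ * g₀ = δ ∧
      δ * δ = 1 ∧ ∃ X H : ℝ, 0 < H ∧ mx = x₀ + u₀ * X - g₀ * H ∧ my = y₀ + u₁ * X - g₁ * H := by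
    generalize Int.gcdA u₀ u₁ = A at bez
    generalize Int.gcdB u₀ u₁ = B at bez
    have bez' : (u₀ : ℝ) * A + u₁ * B = 1 := by exact_mod_cast bez
    have e1 : mx = x₀ + u₀ * (A * (mx - x₀) + B * (my - y₀)) -
        -B * -(-u₁ * (mx - x₀) + u₀ * (my - y₀)) := by
      linear_combination -(mx - x₀) * bez'
    have e2 : my = y₀ + u₁ * (A * (mx - x₀) + B * (my - y₀)) -
        A * -(-u₁ * (mx - x₀) + u₀ * (my - y₀)) := by
      linear_combination -(my - y₀) * bez'
    generalize A * (mx - x₀) + B * (my - y₀) = X at e1 e2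
    generalize -(-u₁ * (mx - x₀) + u₀ * (my - y₀)) = H at e1 e2
    rcases lt_trichotomy H 0 with hH | rfl | hH
    · exact ⟨B, -A, -1, by linear_combination -bez, by norm_num, X, -H, by linarith,
        by linarith, by push_cast; linarith⟩
    · exfalso
      have : X * (c₀ + α₀ * (x₀ + u₀) + β₀ * (y₀ + u₁) - 1) = 0 := by
        rw [e1, e2] at t0
        linear_combination t0 + (X - 1) * s0
      obtain rfl : X = 0 := (mul_eq_zero.1 this).resolve_right (by linarith)
      exact h.vertex_ne ⟨by linarith, by linarith⟩
    · exact ⟨-B, A, 1, by linear_combination bez, by norm_num, X, H, hH, by push_cast; linarith, e2⟩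
  obtain ⟨n, hn1, hn2⟩ : ∃ n : ℤ, 0 < X₀ + n * H ∧ X₀ + n * H ≤ H := by
    refine ⟨⌊-X₀ / H⌋ + 1, ?_, ?_⟩
    · have := Int.lt_floor_add_one (-X₀ / H)
      rw [div_lt_iff₀ hH] at this
      push_cast
      linarith
    · have := Int.floor_le (-X₀ / H)
      rw [le_div_iff₀ hH] at this
      push_cast
      linarith
  have hv : (u₀ : ℝ) * g₁ - u₁ * g₀ = δ := by exact_mod_cast hδ
  have hδ2' : (δ : ℝ) * δ = 1 := by exact_mod_cast hδ2
  have h' := Corner.comp (p₀ := x₀) (p₁ := y₀) (u₀ := u₀) (u₁ := u₁) (v₀ := g₀ + n * u₀)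
    (v₁ := g₁ + n * u₁) (x₀ := 0) (y₀ := 0) (x₁ := 1) (y₁ := 0) (mx := X₀ + n * H) (my := -H)
    (E := E) (U := U) (S := S) (c₀ := c₀) (α₀ := α₀) (β₀ := β₀) (c₁ := c₁) (α₁ := α₁) (β₁ := β₁)
    (δ := δ) (by convert h using 1 <;> push_cast <;> linarith) (by linear_combination hδ) hδ2
  obtain ⟨j, hj⟩ := h'.eventually_one_le_of_standard hn1 hH hn2
  refine ⟨j, fun x y t hE => ?_⟩
  refine hj (δ * ((g₁ + n * u₁) * (x - x₀) - (g₀ + n * u₀) * (y - y₀)))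
    (δ * (-u₁ * (x - x₀) + u₀ * (y - y₀))) t ?_
  convert hE using 1
  · push_cast
    linear_combination (x - x₀) * hδ2' + δ * (x - x₀) * hv
  · push_cast
    linear_combination (y - y₀) * hδ2' + δ * (y - y₀) * hv

/-- A point strictly between the hyperplanes `φ = e` and `φ = e + 1` which is a convex combination
of points of `C` outside the strip is one of points of `C` on the two hyperplanes. -/
theorem exists_split {V : Type*} [AddCommGroup V] [Module ℝ V] {C : Set V} (hC : Convex ℝ C)
    (φ : V →ₗ[ℝ] ℝ) {e : ℝ} {p : V}
    (hp : p ∈ convexHull ℝ ((C ∩ {x | φ x ≤ e}) ∪ (C ∩ {x | e + 1 ≤ φ x})))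
    (h1 : e < φ p) (h2 : φ p < e + 1) :
    ∃ a ∈ C, ∃ b ∈ C, φ a = e ∧ φ b = e + 1 ∧
      p = (1 - (φ p - e)) • a + (φ p - e) • b := by
  have hA : Convex ℝ (C ∩ {x | φ x ≤ e}) := hC.inter (convex_halfSpace_le φ.isLinear e)
  have hB : Convex ℝ (C ∩ {x | e + 1 ≤ φ x}) := hC.inter (convex_halfSpace_ge φ.isLinear (e + 1))
  rcases (C ∩ {x | φ x ≤ e}).eq_empty_or_nonempty with hA0 | hA0
  · rw [hA0, empty_union, hB.convexHull_eq] at hp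
    exact absurd hp.2 (not_le.2 h2)
  rcases (C ∩ {x | e + 1 ≤ φ x}).eq_empty_or_nonempty with hB0 | hB0
  · rw [hB0, union_empty, hA.convexHull_eq] at hp
    exact absurd hp.2 (not_le.2 h1)
  rw [convexHull_union hA0 hB0, hA.convexHull_eq, hB.convexHull_eq, mem_convexJoin] at hp
  obtain ⟨a, ⟨ha, ha'⟩, b, ⟨hb, hb'⟩, s, t, hs, ht, hst, rfl⟩ := hp
  obtain rfl : s = 1 - t := by linarith
  simp only [mem_ofPred_eq] at ha' hb'
  simp only [map_add, map_smul, smul_eq_mul] at h1 h2 ⊢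
  have hd : 0 < φ b - φ a := by linarith
  have mem : ∀ σ : ℝ, 0 ≤ σ → σ ≤ 1 → (1 - σ) • a + σ • b ∈ C := fun σ h0 h1 =>
    hC ha hb (by linarith) h0 (by ring)
  have val : ∀ σ : ℝ, φ ((1 - σ) • a + σ • b) = φ a + σ * (φ b - φ a) := fun σ => by
    simp only [map_add, map_smul, smul_eq_mul]; ring
  refine ⟨_, mem ((e - φ a) / (φ b - φ a)) (div_nonneg (by linarith) hd.le)
    ((div_le_one hd).2 (by linarith)), _, mem ((e + 1 - φ a) / (φ b - φ a))
    (div_nonneg (by linarith) hd.le) ((div_le_one hd).2 (by linarith)), ?_, ?_, ?_⟩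
  · rw [val]; field_simp; ring
  · rw [val]; field_simp; ring
  · have key : t = (1 - ((1 - t) * φ a + t * φ b - e)) * ((e - φ a) / (φ b - φ a)) +
        ((1 - t) * φ a + t * φ b - e) * ((e + 1 - φ a) / (φ b - φ a)) := by
      field_simp; ring
    generalize (e - φ a) / (φ b - φ a) = σ at key ⊢
    generalize (e + 1 - φ a) / (φ b - φ a) = τ at key ⊢
    generalize (1 - t) * φ a + t * φ b - e = θ at key ⊢
    subst key
    module

section Closures

variable {k : ℕ} {r : Fin k → Pt} {f : Pt}

theorem splitClosure_subset_s19 {C : Set (Pt × (Fin k → ℝ))} (hC : Convex ℝ C) :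
    splitClosure k C ⊆ C :=
  (iInter₂_subset 0 0).trans
    (convexHull_min (union_subset inter_subset_left inter_subset_left) hC)

theorem convex_splitClosure (C : Set (Pt × (Fin k → ℝ))) : Convex ℝ (splitClosure k C) :=
  convex_iInter fun _ => convex_iInter fun _ => convex_convexHull ℝ _

theorem convex_closures (j : ℕ) : Convex ℝ (closures k r f j) := by
  cases j with
  | succ j => exact convex_splitClosure _
  | zero =>
    rintro p ⟨hp, hp'⟩ q ⟨hq, hq'⟩ a b ha hb hab
    refine ⟨fun i => add_nonneg (mul_nonneg ha (hp i)) (mul_nonneg hb (hq i)), ?_⟩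
    simp only [Prod.fst_add, Prod.smul_fst, hp', hq', Prod.snd_add, Prod.smul_snd, Pi.add_apply,
      Pi.smul_apply, smul_eq_mul, add_smul, Finset.sum_add_distrib, smul_add, Finset.smul_sum,
      smul_smul]
    rw [← eq_sub_iff_add_eq'] at hab
    subst hab
    module

theorem splitSeq_closures (α : Fin k → ℝ) :
    SplitSeq (fun j x y t => ∃ p ∈ closures k r f j, p.1 0 = x ∧ p.1 1 = y ∧
      ∑ i, α i * p.2 i = t) := by
  refine ⟨fun j x y t => ?_, fun j c d e x y t => ?_⟩
  · rintro ⟨p, hp, h⟩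
    exact ⟨p, splitClosure_subset_s19 (convex_closures j) hp, h⟩
  rintro ⟨p, hp, rfl, rfl, rfl⟩ h1 h2
  have hp' := mem_iInter₂.1 hp ![c, d] e
  obtain ⟨φ, hφ⟩ : ∃ φ : (Pt × (Fin k → ℝ)) →ₗ[ℝ] ℝ, ∀ p, φ p = c * p.1 0 + d * p.1 1 :=
    ⟨(c : ℝ) • LinearMap.proj 0 ∘ₗ LinearMap.fst ℝ Pt (Fin k → ℝ) +
      (d : ℝ) • LinearMap.proj 1 ∘ₗ LinearMap.fst ℝ Pt (Fin k → ℝ), fun p => rfl⟩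
  simp only [Fin.sum_univ_two, Matrix.cons_val_zero, Matrix.cons_val_one, ← hφ] at hp' h1 h2 ⊢
  obtain ⟨a, ha, b, hb, ea, eb, ep⟩ := exists_split (convex_closures j) φ hp' h1 h2
  obtain ⟨θ, hθ⟩ : ∃ θ, θ = φ p - e := ⟨_, rfl⟩
  rw [← hθ] at ep
  refine ⟨θ, _, _, _, _, _, _, by linarith, by linarith, by linarith, ⟨a, ha, rfl, rfl, rfl⟩,
    ⟨b, hb, rfl, rfl, rfl⟩, by rw [← hφ, ea], by rw [← hφ, eb], ?_, ?_, ?_⟩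
  · rw [ep]; simp
  · rw [ep]; simp
  · rw [ep]
    simp only [Prod.snd_add, Prod.smul_snd, Pi.add_apply, Pi.smul_apply, smul_eq_mul,
      Finset.mul_sum, ← Finset.sum_add_distrib]
    exact Finset.sum_congr rfl fun i _ => by ring

end Closures

section InducedSet

variable {k : ℕ} {r : Fin k → Pt} {f : Pt} {α : Fin k → ℝ}

theorem self_mem_inducedSet_add {u : Pt} (hu : u ∈ coneGen {x | ∃ i, α i = 0 ∧ x = r i}) :
    f + u ∈ inducedSet k r f α :=
  add_mem_add (subset_convexHull ℝ _ (Or.inl rfl)) hu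

theorem pos_of_isBounded_inducedSet (hb : Bornology.IsBounded (inducedSet k r f α))
    (hr : ∀ i, r i ≠ 0) (hα : ∀ i, 0 ≤ α i) (i : Fin k) : 0 < α i := by
  refine (hα i).lt_of_ne' fun hi => ?_
  obtain ⟨M, hM⟩ := hb.exists_norm_le
  have hr0 : 0 < ‖r i‖ := norm_pos_iff.2 (hr i)
  have h0 := hM _ (self_mem_inducedSet_add ⟨0, 0, 0, by simp, by simp, rfl⟩)
  have hM0 : 0 ≤ M := (norm_nonneg _).trans h0
  have := hM _ (self_mem_inducedSet_add (u := ((2 * M + 1) / ‖r i‖) • r i)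
    ⟨1, fun _ => (2 * M + 1) / ‖r i‖, fun _ => r i, fun _ => by positivity, fun _ => ⟨i, hi, rfl⟩,
      by simp⟩)
  have h1 := norm_sub_le (f + ((2 * M + 1) / ‖r i‖) • r i) f
  rw [add_sub_cancel_left, norm_smul, Real.norm_of_nonneg (by positivity),
    div_mul_cancel₀ _ hr0.ne'] at h1
  simp at h0
  linarith

theorem inducedSet_eq_convexHull (hα : ∀ i, 0 < α i) :
    inducedSet k r f α = convexHull ℝ ({f} ∪ {x | ∃ i, 0 < α i ∧ x = f + (α i)⁻¹ • r i}) := by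
  have : coneGen {x | ∃ i, α i = 0 ∧ x = r i} = 0 := by
    ext x
    constructor
    · rintro ⟨n, c, v, -, hv, rfl⟩
      rw [Finset.sum_eq_zero fun j _ => ?_]
      · rfl
      · obtain ⟨i, hi, -⟩ := hv j
        exact absurd hi (hα i).ne'
    · rintro rfl
      exact ⟨0, 0, 0, by simp, by simp, by simp⟩
  rw [inducedSet, this, add_zero]

theorem exists_of_mem_inducedSet (hα : ∀ i, 0 < α i) {x : Pt} (hx : x ∈ inducedSet k r f α) :
    ∃ s : Fin k → ℝ, (∀ i, 0 ≤ s i) ∧ x = f + ∑ i, s i • r i ∧ ∑ i, α i * s i ≤ 1 := by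
  rw [inducedSet_eq_convexHull hα] at hx
  refine convexHull_min (t := {x | ∃ s : Fin k → ℝ, (∀ i, 0 ≤ s i) ∧ x = f + ∑ i, s i • r i ∧
    ∑ i, α i * s i ≤ 1}) ?_ ?_ hx
  · rintro x (rfl | ⟨i, hi, rfl⟩)
    · exact ⟨0, fun _ => le_rfl, by simp, by simp⟩
    · refine ⟨Pi.single i (α i)⁻¹, fun j => ?_, ?_, ?_⟩
      · rw [Pi.single_apply]; split_ifs <;> positivity
      · rw [Finset.sum_eq_single i] <;> simp +contextual
      · rw [Finset.sum_eq_single i] <;> simp +contextual [hi.ne']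
  · rintro _ ⟨s, hs, rfl, hs'⟩ _ ⟨t, ht, rfl, ht'⟩ a b ha hb hab
    refine ⟨a • s + b • t, fun i => add_nonneg (mul_nonneg ha (hs i)) (mul_nonneg hb (ht i)),
      ?_, ?_⟩
    · simp only [Pi.add_apply, Pi.smul_apply, smul_eq_mul, add_smul, Finset.sum_add_distrib,
        smul_add, Finset.smul_sum, smul_smul]
      rw [← eq_sub_iff_add_eq'] at hab
      subst hab
      module
    · have : ∑ i, α i * (a • s + b • t) i = a * ∑ i, α i * s i + b * ∑ i, α i * t i := by
        simp only [Finset.mul_sum, ← Finset.sum_add_distrib]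
        exact Finset.sum_congr rfl fun i _ => by simp; ring
      rw [this]
      calc _ ≤ a * 1 + b * 1 := by gcongr
        _ = 1 := by linarith

theorem latticeFree_inducedSet (hα : ∀ i, 0 < α i) (hvalid : ValidIneq k r f α 1) :
    LatticeFree (inducedSet k r f α) := by
  intro x hx hint
  have hc : ContinuousAt (fun c : ℝ => f + c • (x - f)) 1 := by fun_prop
  have h1 : ∀ᶠ c in nhds (1 : ℝ), f + c • (x - f) ∈ inducedSet k r f α :=
    hc.eventually_mem (by simpa [mem_interior_iff_mem_nhds] using hx)
  obtain ⟨c, hcS, hc1⟩ := (h1.filter_mono nhdsWithin_le_nhds |>.and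
    (self_mem_nhdsWithin : Ioi (1 : ℝ) ∈ nhdsWithin 1 (Ioi 1))).exists
  obtain ⟨s, hs, hx', hs'⟩ := exists_of_mem_inducedSet hα hcS
  have hc0 : (0 : ℝ) < c := one_pos.trans hc1
  have := hvalid (x, c⁻¹ • s) ⟨hint, fun i => mul_nonneg (by positivity) (hs i), ?_⟩
  · simp only [Pi.smul_apply, smul_eq_mul, mul_left_comm _ c⁻¹, ← Finset.mul_sum] at this
    have hc2 : c⁻¹ < 1 := inv_lt_one_of_one_lt₀ hc1
    have : c⁻¹ * ∑ i, α i * s i ≤ c⁻¹ * 1 := by gcongr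
    linarith
  · simp only [Pi.smul_apply, smul_assoc, ← Finset.smul_sum]
    rw [add_right_inj] at hx'
    rw [← hx', smul_smul, inv_mul_cancel₀ hc0.ne', one_smul]
    abel

theorem lowerBound_of_le_one (hα : ∀ i, 0 < α i) {a b c : ℝ}
    (h : ∀ x ∈ inducedSet k r f α, c + a * x 0 + b * x 1 ≤ 1) (hf : c + a * f 0 + b * f 1 = 0) :
    LowerBound (fun j x y t => ∃ p ∈ closures k r f j, p.1 0 = x ∧ p.1 1 = y ∧
      ∑ i, α i * p.2 i = t) c a b := by
  rintro _ _ _ ⟨p, ⟨hp, hp'⟩, rfl, rfl, rfl⟩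
  have key : ∀ i, a * r i 0 + b * r i 1 ≤ α i := by
    intro i
    have := h (f + (α i)⁻¹ • r i) (by
      rw [inducedSet_eq_convexHull hα]
      exact subset_convexHull ℝ _ (Or.inr ⟨i, hα i, rfl⟩))
    simp only [Pi.add_apply, Pi.smul_apply, smul_eq_mul] at this
    have h2 : (α i)⁻¹ * (a * r i 0 + b * r i 1) ≤ 1 := by linarith
    rwa [inv_mul_le_iff₀ (hα i), mul_one] at h2
  have e : c + a * p.1 0 + b * p.1 1 = ∑ i, (a * r i 0 + b * r i 1) * p.2 i := by
    rw [hp']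
    simp only [Pi.add_apply, Finset.sum_apply, Pi.smul_apply, smul_eq_mul, add_mul,
      Finset.sum_add_distrib]
    have e1 : ∀ j, ∀ d : ℝ, ∑ i, d * r i j * p.2 i = d * ∑ i, p.2 i * r i j := fun j d => by
      rw [Finset.mul_sum]
      exact Finset.sum_congr rfl fun i _ => by ring
    rw [e1, e1]
    linear_combination hf
  rw [e]
  exact Finset.sum_le_sum fun i _ => mul_le_mul_of_nonneg_right (key i) (hp i)

theorem coercive_closures (hα : ∀ i, 0 < α i) :
    Coercive (fun j x y t => ∃ p ∈ closures k r f j, p.1 0 = x ∧ p.1 1 = y ∧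
      ∑ i, α i * p.2 i = t) := by
  have hK : ∀ i, 0 ≤ (|r i 0| + |r i 1|) / α i := fun i => div_nonneg (by positivity) (hα i).le
  refine ⟨∑ i, (|r i 0| + |r i 1|) / α i + 1, |f 0| + |f 1|,
    add_pos_of_nonneg_of_pos (Finset.sum_nonneg fun i _ => hK i) one_pos, by positivity, ?_⟩
  rintro _ _ _ ⟨p, ⟨hp, hp'⟩, rfl, rfl, rfl⟩
  have h1 : ∀ j, |p.1 j| ≤ |f j| + ∑ i, p.2 i * |r i j| := fun j => by
    rw [hp', Pi.add_apply, Finset.sum_apply]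
    refine (abs_add_le _ _).trans ?_
    gcongr
    refine (Finset.abs_sum_le_sum_abs _ _).trans (Finset.sum_le_sum fun i _ => ?_)
    rw [Pi.smul_apply, smul_eq_mul, abs_mul, abs_of_nonneg (hp i)]
  have h2 : ∑ i, p.2 i * |r i 0| + ∑ i, p.2 i * |r i 1| ≤
      (∑ i, (|r i 0| + |r i 1|) / α i + 1) * ∑ i, α i * p.2 i := by
    rw [← Finset.sum_add_distrib, Finset.mul_sum]
    refine Finset.sum_le_sum fun i _ => ?_
    have h3 : (|r i 0| + |r i 1|) / α i ≤ ∑ i, (|r i 0| + |r i 1|) / α i + 1 :=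
      (Finset.single_le_sum (fun i _ => hK i) (Finset.mem_univ i)).trans (by linarith)
    calc _ = (|r i 0| + |r i 1|) / α i * (α i * p.2 i) := by
          have := (hα i).ne'
          field_simp
      _ ≤ _ := mul_le_mul_of_nonneg_right h3 (mul_nonneg (hα i).le (hp i))
  linarith [h1 0, h1 1]

end InducedSet

section Separation

variable {S : Set Pt} {f q : Pt}

theorem dual_apply (l : StrongDual ℝ Pt) (x : Pt) :
    l x = l (Pi.single 0 1) * x 0 + l (Pi.single 1 1) * x 1 := by
  conv_lhs => rw [← Finset.univ_sum_single x]
  rw [map_sum, Fin.sum_univ_two]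
  congr 1
  · rw [show (Pi.single 0 (x 0) : Pt) = x 0 • Pi.single 0 1 by
      rw [← Pi.single_smul, smul_eq_mul, mul_one], map_smul, smul_eq_mul, mul_comm]
  · rw [show (Pi.single 1 (x 1) : Pt) = x 1 • Pi.single 1 1 by
      rw [← Pi.single_smul, smul_eq_mul, mul_one], map_smul, smul_eq_mul, mul_comm]

theorem exists_affine_eq_one (hS : Convex ℝ S) (hf : f ∈ interior S) (hq : q ∉ interior S) :
    ∃ c a b : ℝ, c + a * f 0 + b * f 1 = 0 ∧ c + a * q 0 + b * q 1 = 1 ∧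
      (∀ x ∈ interior S, c + a * x 0 + b * x 1 < 1) ∧ ∀ x ∈ S, c + a * x 0 + b * x 1 ≤ 1 := by
  obtain ⟨l, hl⟩ := geometric_hahn_banach_open_point hS.interior isOpen_interior hq
  have hd : 0 < l q - l f := sub_pos.2 (hl f hf)
  have e : ∀ x : Pt, -(l f / (l q - l f)) + l (Pi.single 0 1) / (l q - l f) * x 0 +
      l (Pi.single 1 1) / (l q - l f) * x 1 = (l x - l f) / (l q - l f) := fun x => by
    rw [dual_apply l x]; ring
  refine ⟨_, _, _, by rw [e, sub_self, zero_div], by rw [e, div_self hd.ne'],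
    fun x hx => ?_, fun x hx => ?_⟩
  · rw [e, div_lt_one hd]
    linarith [hl x hx]
  · rw [e, div_le_one hd, sub_le_sub_iff_right]
    have hx' : x ∈ closure (interior S) := by
      rw [hS.closure_interior_eq_closure_of_nonempty_interior ⟨f, hf⟩]
      exact subset_closure hx
    exact closure_minimal (fun y hy => (hl y hy).le)
      (isClosed_le l.continuous continuous_const) hx'

theorem exists_affine_gt_one (hS : Convex ℝ S) (hcl : IsClosed S) (hf : f ∈ S) (hq : q ∉ S) :
    ∃ c a b : ℝ, c + a * f 0 + b * f 1 = 0 ∧ 1 < c + a * q 0 + b * q 1 ∧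
      ∀ x ∈ S, c + a * x 0 + b * x 1 ≤ 1 := by
  obtain ⟨l, u, hl, hu⟩ := geometric_hahn_banach_closed_point hS hcl hq
  have hd : 0 < u - l f := sub_pos.2 (hl f hf)
  have e : ∀ x : Pt, -(l f / (u - l f)) + l (Pi.single 0 1) / (u - l f) * x 0 +
      l (Pi.single 1 1) / (u - l f) * x 1 = (l x - l f) / (u - l f) := fun x => by
    rw [dual_apply l x]; ring
  refine ⟨_, _, _, by rw [e, sub_self, zero_div], ?_, fun x hx => ?_⟩
  · rw [e, one_lt_div hd]
    linarith
  · rw [e, div_le_one hd]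
    linarith [hl x hx]

theorem Pt.exists_smul_of_ortho {a b : ℝ} {x y : Pt} (hab : ¬ (a = 0 ∧ b = 0)) (hy : y ≠ 0)
    (h1 : a * x 0 + b * x 1 = 0) (h2 : a * y 0 + b * y 1 = 0) : ∃ s : ℝ, x = s • y := by
  have h : x 0 * y 1 = x 1 * y 0 := by
    by_cases ha : a = 0
    · have hb : b ≠ 0 := fun hb => hab ⟨ha, hb⟩
      exact mul_left_cancel₀ hb (by linear_combination y 0 * h1 * (-1) + x 0 * h2)
    · exact mul_left_cancel₀ ha (by linear_combination y 1 * h1 - x 1 * h2)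
  by_cases hy0 : y 0 = 0
  · have hy1 : y 1 ≠ 0 := fun hy1 => hy (by ext i; fin_cases i <;> assumption)
    refine ⟨x 1 / y 1, ?_⟩
    ext i
    fin_cases i
    · simp only [hy0, mul_zero, mul_eq_zero, hy1, or_false] at h
      simp [hy0, h]
    · simp [hy1]
  · refine ⟨x 0 / y 0, ?_⟩
    ext i
    fin_cases i
    · simp [hy0]
    · simp only [Fin.mk_one, Pi.smul_apply, smul_eq_mul]
      field_simp
      linarith

theorem mem_side {a m : Pt} (ha : a ∈ extremePoints ℝ S) (hm : m ∈ extremePoints ℝ S)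
    (ham : a ≠ m) {c α β : ℝ} (hf : c + α * f 0 + β * f 1 = 0)
    (ea : c + α * a 0 + β * a 1 = 1) (em : c + α * m 0 + β * m 1 = 1) (hq : q ∈ S)
    (eq : c + α * q 0 + β * q 1 = 1) : q = a ∨ q = m ∨ q ∈ openSegment ℝ a m := by
  obtain ⟨s, hs⟩ := Pt.exists_smul_of_ortho (a := α) (b := β) (x := q - a) (y := m - a)
    (by rintro ⟨rfl, rfl⟩; linarith) (sub_ne_zero.2 ham.symm)
    (by simp only [Pi.sub_apply]; linarith) (by simp only [Pi.sub_apply]; linarith)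
  obtain rfl : q = a + s • (m - a) := by rw [← hs]; abel
  rcases lt_trichotomy s 0 with h | rfl | h
  · have hd : 0 < 1 - s := by linarith
    have := ha.2 hq hm.1 ⟨1 / (1 - s), -s / (1 - s), by positivity,
      div_pos (by linarith) hd, by field_simp; ring, by
        ext i; simp only [Pi.add_apply, Pi.smul_apply, Pi.sub_apply, smul_eq_mul]
        field_simp; ring⟩
    exact Or.inl this
  · exact Or.inl (by simp)
  rcases lt_trichotomy s 1 with h' | rfl | h'
  · exact Or.inr (Or.inr ⟨1 - s, s, by linarith, h, by ring, by module⟩)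
  · exact Or.inr (Or.inl (by simp))
  · have := hm.2 hq ha.1 ⟨1 / s, (s - 1) / s, by positivity, div_pos (by linarith) h,
      by field_simp; ring, by
        ext i; simp only [Pi.add_apply, Pi.smul_apply, Pi.sub_apply, smul_eq_mul]
        field_simp; ring⟩
    exact Or.inr (Or.inl this)

theorem eq_one_of_mem_openSegment {a m z : Pt} {c α β : ℝ} (hz : z ∈ openSegment ℝ a m)
    (ha : c + α * a 0 + β * a 1 ≤ 1) (hm : c + α * m 0 + β * m 1 ≤ 1)
    (ez : c + α * z 0 + β * z 1 = 1) :
    c + α * a 0 + β * a 1 = 1 ∧ c + α * m 0 + β * m 1 = 1 := by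
  obtain ⟨s, t, hs, ht, hst, rfl⟩ := hz
  simp only [Pi.add_apply, Pi.smul_apply, smul_eq_mul] at ez
  have e : s * (c + α * a 0 + β * a 1) + t * (c + α * m 0 + β * m 1) = 1 := by
    linear_combination ez + c * hst
  have h1 : s * (c + α * a 0 + β * a 1) ≤ s * 1 := by gcongr
  have h2 : t * (c + α * m 0 + β * m 1) ≤ t * 1 := by gcongr
  exact ⟨mul_left_cancel₀ hs.ne' (by linarith), mul_left_cancel₀ ht.ne' (by linarith)⟩

theorem affine_unique {a m : Pt} (ham : a ≠ m) {c α β c' α' β' : ℝ}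
    (hf : c + α * f 0 + β * f 1 = 0) (ha : c + α * a 0 + β * a 1 = 1)
    (hm : c + α * m 0 + β * m 1 = 1) (hf' : c' + α' * f 0 + β' * f 1 = 0)
    (ha' : c' + α' * a 0 + β' * a 1 = 1) (hm' : c' + α' * m 0 + β' * m 1 = 1) :
    c' = c ∧ α' = α ∧ β' = β := by
  have h1 : α * (a 0 - f 0) + β * (a 1 - f 1) = 1 := by linarith
  have h2 : α * (m 0 - f 0) + β * (m 1 - f 1) = 1 := by linarith
  have h1' : α' * (a 0 - f 0) + β' * (a 1 - f 1) = 1 := by linarith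
  have h2' : α' * (m 0 - f 0) + β' * (m 1 - f 1) = 1 := by linarith
  have hdet : (a 0 - f 0) * (m 1 - f 1) - (a 1 - f 1) * (m 0 - f 0) ≠ 0 := by
    intro hd
    refine ham ?_
    ext i
    fin_cases i
    · exact sub_eq_zero.1 (show a 0 - m 0 = 0 by
        linear_combination β * hd - (a 0 - f 0) * h2 + (m 0 - f 0) * h1)
    · exact sub_eq_zero.1 (show a 1 - m 1 = 0 by
        linear_combination -α * hd - (a 1 - f 1) * h2 + (m 1 - f 1) * h1)
  have hα : α' = α := by
    refine sub_eq_zero.1 ((mul_eq_zero.1 (?_ : _ * (α' - α) = 0)).resolve_left hdet)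
    linear_combination (m 1 - f 1) * (h1' - h1) - (a 1 - f 1) * (h2' - h2)
  have hβ : β' = β := by
    refine sub_eq_zero.1 ((mul_eq_zero.1 (?_ : _ * (β' - β) = 0)).resolve_left hdet)
    linear_combination (a 0 - f 0) * (h2' - h2) - (m 0 - f 0) * (h1' - h1)
  subst hα hβ
  exact ⟨by linarith, rfl, rfl⟩

end Separation

section Quadrilateral

variable {S : Set Pt} {f : Pt}

theorem exists_side (hS : Convex ℝ S) (hf : f ∈ interior S) {a m z : Pt}
    (ha : a ∈ extremePoints ℝ S) (hm : m ∈ extremePoints ℝ S) (ham : a ≠ m)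
    (na : ¬ IsIntPt a) (nm : ¬ IsIntPt m) (hz : z ∈ openSegment ℝ a m) (hzS : z ∉ interior S)
    (hu : ∀ y, y ∈ openSegment ℝ a m ∧ IsIntPt y → y = z) :
    ∃ c α β : ℝ, c + α * f 0 + β * f 1 = 0 ∧ (∀ x ∈ interior S, c + α * x 0 + β * x 1 < 1) ∧
      (∀ x ∈ S, c + α * x 0 + β * x 1 ≤ 1) ∧ c + α * z 0 + β * z 1 = 1 ∧
      c + α * m 0 + β * m 1 = 1 ∧
      (∀ q ∈ S, IsIntPt q → c + α * q 0 + β * q 1 = 1 → q = z) ∧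
      (∀ q ∈ extremePoints ℝ S, c + α * q 0 + β * q 1 = 1 → q = a ∨ q = m) ∧
      ∀ c' α' β' : ℝ, c' + α' * f 0 + β' * f 1 = 0 →
        (∀ x ∈ S, c' + α' * x 0 + β' * x 1 ≤ 1) → c' + α' * z 0 + β' * z 1 = 1 →
        c' = c ∧ α' = α ∧ β' = β := by
  obtain ⟨c, α, β, h0, hz1, hU, hS1⟩ := exists_affine_eq_one hS hf hzS
  obtain ⟨ea, em⟩ := eq_one_of_mem_openSegment hz (hS1 _ ha.1) (hS1 _ hm.1) hz1
  refine ⟨c, α, β, h0, hU, hS1, hz1, em, fun q hq hqi e => ?_, fun q hq e => ?_,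
    fun c' α' β' h0' h' hz' => ?_⟩
  · rcases mem_side ha hm ham h0 ea em hq e with rfl | rfl | h
    · exact absurd hqi na
    · exact absurd hqi nm
    · exact hu q ⟨h, hqi⟩
  · rcases mem_side ha hm ham h0 ea em hq.1 e with h | h | h
    · exact Or.inl h
    · exact Or.inr h
    · exact Or.inl (hq.2 ha.1 hm.1 h).symm
  · obtain ⟨ea', em'⟩ := eq_one_of_mem_openSegment hz (h' _ ha.1) (h' _ hm.1) hz'
    exact affine_unique ham h0 ea em h0' ea' em'

theorem Pt.eta (x : Pt) : ![x 0, x 1] = x := by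
  ext i; fin_cases i <;> rfl

theorem Pt.combo (x y x' y' s : ℝ) : (![(1 - s) * x + s * x', (1 - s) * y + s * y'] : Pt) =
    (1 - s) • ![x, y] + s • ![x', y'] := by
  simp

theorem affine_lt_one_of_mem_openSegment {m d z : Pt} {c α β : ℝ} (hz : z ∈ openSegment ℝ m d)
    (hm : c + α * m 0 + β * m 1 ≤ 1) (hd : c + α * d 0 + β * d 1 < 1) :
    c + α * z 0 + β * z 1 < 1 := by
  obtain ⟨s, t, hs, ht, hst, rfl⟩ := hz
  simp only [Pi.add_apply, Pi.smul_apply, smul_eq_mul]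
  have h1 : s * (c + α * m 0 + β * m 1) ≤ s * 1 := by gcongr
  have h2 : t * (c + α * d 0 + β * d 1) < t * 1 := by gcongr
  linear_combination h1 + h2 + (1 - c) * hst

/-- A quadrilateral with nonempty interior has three consecutive distinct vertices. -/
theorem IsQuadWith.exists_ne {v : Fin 4 → Pt} (h : IsQuadWith S v) (hf : f ∈ interior S) :
    ∃ i, v i ≠ v (i + 1 + 1) := by
  by_contra! hv
  have h2 : v 2 = v 0 := (hv 0).symm
  have h3 : v 3 = v 1 := (hv 1).symm
  have hr : range v = {v 0, v 1} := by
    ext x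
    simp only [mem_range, Fin.exists_fin_succ, mem_insert_iff, mem_singleton_iff]
    simp [h2, h3, eq_comm]
    tauto
  have hS := h.1
  rw [hr, convexHull_pair] at hS
  have := h.2.2 0 (hS ▸ interior_subset hf)
  exact this.2 hf

theorem eventually_one_le_of_isQ2 (hQ : IsQ2 S) (hf : f ∈ interior S) (hfree : LatticeFree S)
    {E : ℕ → ℝ → ℝ → ℝ → Prop} (hE : SplitSeq E) (hco : Coercive E)
    (hpos : ∀ x y t, E 0 x y t → 0 ≤ t)
    (hlow : ∀ c α β : ℝ, (∀ x ∈ S, c + α * x 0 + β * x 1 ≤ 1) → c + α * f 0 + β * f 1 = 0 →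
      LowerBound E c α β) : ∃ j, ∀ x y t, E j x y t → 1 ≤ t := by
  obtain ⟨v, hv, hint, huniq⟩ := hQ
  have hS : Convex ℝ S := hv.1 ▸ convex_convexHull ℝ _
  have hcl : IsClosed S := hv.1 ▸ (finite_range v).isClosed_convexHull ℝ
  obtain ⟨i, hi⟩ := hv.exists_ne hf
  obtain ⟨z₀, ⟨hz₀, iz₀⟩, u₀⟩ := huniq i
  obtain ⟨z₁, ⟨hz₁, iz₁⟩, u₁⟩ := huniq (i + 1)
  have hne : ∀ i z, z ∈ openSegment ℝ (v i) (v (i + 1)) → IsIntPt z → v i ≠ v (i + 1) := by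
    intro i z hz iz h
    rw [h, openSegment_same, mem_singleton_iff] at hz
    exact hint _ (hz ▸ iz)
  have hfr : ∀ i z, z ∈ openSegment ℝ (v i) (v (i + 1)) → z ∉ interior S := fun i z hz =>
    (hv.2.2 i (openSegment_subset_segment ℝ _ _ hz)).2
  have n01 := hne _ _ hz₀ iz₀
  have n12 := hne _ _ hz₁ iz₁
  have f₀ := hfr _ _ hz₀
  have f₁ := hfr _ _ hz₁
  have S₀ : z₀ ∈ S := hS.openSegment_subset (hv.2.1 _).1 (hv.2.1 _).1 hz₀
  have S₁ : z₁ ∈ S := hS.openSegment_subset (hv.2.1 _).1 (hv.2.1 _).1 hz₁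
  have xa := hv.2.1 i
  have xm := hv.2.1 (i + 1)
  have xd := hv.2.1 (i + 1 + 1)
  have ia := hint i
  have im := hint (i + 1)
  have id := hint (i + 1 + 1)
  generalize v i = a at *
  generalize v (i + 1) = m at *
  generalize v (i + 1 + 1) = d at *
  clear hne hfr huniq hint hv
  rw [openSegment_symm] at hz₁ u₁
  obtain ⟨c₀, α₀, β₀, af, aU, aS, az, am, as, ax, au⟩ :=
    exists_side hS hf xa xm n01 ia im hz₀ f₀ u₀
  obtain ⟨c₁, α₁, β₁, bf, bU, bS, bz, bm, bs, bx, bu⟩ :=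
    exists_side hS hf xd xm n12.symm id im hz₁ f₁ u₁
  have lt₀ : c₀ + α₀ * z₁ 0 + β₀ * z₁ 1 < 1 := by
    rw [openSegment_symm] at hz₁
    refine affine_lt_one_of_mem_openSegment hz₁ am.le ((aS d xd.1).lt_of_ne fun h => ?_)
    exact (ax d xd h).elim hi.symm n12.symm
  have lt₁ : c₁ + α₁ * z₀ 0 + β₁ * z₀ 1 < 1 := by
    rw [openSegment_symm] at hz₀
    refine affine_lt_one_of_mem_openSegment hz₀ bm.le ((bS a xa.1).lt_of_ne fun h => ?_)
    exact (bx a xa h).elim hi n01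
  obtain ⟨⟨x₀, hx₀⟩, y₀, hy₀⟩ := And.intro (iz₀ 0) (iz₀ 1)
  obtain ⟨⟨x₁, hx₁⟩, y₁, hy₁⟩ := And.intro (iz₁ 0) (iz₁ 1)
  have int : ∀ p q : ℤ, IsIntPt ![(p : ℝ), q] := fun p q j => by
    fin_cases j
    exacts [⟨p, rfl⟩, ⟨q, rfl⟩]
  have eq_of : ∀ {p q x y : ℤ} {z : Pt}, z 0 = x → z 1 = y → ![(p : ℝ), q] = z →
      p = x ∧ q = y := by
    rintro p q x y _ h1 h2 rfl
    exact ⟨Int.cast_injective h1, Int.cast_injective h2⟩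
  have hc : Corner E (fun x y => ![x, y] ∈ interior S) (fun x y => ![x, y] ∈ S) x₀ y₀ x₁ y₁
      (m 0) (m 1) c₀ α₀ β₀ c₁ α₁ β₁ := by
    refine ⟨hE, hco, hpos, fun x y t ht hU => ?_, fun p q h => hfree _ h (int p q),
      fun x y x' y' s h h' hs hs' => ?_, fun x y x' y' s h h' hs hs' => ?_,
      fun x y h => interior_subset h, by rw [Pt.eta]; exact xm.1, ?_,
      ⟨hlow _ _ _ aS af, fun x y h => aU _ h, by rw [← hx₀, ← hy₀, Pt.eta]; exact S₀,
        by rw [← hx₀, ← hy₀]; exact az, am, fun p q h e => eq_of hx₀ hy₀ (as _ h (int p q) e)⟩,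
      ⟨hlow _ _ _ bS bf, fun x y h => bU _ h, by rw [← hx₁, ← hy₁, Pt.eta]; exact S₁,
        by rw [← hx₁, ← hy₁]; exact bz, bm, fun p q h e => eq_of hx₁ hy₁ (bs _ h (int p q) e)⟩,
      by rw [← hx₁, ← hy₁]; exact lt₀, by rw [← hx₀, ← hy₀]; exact lt₁, fun x y h => ?_,
      fun x y h => ?_⟩
    · obtain ⟨c, α, β, h0, h1, -, h3⟩ := exists_affine_eq_one hS hf hU
      have := hlow c α β h3 h0 x y t ht
      exact h1.symm.le.trans this
    · rw [Pt.combo]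
      exact hS.interior h h' (by linarith) hs (by ring)
    · rw [Pt.combo]
      exact hS h h' (by linarith) hs (by ring)
    · rintro ⟨h, h'⟩
      refine im fun j => ?_
      fin_cases j
      exacts [⟨_, h⟩, ⟨_, h'⟩]
    · obtain ⟨c, α, β, h0, h1, h2, h3⟩ := exists_affine_eq_one hS hf h
      refine ⟨c, α, β, hlow _ _ _ h3 h0, h1, fun _ _ h => h2 _ h, fun _ _ h => h3 _ h, ?_, ?_⟩
      · rw [← hx₀, ← hy₀]
        exact au c α β h0 h3
      · rw [← hx₁, ← hy₁]
        exact bu c α β h0 h3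
    · obtain ⟨c, α, β, h0, h1, h3⟩ := exists_affine_gt_one hS hcl (interior_subset hf) h
      exact ⟨c, α, β, hlow _ _ _ h3 h0, h1, fun _ _ h => h3 _ h⟩
  exact hc.eventually_one_le

end Quadrilateral

theorem q2_finite_split_rank (k : ℕ)
    (hk : 1 ≤ k)
    (r : Fin k → Pt) (f : Pt)
    (hr_rat : ∀ i, IsRatPt (r i)) (hr_ne : ∀ i, r i ≠ 0)
    (hf_rat : IsRatPt f) (hf_int : ¬ IsIntPt f)
    (hne : (mixedP k r f).Nonempty)
    (α : Fin k → ℝ) (hα : ∀ i, 0 ≤ α i)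
    (hvalid : ValidIneq k r f α 1)
    (hshape : IsQ2 (inducedSet k r f α))
    (hfint : f ∈ interior (inducedSet k r f α)) :
    splitRank k r f α 1 ≠ ⊤ := by
  have hb : Bornology.IsBounded (inducedSet k r f α) := by
    obtain ⟨v, hv, -⟩ := hshape
    rw [hv.1, isBounded_convexHull]
    exact (finite_range v).isBounded
  have hα' := pos_of_isBounded_inducedSet hb hr_ne hα
  obtain ⟨j, hj⟩ := eventually_one_le_of_isQ2 hshape hfint (latticeFree_inducedSet hα' hvalid)
    (splitSeq_closures α) (coercive_closures hα')
    (by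
      rintro _ _ _ ⟨p, hp, rfl, rfl, rfl⟩
      exact Finset.sum_nonneg fun i _ => mul_nonneg (hα i) (hp.1 i))
    (fun _ _ _ h h0 => lowerBound_of_le_one hα' h h0)
  have : splitRank k r f α 1 ≤ j :=
    sInf_le ⟨j, rfl, fun p hp => hj _ _ _ ⟨p, hp, rfl, rfl, rfl⟩⟩
  exact ne_top_of_le_ne_top (ENat.natCast_ne_top j) this
end
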